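/- Let Ω ⊂ ℝⁿ be a bounded C^{1,1} domain, x₀ ∈ ∂Ω, and ∂Ω ∩ B(x₀,10) ∈ Lip(τ) with τ < 1/100. Let h ∈ C(Ω̄) be harmonic in Ω with ∂h/∂ν = 0 on ∂Ω ∩ B(x₀,10), normalized so that sup_{Ω∩B(x₀,3)} |h| = 1. Let (x₁, S, Ω∩S) be the standard approximation near x₀ and Γ₋ = {(x',x'') ∈ S̄ : x'' = x₁''} the lower face of the cylinder S. Then there exists g ∈ C(S̄) with Δg = 0 in S and ∂g/∂e_n = 0 on Γ₋ such that sup_{Ω∩S} |g − h| < Cτ and sup_S |g| = sup_{Ω∩S} |h|, where C depends only on n and the C^{1,1} character of Ω. -/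

import Mathlib

noncomputable section

open MeasureTheory Metric Set Filter Asymptotics
open scoped Topology NNReal ENNReal RealInnerProductSpace

namespace NodalNeumann

/-- Euclidean space `ℝⁿ`. -/
abbrev Euc (n : ℕ) : Type := EuclideanSpace ℝ (Fin n)

/-- The first `n` coordinates `y'` of a point `y = (y', y'') ∈ ℝ^{n+1}`. -/
def front {n : ℕ} (y : Euc (n + 1)) : Euc n :=
  (EuclideanSpace.equiv (Fin n) ℝ).symm fun i => y i.castSucc

/-- The last coordinate `y''` of a point `y = (y', y'') ∈ ℝ^{n+1}`. -/
def lastc {n : ℕ} (y : Euc (n + 1)) : ℝ := y (Fin.last n)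

/-- `(v, a) ∈ ℝ^{n+1}` built from `v ∈ ℝⁿ` and `a ∈ ℝ`. -/
def snocVec {n : ℕ} (v : Euc n) (a : ℝ) : Euc (n + 1) :=
  (EuclideanSpace.equiv (Fin (n + 1)) ℝ).symm
    fun i => if h : i = Fin.last n then a else v (i.castPred h)

/-- The Laplacian of `u : ℝⁿ → ℝ`. -/
def laplacian {n : ℕ} (u : Euc n → ℝ) (x : Euc n) : ℝ :=
  ∑ i : Fin n, fderiv ℝ (fun y => fderiv ℝ u y (EuclideanSpace.single i 1)) x
    (EuclideanSpace.single i 1)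

/-- `u` is harmonic on `s`. -/
def HarmonicOn {n : ℕ} (u : Euc n → ℝ) (s : Set (Euc n)) : Prop :=
  ContDiffOn ℝ 2 u s ∧ ∀ x ∈ s, laplacian u x = 0

/-- `ν` is the outward unit normal vector of `Ω` at the boundary point `x`:
it is a unit vector, points out of `Ω`, `-ν` points into `Ω`, and it is
orthogonal to the boundary at `x` (in the little-o sense). -/
def OutwardNormalAt {n : ℕ} (Ω : Set (Euc n)) (x ν : Euc n) : Prop :=
  ‖ν‖ = 1 ∧
  (∀ᶠ t : ℝ in 𝓝[>] (0 : ℝ), x + t • ν ∉ closure Ω) ∧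
  (∀ᶠ t : ℝ in 𝓝[>] (0 : ℝ), x - t • ν ∈ Ω) ∧
  (fun y : Euc n => (⟪ν, y - x⟫)) =o[𝓝[frontier Ω] x] fun y => ‖y - x‖

/-- `ν` is an outward unit normal field of `Ω` along `∂Ω ∩ s`. -/
def OutwardNormalFieldOn {n : ℕ} (Ω : Set (Euc n)) (ν : Euc n → Euc n)
    (s : Set (Euc n)) : Prop :=
  ∀ x ∈ frontier Ω ∩ s, OutwardNormalAt Ω x (ν x)

/-- The homogeneous Neumann boundary condition `∂h/∂ν = 0` on `∂Ω ∩ s`. -/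
def NeumannBC {n : ℕ} (Ω : Set (Euc n)) (ν : Euc n → Euc n) (h : Euc n → ℝ)
    (s : Set (Euc n)) : Prop :=
  ∀ x ∈ frontier Ω ∩ s, DifferentiableWithinAt ℝ h (closure Ω) x ∧
    fderivWithin ℝ h (closure Ω) x (ν x) = 0

/-- `f : ℝⁿ → ℝ` is `C^{1,1}` with character `M`: differentiable with `M`-Lipschitz
derivative (and itself `M`-Lipschitz). -/
def IsC11FunWith {n : ℕ} (M : ℝ≥0) (f : Euc n → ℝ) : Prop :=
  Differentiable ℝ f ∧ LipschitzWith M f ∧ LipschitzWith M fun x => fderiv ℝ f x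

/-- `Ω ∩ B(x,r)` is, after an isometry `T` of `ℝ^{n+1}` with `T 0 = x`, the region
in the ball above the graph of a function `f` with `f 0 = 0` satisfying `P`. -/
def IsGraphBall {n : ℕ} (Ω : Set (Euc (n + 1))) (x : Euc (n + 1)) (r : ℝ)
    (P : (Euc n → ℝ) → Prop) : Prop :=
  ∃ (T : Euc (n + 1) ≃ᵃⁱ[ℝ] Euc (n + 1)) (f : Euc n → ℝ), P f ∧ T 0 = x ∧ f 0 = 0 ∧
    Ω ∩ ball x r =
      ⇑T '' {y : Euc (n + 1) | y ∈ ball (0 : Euc (n + 1)) r ∧ f (front y) < lastc y}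

/-- `∂Ω ∩ B(x,r) ∈ Lip(τ)`. -/
def LipGraphBall {n : ℕ} (Ω : Set (Euc (n + 1))) (x : Euc (n + 1)) (r τ : ℝ) : Prop :=
  IsGraphBall Ω x r fun f => LipschitzWith (Real.toNNReal τ) f

/-- `Ω` is a `C^{1,1}` domain with character `(ρ, M)`. -/
def IsC11DomainWith {n : ℕ} (Ω : Set (Euc (n + 1))) (ρ : ℝ) (M : ℝ≥0) : Prop :=
  IsOpen Ω ∧ IsConnected Ω ∧ 0 < ρ ∧
    ∀ x ∈ frontier Ω, IsGraphBall Ω x ρ (IsC11FunWith M)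

/-- `Ω` is a `C^{1,1}` domain. -/
def IsC11Domain {n : ℕ} (Ω : Set (Euc (n + 1))) : Prop :=
  ∃ (ρ : ℝ) (M : ℝ≥0), IsC11DomainWith Ω ρ M

/-- `Ω` is a Lipschitz domain with character `(ρ, M)`. -/
def IsLipDomainWith {n : ℕ} (Ω : Set (Euc (n + 1))) (ρ : ℝ) (M : ℝ≥0) : Prop :=
  IsOpen Ω ∧ IsConnected Ω ∧ 0 < ρ ∧
    ∀ x ∈ frontier Ω, IsGraphBall Ω x ρ fun f => LipschitzWith M f

/-- The portion `∂Ω ∩ s` of the boundary has `C^{1,1}` character `(ρ, M)`. -/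
def HasC11CharacterOn {n : ℕ} (Ω : Set (Euc (n + 1))) (s : Set (Euc (n + 1)))
    (ρ : ℝ) (M : ℝ≥0) : Prop :=
  0 < ρ ∧ ∀ x ∈ frontier Ω ∩ s, IsGraphBall Ω x ρ (IsC11FunWith M)

/-- `H_h(x,r) = ∫_{B(x,r) ∩ Ω} h²`. -/
def Hfun {n : ℕ} (Ω : Set (Euc n)) (h : Euc n → ℝ) (x : Euc n) (r : ℝ) : ℝ :=
  ∫ y in ball x r ∩ Ω, h y ^ 2

/-- The doubling index `N_h(x,r) = log (H_h(x,2r) / H_h(x,r))`. -/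
def Nfun {n : ℕ} (Ω : Set (Euc n)) (h : Euc n → ℝ) (x : Euc n) (r : ℝ) : ℝ :=
  Real.log (Hfun Ω h x (2 * r) / Hfun Ω h x r)

/-- Closed axis-parallel cube with centre `c` and side length `s`. -/
def cube {n : ℕ} (c : Euc n) (s : ℝ) : Set (Euc n) :=
  {y : Euc n | ∀ i, |y i - c i| ≤ s / 2}

/-- Maximal doubling index `N*_h(Q)` over the cube of centre `c` and side `s`
(whose diameter is `√n · s`). -/
def Nstar {n : ℕ} (Ω : Set (Euc n)) (h : Euc n → ℝ) (c : Euc n) (s : ℝ) : ℝ :=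
  sSup {N : ℝ | ∃ x ∈ cube c s ∩ closure Ω, ∃ r : ℝ,
    0 < r ∧ r ≤ Real.sqrt n * s ∧ N = Nfun Ω h x r}

/-- The nodal set `Z(h) = {x ∈ Ω : h x = 0}`. -/
def zeroSet {n : ℕ} (Ω : Set (Euc n)) (h : Euc n → ℝ) : Set (Euc n) :=
  {x ∈ Ω | h x = 0}

/-- `sup_s g`. -/
def supOn {α : Type*} (g : α → ℝ) (s : Set α) : ℝ := sSup (g '' s)

/-- The open cylinder `S(x,r,t)` of radius `r` and height `t` whose lower face is
centred at `x`. -/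
def cyl {n : ℕ} (x : Euc (n + 1)) (r t : ℝ) : Set (Euc (n + 1)) :=
  {y : Euc (n + 1) | ‖front y - front x‖ < r ∧ 0 < lastc y - lastc x ∧
    lastc y - lastc x < t}

/-- In the chosen coordinates (centred at `x`, with `e_n = -ν(x)`), `Ω ∩ B(x,R)`
is the region above the graph of the `τ`-Lipschitz function `f` with `f 0 = 0`. -/
def AlignedLipGraphOn {n : ℕ} (Ω : Set (Euc (n + 1))) (x : Euc (n + 1)) (R τ : ℝ)
    (f : Euc n → ℝ) : Prop :=
  LipschitzWith (Real.toNNReal τ) f ∧ f 0 = 0 ∧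
    Ω ∩ ball x R = {y ∈ ball x R | f (front (y - x)) < lastc (y - x)}

/-- `z` is the centre of one of the boundary cubes `q ∈ 𝓑_k(Q)` of the standard
construction for the cube `Q` of centre `xQ` and side `s`: the projection of `z` is
the centre of one of the `2^{k·n}` subcubes of side `s/2^k` of the projection of
`Q`, and `z` lies on `∂Ω`. The cube `q` itself is `cube z (s/2^k)`. -/
def IsBdryCubeCenter {n : ℕ} (Ω : Set (Euc (n + 1))) (xQ : Euc (n + 1)) (s : ℝ)
    (k : ℕ) (z : Euc (n + 1)) : Prop :=
  z ∈ frontier Ω ∧ ∃ a : Fin n → ℕ, (∀ i, a i < 2 ^ k) ∧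
    ∀ i : Fin n, z i.castSucc = xQ i.castSucc - s / 2 + ((a i : ℝ) + 1 / 2) * (s / 2 ^ k)

/-- The infinite cylinder `Ω₀ × ℝ ⊂ ℝ^{n+1}` over `Ω₀ ⊂ ℝⁿ`. -/
def prodDomain {n : ℕ} (Ω₀ : Set (Euc n)) : Set (Euc (n + 1)) :=
  {y : Euc (n + 1) | front y ∈ Ω₀}

/-- The harmonic extension `h(x,t) = e^{√λ t} u(x)` of `u` to `Ω₀ × ℝ`. -/
def hExt {n : ℕ} (lam : ℝ) (u : Euc n → ℝ) : Euc (n + 1) → ℝ :=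
  fun y => Real.exp (Real.sqrt lam * lastc y) * u (front y)


/-- The point `x₁ = x₀ - 3τ e_n` of the standard approximation (in coordinates
where `x₀ = 0` and `e_n = -ν(x₀)`). -/
def xOne (n : ℕ) (τ : ℝ) : Euc (n + 1) :=
  (-(3 * τ)) • EuclideanSpace.single (Fin.last n) (1 : ℝ)

/-- The lower face `Γ₋ = {(y',y'') ∈ S̄(x,r,·) : y'' = x''}` of a cylinder. -/
def lowerFace {n : ℕ} (x : Euc (n + 1)) (r : ℝ) : Set (Euc (n + 1)) :=
  {y : Euc (n + 1) | ‖front y - front x‖ ≤ r ∧ lastc y = lastc x}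

/-!
Doubling the variables, that is, comparing `h x - h y` with a barrier in the pair `(x, y)` which
decreases along the inner normals, gives a Lipschitz bound for `h` up to the boundary. The same
comparison bounds `∂h/∂e_n` by `C τ` at heights comparable to `τ`, because `-e_n` is within `O(τ)`
of the outward normals. Shifting `h` upwards by a multiple of `τ` and mollifying at scale `τ`
therefore gives a function, harmonic near the closed cylinder, which is `O(τ)`-close to `h` and has
Neumann datum `O(τ)` on `Γ₋`. Subtracting a harmonic function on a slab with this Neumann datum,
constructed by the Fourier transform and bounded by `O(τ)` by the maximum principle, makes the datum
vanish. The result is within `O(τ)` of `h`, and an affine change of its values by `O(τ)` matches the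
suprema.
-/

/-! ### Coordinates -/

section Coordinates

variable {n : ℕ}

@[simp] lemma front_apply (y : Euc (n + 1)) (j : Fin n) : front y j = y j.castSucc := rfl

@[simp] lemma front_add (x y : Euc (n + 1)) : front (x + y) = front x + front y := by
  ext; simp

@[simp] lemma front_sub (x y : Euc (n + 1)) : front (x - y) = front x - front y := by
  ext; simp

@[simp] lemma front_smul (c : ℝ) (y : Euc (n + 1)) : front (c • y) = c • front y := by
  ext; simp

@[simp] lemma front_neg (y : Euc (n + 1)) : front (-y) = -front y := by
  ext; simp

@[simp] lemma lastc_add (x y : Euc (n + 1)) : lastc (x + y) = lastc x + lastc y := by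
  simp [lastc]

@[simp] lemma lastc_sub (x y : Euc (n + 1)) : lastc (x - y) = lastc x - lastc y := by
  simp [lastc]

@[simp] lemma lastc_smul (c : ℝ) (y : Euc (n + 1)) : lastc (c • y) = c * lastc y := by
  simp [lastc]

@[simp] lemma lastc_neg (y : Euc (n + 1)) : lastc (-y) = -lastc y := by
  simp [lastc]

@[simp] lemma lastc_zero : lastc (0 : Euc (n + 1)) = 0 := by
  simp [lastc]

@[simp] lemma front_snocVec (v : Euc n) (a : ℝ) : front (snocVec v a) = v := by
  ext i
  simp [snocVec, EuclideanSpace.equiv, Fin.castSucc_ne_last]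

@[simp] lemma lastc_snocVec (v : Euc n) (a : ℝ) : lastc (snocVec v a) = a := by
  simp [snocVec, EuclideanSpace.equiv, lastc]

lemma ext_front_lastc {x y : Euc (n + 1)} (h₁ : front x = front y) (h₂ : lastc x = lastc y) :
    x = y := by
  ext i
  refine Fin.lastCases h₂ (fun j => ?_) i
  simpa using congrArg (fun v : Euc n => v j) h₁

@[simp] lemma snocVec_front_lastc (x : Euc (n + 1)) : snocVec (front x) (lastc x) = x :=
  ext_front_lastc (by simp) (by simp)

lemma inner_eq_front_add_lastc (x y : Euc (n + 1)) :
    ⟪x, y⟫ = ⟪front x, front y⟫ + lastc x * lastc y := by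
  simp [PiLp.inner_apply, Fin.sum_univ_castSucc, lastc, mul_comm]

lemma norm_sq_eq_front_add_lastc (x : Euc (n + 1)) : ‖x‖ ^ 2 = ‖front x‖ ^ 2 + lastc x ^ 2 := by
  rw [← real_inner_self_eq_norm_sq, ← real_inner_self_eq_norm_sq, inner_eq_front_add_lastc, sq]

lemma norm_front_le (x : Euc (n + 1)) : ‖front x‖ ≤ ‖x‖ := by
  have := norm_sq_eq_front_add_lastc x
  exact abs_le_of_sq_le_sq' (by nlinarith [sq_nonneg (lastc x)]) (norm_nonneg _) |>.2

lemma abs_lastc_le (x : Euc (n + 1)) : |lastc x| ≤ ‖x‖ := by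
  have := norm_sq_eq_front_add_lastc x
  exact abs_le_of_sq_le_sq (by nlinarith [sq_nonneg ‖front x‖]) (norm_nonneg _)

lemma norm_le_front_add_lastc (x : Euc (n + 1)) : ‖x‖ ≤ ‖front x‖ + |lastc x| := by
  have := norm_sq_eq_front_add_lastc x
  refine abs_le_of_sq_le_sq' ?_ (by positivity) |>.2
  nlinarith [sq_abs (lastc x), norm_nonneg (front x), abs_nonneg (lastc x)]

/-- The projection `(y', y'') ↦ y'` as a continuous linear map. -/
def frontCLM (n : ℕ) : Euc (n + 1) →L[ℝ] Euc n :=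
  LinearMap.mkContinuous { toFun := front, map_add' := front_add, map_smul' := front_smul } 1
    fun x => by simpa using norm_front_le x

/-- The projection `(y', y'') ↦ y''` as a continuous linear map. -/
def lastCLM (n : ℕ) : Euc (n + 1) →L[ℝ] ℝ :=
  LinearMap.mkContinuous { toFun := lastc, map_add' := lastc_add, map_smul' := lastc_smul } 1
    fun x => by simpa using abs_lastc_le x

@[simp] lemma frontCLM_apply (x : Euc (n + 1)) : frontCLM n x = front x := rfl

@[simp] lemma lastCLM_apply (x : Euc (n + 1)) : lastCLM n x = lastc x := rfl

@[fun_prop] lemma continuous_front : Continuous (front : Euc (n + 1) → Euc n) :=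
  (frontCLM n).continuous

@[fun_prop] lemma continuous_lastc : Continuous (lastc : Euc (n + 1) → ℝ) :=
  (lastCLM n).continuous

open scoped ContDiff in
lemma contDiff_snocVec (a : ℝ) : ContDiff ℝ ∞ fun v : Euc n => snocVec v a := by
  rw [contDiff_euclidean]
  intro i
  by_cases hi : i = Fin.last n
  · have : (fun v : Euc n => snocVec v a i) = fun _ => a := by
      funext v
      simp [snocVec, EuclideanSpace.equiv, hi]
    rw [this]
    exact contDiff_const
  · have : (fun v : Euc n => snocVec v a i) = fun v => v (i.castPred hi) := by
      funext v
      simp [snocVec, EuclideanSpace.equiv, hi]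
    rw [this]
    fun_prop

/-- The last standard basis vector `e_n`. -/
def eLast (n : ℕ) : Euc (n + 1) := EuclideanSpace.single (Fin.last n) 1

@[simp] lemma front_eLast : front (eLast n) = 0 := by
  ext i
  simp [eLast, Fin.castSucc_ne_last]

@[simp] lemma lastc_eLast : lastc (eLast n) = 1 := by
  simp [eLast, lastc]

@[simp] lemma norm_eLast : ‖eLast n‖ = 1 := by
  simp [eLast]

@[simp] lemma inner_eLast (x : Euc (n + 1)) : ⟪eLast n, x⟫ = lastc x := by
  simp [inner_eq_front_add_lastc]

lemma sum_sq_lastc_orthonormalBasis {ι : Type*} [Fintype ι]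
    (b : OrthonormalBasis ι ℝ (Euc (n + 1))) : ∑ i, lastc (b i) ^ 2 = 1 := by
  simpa using b.sum_sq_inner_left (eLast n)

lemma sum_sq_norm_front_orthonormalBasis {ι : Type*} [Fintype ι]
    (b : OrthonormalBasis ι ℝ (Euc (n + 1))) : ∑ i, ‖front (b i)‖ ^ 2 = n := by
  have hcard : (Fintype.card ι : ℝ) = n + 1 := by
    rw [← Module.finrank_eq_card_basis b.toBasis, finrank_euclideanSpace_fin]
    push_cast
    ring
  have h (i : ι) : ‖front (b i)‖ ^ 2 = 1 - lastc (b i) ^ 2 := by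
    have h := norm_sq_eq_front_add_lastc (b i)
    rw [b.orthonormal.1, one_pow] at h
    linarith
  simp only [h, Finset.sum_sub_distrib, sum_sq_lastc_orthonormalBasis, Finset.sum_const,
    Finset.card_univ, nsmul_eq_mul, mul_one, hcard, add_sub_cancel_right]

end Coordinates

/-! ### The Laplacian and second differences -/

section Laplacian

open InnerProductSpace (HarmonicOnNhd)

variable {n : ℕ} {u v : Euc n → ℝ} {x : Euc n} {s : Set (Euc n)}

open InnerProductSpace in
lemma laplacian_eq_innerProductSpace_laplacian (hu : ContDiffAt ℝ 2 u x) :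
    laplacian u x = Laplacian.laplacian u x := by
  have hd : DifferentiableAt ℝ (fderiv ℝ u) x :=
    (hu.fderiv_right (m := 1) (by norm_num)).differentiableAt (by norm_num)
  rw [laplacian_eq_iteratedFDeriv_orthonormalBasis u (EuclideanSpace.basisFun (Fin n) ℝ)]
  refine Finset.sum_congr rfl fun i _ => ?_
  rw [(hd.hasFDerivAt.clm_apply (hasFDerivAt_const (EuclideanSpace.single i 1) x)).fderiv]
  simp [iteratedFDeriv_two_apply]

lemma laplacian_eq_sum_orthonormalBasis {ι : Type*} [Fintype ι] (hu : ContDiffAt ℝ 2 u x)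
    (b : OrthonormalBasis ι ℝ (Euc n)) :
    laplacian u x = ∑ i, fderiv ℝ (fderiv ℝ u) x (b i) (b i) := by
  rw [laplacian_eq_innerProductSpace_laplacian hu,
    InnerProductSpace.laplacian_eq_iteratedFDeriv_orthonormalBasis u b]
  simp [iteratedFDeriv_two_apply]

lemma harmonicOn_iff_harmonicOnNhd (hs : IsOpen s) : HarmonicOn u s ↔ HarmonicOnNhd u s := by
  refine ⟨fun hu x hx => ?_, fun hu => ⟨hu.contDiffOn, fun x hx => ?_⟩⟩
  · have hcd : ∀ y ∈ s, ContDiffAt ℝ 2 u y := fun y hy => (hu.1 y hy).contDiffAt (hs.mem_nhds hy)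
    refine ⟨hcd x hx, ?_⟩
    filter_upwards [hs.mem_nhds hx] with y hy
    rw [← laplacian_eq_innerProductSpace_laplacian (hcd y hy), hu.2 y hy, Pi.zero_apply]
  · rw [laplacian_eq_innerProductSpace_laplacian (hu x hx).1, (hu x hx).2.self_of_nhds,
      Pi.zero_apply]

lemma HarmonicOn.contDiffAt (hu : HarmonicOn u s) (hs : IsOpen s) (hx : x ∈ s) :
    ContDiffAt ℝ 2 u x :=
  (hu.1 x hx).contDiffAt (hs.mem_nhds hx)

lemma HarmonicOn.neg (hu : HarmonicOn u s) (hs : IsOpen s) : HarmonicOn (-u) s := by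
  rw [harmonicOn_iff_harmonicOnNhd hs] at hu ⊢
  exact hu.neg

lemma HarmonicOn.add (hu : HarmonicOn u s) (hv : HarmonicOn v s) (hs : IsOpen s) :
    HarmonicOn (u + v) s := by
  rw [harmonicOn_iff_harmonicOnNhd hs] at hu hv ⊢
  exact hu.add hv

lemma HarmonicOn.sub (hu : HarmonicOn u s) (hv : HarmonicOn v s) (hs : IsOpen s) :
    HarmonicOn (u - v) s := by
  rw [harmonicOn_iff_harmonicOnNhd hs] at hu hv ⊢
  exact hu.sub hv

lemma HarmonicOn.const_smul (hu : HarmonicOn u s) (hs : IsOpen s) (c : ℝ) :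
    HarmonicOn (c • u) s := by
  rw [harmonicOn_iff_harmonicOnNhd hs] at hu ⊢
  exact hu.const_smul

lemma harmonicOn_const (c : ℝ) (s : Set (Euc n)) : HarmonicOn (fun _ => c) s :=
  ⟨contDiffOn_const, fun x _ => by simp [laplacian]⟩

lemma laplacian_comp_add_right (u : Euc n → ℝ) (a x : Euc n) :
    laplacian (fun y => u (y + a)) x = laplacian u (x + a) := by
  refine Finset.sum_congr rfl fun i _ => ?_
  simp only [fderiv_comp_add_right]
  rw [fderiv_comp_add_right (f := fun y => fderiv ℝ u y (EuclideanSpace.single i 1)) a]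

lemma HarmonicOn.comp_add_right {t : Set (Euc n)} (hu : HarmonicOn u s) {a : Euc n}
    (h : MapsTo (· + a) t s) : HarmonicOn (fun y => u (y + a)) t :=
  ⟨hu.1.comp (contDiff_id.add contDiff_const).contDiffOn h, fun x hx => by
    rw [laplacian_comp_add_right, hu.2 _ (h hx)]⟩

end Laplacian

section SecondDifference

variable {E : Type*} [NormedAddCommGroup E] [NormedSpace ℝ E]

/-- The centred second difference of `u` at `x` along `v` with step `s`. -/
def secondDiff (u : E → ℝ) (x v : E) (s : ℝ) : ℝ := u (x + s • v) + u (x - s • v) - 2 * u x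

lemma secondDiff_neg_direction (u : E → ℝ) (x v : E) (s : ℝ) :
    secondDiff u x (-v) s = secondDiff u x v s := by
  simp only [secondDiff, smul_neg, sub_neg_eq_add, ← sub_eq_add_neg]
  ring

lemma hasDerivAt_add_smul (x w : E) (s : ℝ) : HasDerivAt (fun s : ℝ => x + s • w) w s := by
  simpa using ((hasDerivAt_id s).smul_const w).const_add x

lemma isLittleO_fderiv_add_smul_sub {u : E → ℝ} {x : E} (hu : ContDiffAt ℝ 2 u x) (w : E) :
    (fun s : ℝ => fderiv ℝ u (x + s • w) w - fderiv ℝ u x w - s * fderiv ℝ (fderiv ℝ u) x w w)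
      =o[𝓝 0] fun s : ℝ => s := by
  have hd : HasFDerivAt (fderiv ℝ u) (fderiv ℝ (fderiv ℝ u) x) (x + (0 : ℝ) • w) := by
    simpa using ((hu.fderiv_right (m := 1) (by norm_num)).differentiableAt
      (by norm_num)).hasFDerivAt
  have hcomp := hd.comp_hasDerivAt (0 : ℝ) (hasDerivAt_add_smul x w 0)
  have happly : HasDerivAt (fun s : ℝ => fderiv ℝ u (x + s • w) w)
      (fderiv ℝ (fderiv ℝ u) x w w) 0 := by
    simpa using hcomp.clm_apply (hasDerivAt_const (0 : ℝ) w)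
  simpa using hasDerivAt_iff_isLittleO.1 happly

lemma isLittleO_secondDiff_sub {u : E → ℝ} {x : E} (hu : ContDiffAt ℝ 2 u x) (v : E) :
    (fun s : ℝ => secondDiff u x v s - s ^ 2 * fderiv ℝ (fderiv ℝ u) x v v)
      =o[𝓝 0] fun s : ℝ => s ^ 2 := by
  set c := fderiv ℝ (fderiv ℝ u) x v v
  have hnear (w : E) : Tendsto (fun s : ℝ => x + s • w) (𝓝 0) (𝓝 x) := by
    simpa using (hasDerivAt_add_smul x w 0).continuousAt.tendsto
  have hdiff : ∀ᶠ y in 𝓝 x, DifferentiableAt ℝ u y :=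
    (hu.eventually (by simp)).mono fun y hy => hy.differentiableAt (by norm_num)
  obtain ⟨r, hr, hball⟩ := Metric.eventually_nhds_iff_ball.1
    (((hnear v).eventually hdiff).and ((hnear (-v)).eventually hdiff))
  have hder : ∀ s ∈ ball (0 : ℝ) r,
      HasDerivWithinAt (fun s : ℝ => secondDiff u x v s - s ^ 2 * c)
        (fderiv ℝ u (x + s • v) v + fderiv ℝ u (x + s • -v) (-v) - 2 * s * c) (ball 0 r) s := by
    intro s hs
    have hplus := (hball s hs).1.hasFDerivAt.comp_hasDerivAt s (hasDerivAt_add_smul x v s)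
    have hminus := (hball s hs).2.hasFDerivAt.comp_hasDerivAt s (hasDerivAt_add_smul x (-v) s)
    have hsq : HasDerivAt (fun s : ℝ => s ^ 2 * c) (2 * s * c) s := by
      simpa using (hasDerivAt_pow 2 s).mul_const c
    refine (((hplus.add hminus).sub_const (2 * u x)).sub hsq).hasDerivWithinAt.congr_of_mem
      (fun t _ => ?_) hs
    simp [secondDiff, ← sub_eq_add_neg]
  have hsmall : (fun s : ℝ => fderiv ℝ u (x + s • v) v + fderiv ℝ u (x + s • -v) (-v) - 2 * s * c)
      =o[𝓝[ball 0 r] 0] fun s : ℝ => (s - 0) ^ 1 := by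
    simp only [sub_zero, pow_one]
    refine (((isLittleO_fderiv_add_smul_sub hu v).add
      (isLittleO_fderiv_add_smul_sub hu (-v))).mono nhdsWithin_le_nhds).congr_left fun s => ?_
    simp only [map_neg, neg_apply, neg_neg, c]
    ring
  have h := (convex_ball (0 : ℝ) r).isLittleO_pow_succ_real (mem_ball_self hr) hder hsmall
  rw [nhdsWithin_eq_nhds.2 (ball_mem_nhds 0 hr)] at h
  refine h.congr (fun s => ?_) (fun s => by simp)
  simp [secondDiff]
  ring

lemma not_isLocalMax_sub_of_secondDiff_le {ι : Type*} [Fintype ι] {U Φ : E → ℝ} {p : E}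
    {v : ι → E} {c : ι → ℝ}
    (hU : (fun s : ℝ => ∑ i, secondDiff U p (v i) s) =o[𝓝 0] fun s : ℝ => s ^ 2)
    (hΦ : ∀ i, ∀ᶠ s : ℝ in 𝓝[>] 0, secondDiff Φ p (v i) s ≤ c i * s ^ 2) (hc : ∑ i, c i < 0) :
    ¬ IsLocalMax (fun q => U q - Φ q) p := by
  intro hmax
  have hle (i : ι) : ∀ᶠ s : ℝ in 𝓝[>] 0, secondDiff U p (v i) s ≤ c i * s ^ 2 := by
    have hlim (w : E) : Tendsto (fun s : ℝ => p + s • w) (𝓝[>] 0) (𝓝 p) := by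
      have : Continuous fun s : ℝ => p + s • w := by fun_prop
      simpa using this.tendsto 0 |>.mono_left nhdsWithin_le_nhds
    filter_upwards [hΦ i, (hlim (v i)).eventually hmax, (hlim (-v i)).eventually hmax]
      with s hs hplus hminus
    simp only [smul_neg, ← sub_eq_add_neg] at hminus
    simp only [secondDiff] at hs ⊢
    linarith
  obtain ⟨s, ⟨hsum, hsmall⟩, hs : 0 < s⟩ := (((eventually_all.2 hle).and
    (nhdsWithin_le_nhds (hU.def (by linarith : 0 < -(∑ i, c i) / 2)))).and
      self_mem_nhdsWithin).exists
  have hupper : ∑ i, secondDiff U p (v i) s ≤ (∑ i, c i) * s ^ 2 := by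
    rw [Finset.sum_mul]
    exact Finset.sum_le_sum fun i _ => hsum i
  rw [Real.norm_eq_abs, Real.norm_eq_abs, abs_of_nonneg (sq_nonneg s)] at hsmall
  have := neg_abs_le (∑ i, secondDiff U p (v i) s)
  nlinarith [pow_pos hs 2]

lemma HarmonicOn.isLittleO_sum_secondDiff {n : ℕ} {u : Euc n → ℝ} {Ω : Set (Euc n)}
    (hu : HarmonicOn u Ω) (hΩ : IsOpen Ω) {x : Euc n} (hx : x ∈ Ω) {ι : Type*} [Fintype ι]
    (b : OrthonormalBasis ι ℝ (Euc n)) :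
    (fun s : ℝ => ∑ i, secondDiff u x (b i) s) =o[𝓝 0] fun s : ℝ => s ^ 2 := by
  have h := IsLittleO.sum (A := fun i s => secondDiff u x (b i) s
    - s ^ 2 * fderiv ℝ (fderiv ℝ u) x (b i) (b i)) (s := Finset.univ)
    fun i _ => isLittleO_secondDiff_sub (hu.contDiffAt hΩ hx) (b i)
  refine h.congr_left fun s => ?_
  rw [Finset.sum_apply, Finset.sum_sub_distrib, ← Finset.mul_sum,
    ← laplacian_eq_sum_orthonormalBasis (hu.contDiffAt hΩ hx) b, hu.2 x hx, mul_zero, sub_zero]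

end SecondDifference

/-! ### Graph domains and their normals -/

section Epigraph

variable {n : ℕ} {Ω : Set (Euc (n + 1))} {R : ℝ} {f : Euc n → ℝ} {x : Euc (n + 1)}

/-- Inside the ball `B(0, R)`, the set `Ω` is the strict epigraph of `f`. -/
def IsEpigraphOnBall (Ω : Set (Euc (n + 1))) (R : ℝ) (f : Euc n → ℝ) : Prop :=
  ∀ y ∈ ball (0 : Euc (n + 1)) R, (y ∈ Ω ↔ f (front y) < lastc y)

lemma AlignedLipGraphOn.isEpigraphOnBall {τ : ℝ} (h : AlignedLipGraphOn Ω 0 R τ f) :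
    IsEpigraphOnBall Ω R f := fun y hy => by
  simpa [mem_ball_zero_iff.1 hy] using Set.ext_iff.1 h.2.2 y

lemma IsEpigraphOnBall.le_of_mem_closure (hΩ : IsEpigraphOnBall Ω R f) (hf : Continuous f)
    (hxR : x ∈ ball 0 R) (hx : x ∈ closure Ω) : f (front x) ≤ lastc x := by
  by_contra! hlt
  have hopen : IsOpen (ball 0 R ∩ {y | lastc y < f (front y)}) :=
    isOpen_ball.inter (isOpen_lt continuous_lastc (hf.comp continuous_front))
  obtain ⟨y, ⟨hyR, hlt'⟩, hy⟩ := mem_closure_iff.1 hx _ hopen ⟨hxR, hlt⟩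
  exact lt_asymm ((hΩ y hyR).1 hy) hlt'

lemma IsEpigraphOnBall.mem_closure (hΩ : IsEpigraphOnBall Ω R f) (hxR : x ∈ ball 0 R)
    (hx : f (front x) ≤ lastc x) : x ∈ closure Ω := by
  have hlim : Tendsto (fun t : ℝ => x + t • eLast n) (𝓝[>] 0) (𝓝 x) := by
    have : Continuous fun t : ℝ => x + t • eLast n := by fun_prop
    simpa using this.tendsto 0 |>.mono_left nhdsWithin_le_nhds
  refine mem_closure_of_tendsto hlim ?_
  filter_upwards [hlim.eventually (isOpen_ball.mem_nhds hxR), self_mem_nhdsWithin] with t ht ht0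
  have ht0 : 0 < t := ht0
  exact (hΩ _ ht).2 (by simpa using by linarith)

lemma IsEpigraphOnBall.mem_frontier_iff (hΩ : IsEpigraphOnBall Ω R f) (hf : Continuous f)
    (hxR : x ∈ ball 0 R) : x ∈ frontier Ω ↔ f (front x) = lastc x := by
  refine ⟨fun hx => (hΩ.le_of_mem_closure hf hxR hx.1).eq_of_not_lt fun hlt => hx.2 ?_,
    fun hx => ⟨hΩ.mem_closure hxR hx.le, fun hint => ?_⟩⟩
  · exact mem_interior.2 ⟨ball 0 R ∩ {y | f (front y) < lastc y},
      fun y hy => (hΩ y hy.1).2 hy.2,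
      isOpen_ball.inter (isOpen_lt (hf.comp continuous_front) continuous_lastc), hxR, hlt⟩
  · exact ((hΩ x hxR).1 (interior_subset hint)).ne hx

end Epigraph

section OneSidedLimits

lemma nonpos_of_eventually_mul_le_of_isLittleO {a : ℝ} {A : ℝ → ℝ}
    (hA : A =o[𝓝[>] 0] fun t : ℝ => t) (h : ∀ᶠ t in 𝓝[>] (0 : ℝ), t * a ≤ A t) : a ≤ 0 := by
  by_contra! ha
  obtain ⟨t, ⟨hle, hsmall⟩, ht : 0 < t⟩ :=
    ((h.and (hA.def (half_pos ha))).and self_mem_nhdsWithin).exists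
  rw [Real.norm_eq_abs, Real.norm_eq_abs, abs_of_pos ht] at hsmall
  nlinarith [le_abs_self (A t)]

variable {E : Type*} [NormedAddCommGroup E] [NormedSpace ℝ E]

lemma tendsto_sub_smul (x v : E) : Tendsto (fun t : ℝ => x - t • v) (𝓝[>] 0) (𝓝 x) := by
  have : Continuous fun t : ℝ => x - t • v := by fun_prop
  simpa using this.tendsto 0 |>.mono_left nhdsWithin_le_nhds

end OneSidedLimits

section Normal

variable {n : ℕ} {Ω : Set (Euc (n + 1))} {R : ℝ} {f : Euc n → ℝ} {K M : ℝ≥0}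
  {x ν z : Euc (n + 1)}

lemma OutwardNormalAt.isLittleO_graph (hν : OutwardNormalAt Ω x ν)
    (hΩ : IsEpigraphOnBall Ω R f) (hf : LipschitzWith K f) (hxR : x ∈ ball 0 R)
    (hx : x ∈ frontier Ω) (v : Euc n) :
    (fun t : ℝ => t * ⟪front ν, v⟫ + lastc ν * (f (front x + t • v) - f (front x)))
      =o[𝓝 0] fun t : ℝ => t := by
  set γ : ℝ → Euc (n + 1) := fun t => x + snocVec (t • v) (f (front x + t • v) - f (front x))
    with hγ
  have hbound (t : ℝ) : ‖γ t - x‖ ≤ (1 + K) * ‖v‖ * ‖t‖ := by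
    have hlip : |f (front x + t • v) - f (front x)| ≤ K * (‖t‖ * ‖v‖) := by
      simpa [Real.dist_eq, dist_eq_norm, norm_smul] using
        hf.dist_le_mul (front x + t • v) (front x)
    have hnorm := norm_le_front_add_lastc (γ t - x)
    simp only [hγ, add_sub_cancel_left, front_snocVec, lastc_snocVec, norm_smul] at hnorm ⊢
    linarith
  have hO : (fun t => ‖γ t - x‖) =O[𝓝 0] fun t : ℝ => t :=
    IsBigO.of_bound _ (Eventually.of_forall fun t => by simpa only [norm_norm] using hbound t)
  have hlim : Tendsto γ (𝓝 0) (𝓝 x) := by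
    rw [tendsto_iff_norm_sub_tendsto_zero]
    exact hO.trans_tendsto tendsto_id
  have hgraph : Tendsto γ (𝓝 0) (𝓝[frontier Ω] x) := by
    refine tendsto_nhdsWithin_iff.2 ⟨hlim, ?_⟩
    filter_upwards [hlim.eventually (isOpen_ball.mem_nhds hxR)] with t ht
    rw [hΩ.mem_frontier_iff hf.continuous ht]
    simp [hγ, (hΩ.mem_frontier_iff hf.continuous hxR).1 hx]
  refine ((hν.2.2.2.comp_tendsto hgraph).trans_isBigO hO).congr_left fun t => ?_
  simp only [Function.comp, hγ, add_sub_cancel_left, inner_eq_front_add_lastc, front_snocVec,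
    lastc_snocVec, inner_smul_right]

lemma OutwardNormalAt.eventually_graph_lt (hν : OutwardNormalAt Ω x ν)
    (hΩ : IsEpigraphOnBall Ω R f) (hf : Continuous f) (hxR : x ∈ ball 0 R)
    (hx : x ∈ frontier Ω) :
    ∀ᶠ t : ℝ in 𝓝[>] 0, f (front x + t • -front ν) - f (front x) < -(t * lastc ν) := by
  filter_upwards [hν.2.2.1, (tendsto_sub_smul x ν).eventually (isOpen_ball.mem_nhds hxR)]
    with t hmem hball
  have hlt := (hΩ _ hball).1 hmem
  simp only [front_sub, front_smul, lastc_sub, lastc_smul] at hlt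
  rw [smul_neg, ← sub_eq_add_neg, (hΩ.mem_frontier_iff hf hxR).1 hx]
  linarith

lemma OutwardNormalAt.lastc_neg (hν : OutwardNormalAt Ω x ν) (hΩ : IsEpigraphOnBall Ω R f)
    (hf : LipschitzWith K f) (hxR : x ∈ ball 0 R) (hx : x ∈ frontier Ω) : lastc ν < 0 := by
  by_contra! hnonneg
  have hunit := norm_sq_eq_front_add_lastc ν
  rw [hν.1] at hunit
  have htangent := (hν.isLittleO_graph hΩ hf hxR hx (-front ν)).neg_left.mono
    (nhdsWithin_le_nhds (s := Ioi 0))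
  have : (1 : ℝ) ≤ 0 := nonpos_of_eventually_mul_le_of_isLittleO htangent <| by
    filter_upwards [hν.eventually_graph_lt hΩ hf.continuous hxR hx] with t ht
    rw [inner_neg_right, real_inner_self_eq_norm_sq]
    linear_combination mul_le_mul_of_nonneg_left ht.le hnonneg + t * hunit
  linarith

lemma OutwardNormalAt.norm_front_le_mul (hν : OutwardNormalAt Ω x ν) (hΩ : IsEpigraphOnBall Ω R f)
    (hf : LipschitzWith K f) (hxR : x ∈ ball 0 R) (hx : x ∈ frontier Ω) :
    ‖front ν‖ ≤ K * -lastc ν := by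
  have hneg := hν.lastc_neg hΩ hf hxR hx
  have hsq : ‖front ν‖ ^ 2 - -lastc ν * (K * ‖front ν‖) ≤ 0 := by
    refine nonpos_of_eventually_mul_le_of_isLittleO
      ((hν.isLittleO_graph hΩ hf hxR hx (front ν)).mono nhdsWithin_le_nhds) ?_
    filter_upwards [self_mem_nhdsWithin] with t (ht : 0 < t)
    have hlip : |f (front x + t • front ν) - f (front x)| ≤ K * (t * ‖front ν‖) := by
      simpa [Real.dist_eq, dist_eq_norm, norm_smul, abs_of_pos ht] using
        hf.dist_le_mul (front x + t • front ν) (front x)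
    rw [real_inner_self_eq_norm_sq]
    nlinarith [le_abs_self (f (front x + t • front ν) - f (front x))]
  by_contra! hlt
  have : 0 ≤ K * -lastc ν := by have := neg_pos.2 hneg; positivity
  nlinarith

lemma OutwardNormalAt.lastc_le (hν : OutwardNormalAt Ω x ν) (hΩ : IsEpigraphOnBall Ω R f)
    (hf : LipschitzWith K f) (hK : K ≤ 1 / 100) (hxR : x ∈ ball 0 R) (hx : x ∈ frontier Ω) :
    lastc ν ≤ -(99 / 100) := by
  have hfront := hν.norm_front_le_mul hΩ hf hxR hx
  have hneg := hν.lastc_neg hΩ hf hxR hx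
  have hK' : (K : ℝ) ≤ 1 / 100 := by exact_mod_cast hK
  have hunit := norm_sq_eq_front_add_lastc ν
  rw [hν.1] at hunit
  have hsmall : ‖front ν‖ ≤ 1 / 100 * -lastc ν := hfront.trans (by gcongr; linarith)
  nlinarith [norm_nonneg (front ν)]

lemma OutwardNormalAt.abs_lastc_le_one (hν : OutwardNormalAt Ω x ν) : |lastc ν| ≤ 1 :=
  hν.1 ▸ abs_lastc_le ν

lemma OutwardNormalAt.inner_front_add_fderiv_eq_zero (hν : OutwardNormalAt Ω x ν)
    (hΩ : IsEpigraphOnBall Ω R f) (hf : LipschitzWith K f) (hd : Differentiable ℝ f)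
    (hxR : x ∈ ball 0 R) (hx : x ∈ frontier Ω) (v : Euc n) :
    ⟪front ν, v⟫ + lastc ν * fderiv ℝ f (front x) v = 0 := by
  have hle (w : Euc n) : ⟪front ν, w⟫ + lastc ν * fderiv ℝ f (front x) w ≤ 0 := by
    have hline : HasDerivAt (fun t : ℝ => front x + t • w) w 0 := by
      simpa using ((hasDerivAt_id (0 : ℝ)).smul_const w).const_add (front x)
    have hfd : HasFDerivAt f (fderiv ℝ f (front x)) (front x + (0 : ℝ) • w) := by
      simpa using (hd (front x)).hasFDerivAt
    have htaylor := (hfd.comp_hasDerivAt (0 : ℝ) hline).isLittleO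
    simp only [sub_zero, Function.comp_apply, zero_smul, add_zero] at htaylor
    have := (hν.isLittleO_graph hΩ hf hxR hx w).sub (htaylor.const_mul_left (lastc ν))
    refine nonpos_of_eventually_mul_le_of_isLittleO (this.mono nhdsWithin_le_nhds)
      (Eventually.of_forall fun t => le_of_eq ?_)
    rw [smul_eq_mul]
    ring
  have hneg := hle (-v)
  rw [inner_neg_right, map_neg] at hneg
  linarith [hle v]

lemma IsC11FunWith.abs_sub_sub_fderiv_le (hf : IsC11FunWith M f) (a b : Euc n) :
    |f b - f a - fderiv ℝ f a (b - a)| ≤ M * ‖b - a‖ ^ 2 := by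
  have h := (convex_closedBall a ‖b - a‖).norm_image_sub_le_of_norm_fderiv_le'
    (f := f) (φ := fderiv ℝ f a) (C := M * ‖b - a‖) (fun y _ => hf.1 y) (fun y hy => ?_)
    (mem_closedBall_self (norm_nonneg _)) (mem_closedBall_iff_norm.2 le_rfl)
  · rwa [Real.norm_eq_abs, mul_assoc, ← sq] at h
  · rw [← dist_eq_norm]
    refine (hf.2.2.dist_le_mul y a).trans ?_
    gcongr
    exact mem_closedBall.1 hy

lemma OutwardNormalAt.inner_le_of_isEpigraphOnBall (hν : OutwardNormalAt Ω x ν)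
    (hΩ : IsEpigraphOnBall Ω R f) (hf : IsC11FunWith M f) (hxR : x ∈ ball 0 R)
    (hx : x ∈ frontier Ω) (hzR : z ∈ ball 0 R) (hz : z ∈ closure Ω) :
    ⟪z - x, ν⟫ ≤ M * ‖z - x‖ ^ 2 := by
  have hneg := hν.lastc_neg hΩ hf.2.1 hxR hx
  have hone := (abs_le.1 hν.abs_lastc_le_one).1
  have hzf := hΩ.le_of_mem_closure hf.2.1.continuous hzR hz
  have hxf := (hΩ.mem_frontier_iff hf.2.1.continuous hxR).1 hx
  have htangent := hν.inner_front_add_fderiv_eq_zero hΩ hf.2.1 hf.1 hxR hx (front (z - x))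
  have htaylor := (abs_le.1 (hf.abs_sub_sub_fderiv_le (front x) (front z))).1
  rw [← front_sub] at htaylor
  have hfront : (M : ℝ) * ‖front (z - x)‖ ^ 2 ≤ M * ‖z - x‖ ^ 2 := by
    gcongr
    exact norm_front_le _
  have hpos : 0 ≤ (M : ℝ) * ‖front (z - x)‖ ^ 2 := by positivity
  calc ⟪z - x, ν⟫
      = -lastc ν * (fderiv ℝ f (front x) (front (z - x)) - lastc (z - x)) := by
        rw [real_inner_comm, inner_eq_front_add_lastc]
        linarith
    _ ≤ -lastc ν * (M * ‖front (z - x)‖ ^ 2) := by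
        rw [lastc_sub]
        gcongr
        · linarith
        · linarith
    _ ≤ M * ‖z - x‖ ^ 2 := by nlinarith

end Normal

section Isometry

variable {n : ℕ} {Ω : Set (Euc (n + 1))} {ρ : ℝ} {M : ℝ≥0} {x ν z : Euc (n + 1)}

lemma map_sub_map_affineIsometryEquiv {m : ℕ} (T : Euc m ≃ᵃⁱ[ℝ] Euc m) (x y : Euc m) :
    T y - T x = T.linearIsometryEquiv (y - x) := by
  simpa using (T.map_vsub y x).symm

lemma OutwardNormalAt.preimage {m : ℕ} {Ω : Set (Euc m)} {x ν : Euc m}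
    (T : Euc m ≃ᵃⁱ[ℝ] Euc m) (hν : OutwardNormalAt Ω (T x) ν) :
    OutwardNormalAt (T ⁻¹' Ω) x (T.linearIsometryEquiv.symm ν) := by
  have hcl : T ⁻¹' closure Ω = closure (T ⁻¹' Ω) := T.toHomeomorph.preimage_closure Ω
  have hfr : T ⁻¹' frontier Ω = frontier (T ⁻¹' Ω) := T.toHomeomorph.preimage_frontier Ω
  have hmap (t : ℝ) : T (x + t • T.linearIsometryEquiv.symm ν) = T x + t • ν := by
    have := map_sub_map_affineIsometryEquiv T x (x + t • T.linearIsometryEquiv.symm ν)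
    rw [add_sub_cancel_left, map_smul, LinearIsometryEquiv.apply_symm_apply] at this
    rw [← this, add_sub_cancel]
  refine ⟨by simpa using hν.1, ?_, ?_, ?_⟩
  · filter_upwards [hν.2.1] with t ht
    rwa [← hcl, mem_preimage, hmap]
  · filter_upwards [hν.2.2.1] with t ht
    rwa [mem_preimage, sub_eq_add_neg, ← neg_smul, hmap, neg_smul, ← sub_eq_add_neg]
  · have hlim : Tendsto T (𝓝[frontier (T ⁻¹' Ω)] x) (𝓝[frontier Ω] T x) :=
      tendsto_nhdsWithin_iff.2 ⟨(T.continuous.tendsto x).mono_left nhdsWithin_le_nhds, by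
        filter_upwards [self_mem_nhdsWithin] with y hy
        rwa [← hfr] at hy⟩
    refine ((hν.2.2.2.comp_tendsto hlim).congr_left fun y => ?_).congr_right fun y => ?_
    · rw [Function.comp_apply, map_sub_map_affineIsometryEquiv,
        ← T.linearIsometryEquiv.inner_map_map (T.linearIsometryEquiv.symm ν),
        LinearIsometryEquiv.apply_symm_apply]
    · rw [Function.comp_apply, map_sub_map_affineIsometryEquiv, LinearIsometryEquiv.norm_map]

lemma IsGraphBall.exists_isEpigraphOnBall_preimage {P : (Euc n → ℝ) → Prop}
    (h : IsGraphBall Ω x ρ P) :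
    ∃ (T : Euc (n + 1) ≃ᵃⁱ[ℝ] Euc (n + 1)) (f : Euc n → ℝ),
      P f ∧ T 0 = x ∧ IsEpigraphOnBall (T ⁻¹' Ω) ρ f := by
  obtain ⟨T, f, hP, hT, -, hset⟩ := h
  refine ⟨T, f, hP, hT, fun y hy => ?_⟩
  have hball : T y ∈ ball x ρ := by rwa [← hT, mem_ball, T.dist_map]
  have := Set.ext_iff.1 hset (T y)
  rw [T.injective.mem_set_image] at this
  simpa [hball, mem_ball_zero_iff.1 hy] using this

lemma OutwardNormalAt.inner_le_of_hasC11CharacterOn {s : Set (Euc (n + 1))}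
    (hν : OutwardNormalAt Ω x ν) (hΩ : HasC11CharacterOn Ω s ρ M) (hx : x ∈ frontier Ω ∩ s)
    (hz : z ∈ closure Ω) (hzx : ‖z - x‖ < ρ) : ⟪z - x, ν⟫ ≤ M * ‖z - x‖ ^ 2 := by
  obtain ⟨T, f, hf, rfl, hepi⟩ := (hΩ.2 x hx).exists_isEpigraphOnBall_preimage
  obtain ⟨y, rfl⟩ := T.surjective z
  rw [map_sub_map_affineIsometryEquiv, LinearIsometryEquiv.norm_map] at hzx ⊢
  have hfr : T ⁻¹' frontier Ω = frontier (T ⁻¹' Ω) := T.toHomeomorph.preimage_frontier Ω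
  have hcl : T ⁻¹' closure Ω = closure (T ⁻¹' Ω) := T.toHomeomorph.preimage_closure Ω
  have := (hν.preimage T).inner_le_of_isEpigraphOnBall hepi hf (mem_ball_self hΩ.1)
    (hfr ▸ hx.1) (z := y) (by simpa using hzx) (hcl ▸ hz)
  rwa [← T.linearIsometryEquiv.inner_map_map, LinearIsometryEquiv.apply_symm_apply] at this

end Isometry

lemma NeumannBC.isLittleO_inward {n : ℕ} {Ω : Set (Euc n)} {ν : Euc n → Euc n} {h : Euc n → ℝ}
    {s : Set (Euc n)} (hN : NeumannBC Ω ν h s) {x : Euc n} (hx : x ∈ frontier Ω ∩ s)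
    (hν : OutwardNormalAt Ω x (ν x)) :
    (fun t : ℝ => h (x - t • ν x) - h x) =o[𝓝[>] 0] fun t : ℝ => t := by
  obtain ⟨hd, hzero⟩ := hN x hx
  have hlim : Tendsto (fun t : ℝ => x - t • ν x) (𝓝[>] 0) (𝓝[closure Ω] x) :=
    tendsto_nhdsWithin_iff.2 ⟨tendsto_sub_smul x (ν x), hν.2.2.1.mono fun _ ht => subset_closure ht⟩
  refine ((hd.hasFDerivWithinAt.isLittleO.comp_tendsto hlim).congr_left fun t => ?_).trans_isBigO
    (IsBigO.of_bound 1 (Eventually.of_forall fun t => ?_))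
  · simp [hzero]
  · simp [norm_smul, hν.1]

/-! ### Comparison by doubling the variables -/

section Maximum

variable {X : Type*} [TopologicalSpace X] {K : Set X} {F : X → ℝ}

lemma nonpos_of_forall_pos_not_isMaxOn (hK : IsCompact K) (hF : ContinuousOn F K)
    (h : ∀ p ∈ K, 0 < F p → ¬ IsMaxOn F K p) {q : X} (hq : q ∈ K) : F q ≤ 0 := by
  obtain ⟨p, hp, hmax⟩ := hK.exists_isMaxOn ⟨q, hq⟩ hF
  by_contra! hpos
  exact h p hp (hpos.trans_le (hmax hq)) hmax

end Maximum

section Decrease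

variable {E : Type*} [NormedAddCommGroup E] [NormedSpace ℝ E] {Φ U : E → ℝ} {p w : E} {K : Set E}

/-- `Φ` decreases at least linearly when one leaves `p` in the direction `w`. -/
def DecreasesAlong (Φ : E → ℝ) (p w : E) : Prop :=
  ∃ c > 0, ∀ᶠ t : ℝ in 𝓝[>] 0, Φ (p + t • w) ≤ Φ p - c * t

lemma decreasesAlong_of_hasDerivAt {d : ℝ} (h : HasDerivAt (fun t : ℝ => Φ (p + t • w)) d 0)
    (hd : d < 0) : DecreasesAlong Φ p w := by
  refine ⟨-d / 2, by linarith, ?_⟩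
  filter_upwards [nhdsWithin_le_nhds
    ((hasDerivAt_iff_isLittleO.1 h).def (by linarith : 0 < -d / 2)), self_mem_nhdsWithin]
    with t hsmall (ht : 0 < t)
  simp only [sub_zero, zero_smul, add_zero, smul_eq_mul, Real.norm_eq_abs, abs_of_pos ht]
    at hsmall
  linarith [le_abs_self (Φ (p + t • w) - Φ p - t * d)]

lemma not_isMaxOn_sub_of_decreasesAlong (hK : ∀ᶠ t : ℝ in 𝓝[>] 0, p + t • w ∈ K)
    (hU : (fun t : ℝ => U (p + t • w) - U p) =o[𝓝[>] 0] fun t : ℝ => t)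
    (hΦ : DecreasesAlong Φ p w) : ¬ IsMaxOn (fun q => U q - Φ q) K p := by
  intro hmax
  obtain ⟨c, hc, hdecr⟩ := hΦ
  refine hc.not_ge (nonpos_of_eventually_mul_le_of_isLittleO hU.neg_left ?_)
  filter_upwards [hK, hdecr] with t hmem hle
  have := hmax hmem
  simp only [mem_ofPred_eq] at this
  linarith

end Decrease

section Doubling

variable {m : ℕ} {Ω : Set (Euc m)} {h : Euc m → ℝ} {Φ : Euc m × Euc m → ℝ}
  {N : Set (Euc m × Euc m)} {x y v : Euc m}

/-- `v` points from `x` into `Ω` and the derivative of `h` at `x` along `v` vanishes: the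
Neumann condition at a boundary point, with `v` the inner normal. -/
def IsInwardCritical (Ω : Set (Euc m)) (h : Euc m → ℝ) (x v : Euc m) : Prop :=
  (∀ᶠ t : ℝ in 𝓝[>] 0, x + t • v ∈ Ω) ∧
    (fun t : ℝ => h (x + t • v) - h x) =o[𝓝[>] 0] fun t : ℝ => t

lemma NeumannBC.isInwardCritical {Ω s : Set (Euc m)} {ν : Euc m → Euc m} {h : Euc m → ℝ}
    (hN : NeumannBC Ω ν h s) {x : Euc m} (hx : x ∈ frontier Ω ∩ s)
    (hν : OutwardNormalAt Ω x (ν x)) : IsInwardCritical Ω h x (-ν x) := by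
  simpa only [IsInwardCritical, smul_neg, ← sub_eq_add_neg] using
    And.intro hν.2.2.1 (hN.isLittleO_inward hx hν)

/-- `Φ` is strictly superharmonic at `p` along a copy `{(b, ±b)}` of an orthonormal frame: the two
points move together, each coordinate being either followed or reflected. Sums of harmonic
functions of one variable are harmonic along every such frame. -/
def IsCoupledSuperharmonicAt (Φ : Euc m × Euc m → ℝ) (p : Euc m × Euc m) : Prop :=
  ∃ (b : OrthonormalBasis (Fin m) ℝ (Euc m)) (σ : Fin m → ℤˣ) (c : Fin m → ℝ), ∑ i, c i < 0 ∧
    ∀ i, ∀ᶠ s : ℝ in 𝓝[>] 0, secondDiff Φ p (b i, σ i • b i) s ≤ c i * s ^ 2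

lemma HarmonicOn.isLittleO_sum_secondDiff_coupled (hh : HarmonicOn h Ω) (hΩ : IsOpen Ω)
    (hx : x ∈ Ω) (hy : y ∈ Ω) (b : OrthonormalBasis (Fin m) ℝ (Euc m)) (σ : Fin m → ℤˣ) :
    (fun s : ℝ => ∑ i, secondDiff (fun q : Euc m × Euc m => h q.1 - h q.2) (x, y)
      (b i, σ i • b i) s) =o[𝓝 0] fun s : ℝ => s ^ 2 := by
  refine ((hh.isLittleO_sum_secondDiff hΩ hx b).sub
    (hh.isLittleO_sum_secondDiff hΩ hy b)).congr_left fun s => ?_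
  rw [← Finset.sum_sub_distrib]
  refine Finset.sum_congr rfl fun i _ => ?_
  have hsign : secondDiff h y (b i) s = secondDiff h y (σ i • b i) s := by
    obtain hi | hi := Int.units_eq_one_or (σ i)
    · rw [hi, one_smul]
    · rw [hi, Units.neg_smul, one_smul, secondDiff_neg_direction]
  rw [hsign]
  simp only [secondDiff, Prod.smul_mk, Prod.mk_add_mk, Prod.mk_sub_mk]
  ring

lemma sub_le_of_doubling (hΩ : IsOpen Ω) (hcont : ContinuousOn h (closure Ω))
    (hharm : HarmonicOn h Ω) (hN : IsCompact N) (hΦ : Continuous Φ)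
    (hnhds : ∀ x ∈ closure Ω, ∀ y ∈ closure Ω, (x, y) ∈ N → Φ (x, y) < h x - h y →
      N ∈ 𝓝 (x, y))
    (hfst : ∀ x ∈ frontier Ω, ∀ y ∈ closure Ω, (x, y) ∈ N → Φ (x, y) < h x - h y →
      ∃ v, IsInwardCritical Ω h x v ∧ DecreasesAlong Φ (x, y) (v, 0))
    (hsnd : ∀ x ∈ closure Ω, ∀ y ∈ frontier Ω, (x, y) ∈ N → Φ (x, y) < h x - h y →
      ∃ v, IsInwardCritical Ω h y v ∧ DecreasesAlong Φ (x, y) (0, v))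
    (hint : ∀ x ∈ Ω, ∀ y ∈ Ω, (x, y) ∈ N → Φ (x, y) < h x - h y →
      IsCoupledSuperharmonicAt Φ (x, y))
    (hx : x ∈ closure Ω) (hy : y ∈ closure Ω) (hxy : (x, y) ∈ N) : h x - h y ≤ Φ (x, y) := by
  set K := N ∩ closure Ω ×ˢ closure Ω
  have hF : ContinuousOn (fun q : Euc m × Euc m => h q.1 - h q.2 - Φ q) K :=
    ((hcont.comp continuousOn_fst fun q hq => hq.2.1).sub
      (hcont.comp continuousOn_snd fun q hq => hq.2.2)).sub hΦ.continuousOn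
  refine sub_nonpos.1 (nonpos_of_forall_pos_not_isMaxOn (K := K)
    (F := fun q : Euc m × Euc m => h q.1 - h q.2 - Φ q)
    (hN.inter_right (isClosed_closure.prod isClosed_closure)) hF ?_ ⟨hxy, hx, hy⟩)
  rintro ⟨x, y⟩ ⟨hxy, hx, hy⟩ hpos
  replace hpos : Φ (x, y) < h x - h y := sub_pos.1 hpos
  have hnear (w : Euc m × Euc m) : ∀ᶠ t : ℝ in 𝓝[>] 0, (x, y) + t • w ∈ N := by
    have := (tendsto_sub_smul (x, y) (-w)).eventually_mem (hnhds x hx y hy hxy hpos)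
    simpa only [smul_neg, sub_neg_eq_add] using this
  by_cases hxΩ : x ∈ Ω
  · by_cases hyΩ : y ∈ Ω
    · obtain ⟨b, σ, c, hc, hle⟩ := hint x hxΩ y hyΩ hxy hpos
      refine fun hmax => not_isLocalMax_sub_of_secondDiff_le
        (hharm.isLittleO_sum_secondDiff_coupled hΩ hxΩ hyΩ b σ) hle hc (hmax.isLocalMax ?_)
      exact inter_mem (hnhds x hx y hy hxy hpos) (prod_mem_nhds
        (mem_of_superset (hΩ.mem_nhds hxΩ) subset_closure)
        (mem_of_superset (hΩ.mem_nhds hyΩ) subset_closure))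
    · obtain ⟨v, ⟨hvΩ, hv⟩, hdecr⟩ := hsnd x hx y (hΩ.frontier_eq ▸ ⟨hy, hyΩ⟩) hxy hpos
      refine not_isMaxOn_sub_of_decreasesAlong (w := (0, v)) ?_ ?_ hdecr
      · filter_upwards [hnear (0, v), hvΩ] with t ht htΩ
        exact ⟨ht, by simpa using hx, subset_closure (by simpa using htΩ)⟩
      · simpa using hv.neg_left
  · obtain ⟨v, ⟨hvΩ, hv⟩, hdecr⟩ := hfst x (hΩ.frontier_eq ▸ ⟨hx, hxΩ⟩) y hy hxy hpos
    refine not_isMaxOn_sub_of_decreasesAlong (w := (v, 0)) ?_ ?_ hdecr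
    · filter_upwards [hnear (v, 0), hvΩ] with t ht htΩ
      exact ⟨ht, subset_closure (by simpa using htΩ), by simpa using hy⟩
    · simpa using hv

end Doubling

/-! ### Interior and boundary Lipschitz estimate -/

section LocalSolution

variable {n : ℕ} {Ω : Set (Euc (n + 1))} {ν : Euc (n + 1) → Euc (n + 1)} {τ : ℝ}
  {f : Euc n → ℝ} {h : Euc (n + 1) → ℝ} {ρ : ℝ} {M : ℝ≥0} {x z : Euc (n + 1)}

/-- The local data near `x₀ = 0`: `Ω` lies above the graph of a flat Lipschitz function `f`, its
boundary has `C^{1,1}` character `(ρ, M)` in `ball 0 10`, and `h` is a harmonic function with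
vanishing normal derivative there, bounded by `1` in `ball 0 3`. -/
structure LocalNeumannSolution (Ω : Set (Euc (n + 1))) (ν : Euc (n + 1) → Euc (n + 1)) (τ : ℝ)
    (f : Euc n → ℝ) (h : Euc (n + 1) → ℝ) (ρ : ℝ) (M : ℝ≥0) : Prop where
  isOpen : IsOpen Ω
  c11 : HasC11CharacterOn Ω (ball 0 10) ρ M
  pos : 0 < τ
  lt : τ < 1 / 100
  lipschitz : LipschitzWith (Real.toNNReal τ) f
  map_zero : f 0 = 0
  epigraph : IsEpigraphOnBall Ω 10 f
  normal : OutwardNormalFieldOn Ω ν (ball 0 10)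
  continuousOn : ContinuousOn h (closure Ω)
  harmonicOn : HarmonicOn h Ω
  inwardCritical : ∀ x ∈ frontier Ω ∩ ball 0 10, IsInwardCritical Ω h x (-ν x)
  abs_le_one : ∀ x ∈ closure Ω, ‖x‖ < 3 → |h x| ≤ 1

namespace LocalNeumannSolution

variable (H : LocalNeumannSolution Ω ν τ f h ρ M)

include H

lemma neg : LocalNeumannSolution Ω ν τ f (-h) ρ M :=
  { H with
    continuousOn := H.continuousOn.neg
    harmonicOn := H.harmonicOn.neg H.isOpen
    inwardCritical := fun x hx => ⟨(H.inwardCritical x hx).1, by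
      simpa [neg_add_eq_sub] using (H.inwardCritical x hx).2.neg_left⟩
    abs_le_one := fun x hx hx3 => by simpa using H.abs_le_one x hx hx3 }

lemma norm_front_normal_le (hx : x ∈ frontier Ω ∩ ball 0 10) :
    ‖front (ν x)‖ ≤ τ * -lastc (ν x) := by
  simpa [Real.coe_toNNReal τ H.pos.le] using
    (H.normal x hx).norm_front_le_mul H.epigraph H.lipschitz hx.2 hx.1

lemma lastc_normal_le (hx : x ∈ frontier Ω ∩ ball 0 10) : lastc (ν x) ≤ -(99 / 100) := by
  refine (H.normal x hx).lastc_le H.epigraph H.lipschitz ?_ hx.2 hx.1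
  rw [← NNReal.coe_le_coe, Real.coe_toNNReal τ H.pos.le]
  simpa using H.lt.le

lemma inner_normal_le (hx : x ∈ frontier Ω ∩ ball 0 10) (hz : z ∈ closure Ω)
    (hzx : ‖z - x‖ < ρ) : ⟪z - x, ν x⟫ ≤ M * ‖z - x‖ ^ 2 :=
  (H.normal x hx).inner_le_of_hasC11CharacterOn H.c11 hx hz hzx

lemma sub_le_two {y : Euc (n + 1)} (hx : x ∈ closure Ω) (hx3 : ‖x‖ < 3) (hy : y ∈ closure Ω)
    (hy3 : ‖y‖ < 3) : h x - h y ≤ 2 := by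
  linarith [(abs_le.1 (H.abs_le_one x hx hx3)).2, (abs_le.1 (H.abs_le_one y hy hy3)).1]

end LocalNeumannSolution

end LocalSolution

section LineDerivative

variable {n : ℕ}

lemma hasDerivAt_norm_sub_smul {u : Euc n} (hu : u ≠ 0) (v : Euc n) :
    HasDerivAt (fun t : ℝ => ‖u - t • v‖) (-⟪u, v⟫ / ‖u‖) 0 := by
  have hline : HasDerivAt (fun t : ℝ => u - t • v) (-v) 0 := by
    simpa using ((hasDerivAt_id (0 : ℝ)).smul_const v).const_sub u
  have hsqrt := hline.norm_sq.sqrt (by simpa using hu)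
  simp only [Real.sqrt_sq (norm_nonneg _)] at hsqrt
  convert hsqrt using 1
  simp only [zero_smul, sub_zero, inner_neg_right]
  rw [mul_div_mul_left _ _ two_ne_zero]

lemma exists_orthonormalBasis_apply_zero_eq {e : Euc (n + 1)} (he : ‖e‖ = 1) :
    ∃ b : OrthonormalBasis (Fin (n + 1)) ℝ (Euc (n + 1)), b 0 = e := by
  have horth : Orthonormal ℝ (({0} : Set (Fin (n + 1))).domRestrict fun _ => e) :=
    ⟨fun _ => he, fun i j hij => absurd (Subsingleton.elim i j) hij⟩
  obtain ⟨b, hb⟩ := horth.exists_orthonormalBasis_extension_of_card_eq (by simp)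
  exact ⟨b, hb 0 rfl⟩

end LineDerivative

section LipschitzBarrier

variable {n : ℕ} {δ B : ℝ} {M : ℝ≥0} {x y z ν v : Euc (n + 1)}

/-- A concave function of `‖x - y‖`, tilted in the last coordinate so as to decrease in the
direction of the inner normals. -/
def radialBarrier (δ B : ℝ) (z x y : Euc (n + 1)) : ℝ :=
  (‖x - y‖ - ‖x - y‖ ^ 2 / (4 * δ)) * (1 - B * (lastc (x - z) + lastc (y - z)))

/-- The penalty keeping `x` near `z`, with the same kind of tilt as `radialBarrier`. -/
def centralBarrier (B : ℝ) (z x : Euc (n + 1)) : ℝ := ‖x - z‖ ^ 2 * (1 - B * lastc (x - z))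

/-- The barrier for the doubling argument that yields the Lipschitz estimate at `z`, to be used
where `‖x - z‖ ≤ δ` and `‖x - y‖ ≤ δ`. -/
def lipBarrier (δ B : ℝ) (z : Euc (n + 1)) (p : Euc (n + 1) × Euc (n + 1)) : ℝ :=
  12 * (n + 1) / δ * radialBarrier δ B z p.1 p.2 + 4 / δ ^ 2 * centralBarrier B z p.1

lemma continuous_lipBarrier : Continuous (lipBarrier δ B z) := by
  unfold lipBarrier radialBarrier centralBarrier
  fun_prop

lemma radialBarrier_comm (δ B : ℝ) (z x y : Euc (n + 1)) :
    radialBarrier δ B z x y = radialBarrier δ B z y x := by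
  simp only [radialBarrier, norm_sub_rev x y, add_comm (lastc (x - z))]

lemma tilt_mem_Icc {a : ℝ} (hB : 0 ≤ B) (hBδ : 12 * B * δ ≤ 1) (ha : |a| ≤ 3 * δ) :
    1 - B * a ∈ Icc (3 / 4) (5 / 4) := by
  rw [abs_le] at ha
  constructor <;> nlinarith

lemma abs_lastc_add_lastc_le (hxz : ‖x - z‖ ≤ δ) (hxy : ‖x - y‖ ≤ δ) :
    |lastc (x - z) + lastc (y - z)| ≤ 3 * δ := by
  have hsum : lastc (x - z) + lastc (y - z) = 2 * lastc (x - z) - lastc (x - y) := by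
    simp only [lastc_sub]
    ring
  rw [hsum, abs_le]
  have hx := abs_le.1 ((abs_lastc_le (x - z)).trans hxz)
  have hy := abs_le.1 ((abs_lastc_le (x - y)).trans hxy)
  constructor <;> linarith

lemma mul_norm_le_radialBarrier (hδ : 0 < δ) (hB : 0 ≤ B) (hBδ : 12 * B * δ ≤ 1)
    (hxz : ‖x - z‖ ≤ δ) (hxy : ‖x - y‖ ≤ δ) :
    9 / 16 * ‖x - y‖ ≤ radialBarrier δ B z x y := by
  have htilt := (tilt_mem_Icc hB hBδ (abs_lastc_add_lastc_le hxz hxy)).1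
  have hψ : 3 / 4 * ‖x - y‖ ≤ ‖x - y‖ - ‖x - y‖ ^ 2 / (4 * δ) := by
    have : ‖x - y‖ ^ 2 / (4 * δ) ≤ ‖x - y‖ / 4 := by
      rw [div_le_div_iff₀ (by positivity) (by norm_num)]
      nlinarith [norm_nonneg (x - y)]
    linarith
  rw [radialBarrier]
  nlinarith [norm_nonneg (x - y)]

lemma mul_norm_sq_le_centralBarrier (hB : 0 ≤ B) (hBδ : 12 * B * δ ≤ 1) (hxz : ‖x - z‖ ≤ δ) :
    3 / 4 * ‖x - z‖ ^ 2 ≤ centralBarrier B z x := by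
  have htilt := (tilt_mem_Icc hB hBδ
    ((abs_lastc_le (x - z)).trans (hxz.trans (by linarith [norm_nonneg (x - z)])))).1
  rw [centralBarrier]
  nlinarith [sq_nonneg ‖x - z‖]

lemma lipBarrier_nonneg (hδ : 0 < δ) (hB : 0 ≤ B) (hBδ : 12 * B * δ ≤ 1) (hxz : ‖x - z‖ ≤ δ)
    (hxy : ‖x - y‖ ≤ δ) : 0 ≤ lipBarrier δ B z (x, y) := by
  have hradial : 0 ≤ radialBarrier δ B z x y :=
    le_trans (by positivity) (mul_norm_le_radialBarrier hδ hB hBδ hxz hxy)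
  have hcentral : 0 ≤ centralBarrier B z x :=
    le_trans (by positivity) (mul_norm_sq_le_centralBarrier hB hBδ hxz)
  rw [lipBarrier]
  positivity

lemma two_le_lipBarrier (hδ : 0 < δ) (hB : 0 ≤ B) (hBδ : 12 * B * δ ≤ 1) (hxz : ‖x - z‖ ≤ δ)
    (hxy : ‖x - y‖ ≤ δ) (hbdry : ‖x - z‖ = δ ∨ ‖x - y‖ = δ) : 2 ≤ lipBarrier δ B z (x, y) := by
  have hradial : 12 * (n + 1) / δ * (9 / 16 * ‖x - y‖) ≤
      12 * (n + 1) / δ * radialBarrier δ B z x y := by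
    gcongr
    exact mul_norm_le_radialBarrier hδ hB hBδ hxz hxy
  have hcentral : 4 / δ ^ 2 * (3 / 4 * ‖x - z‖ ^ 2) ≤ 4 / δ ^ 2 * centralBarrier B z x := by
    gcongr
    exact mul_norm_sq_le_centralBarrier hB hBδ hxz
  refine le_trans ?_ (add_le_add hradial hcentral)
  obtain hbdry | hbdry := hbdry
  · have h₁ : 4 / δ ^ 2 * (3 / 4 * ‖x - z‖ ^ 2) = 3 := by rw [hbdry]; field_simp
    have h₂ : 0 ≤ 12 * (n + 1) / δ * (9 / 16 * ‖x - y‖) := by positivity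
    linarith
  · have h₁ : 12 * (n + 1) / δ * (9 / 16 * ‖x - y‖) = 27 / 4 * (n + 1) := by
      rw [hbdry]; field_simp; ring
    have h₂ : 0 ≤ 4 / δ ^ 2 * (3 / 4 * ‖x - z‖ ^ 2) := by positivity
    linarith [(Nat.cast_nonneg n : (0 : ℝ) ≤ n)]

lemma lipBarrier_self_le (hδ : 0 < δ) (hB : 0 ≤ B) (hBδ : 12 * B * δ ≤ 1) (hzy : ‖z - y‖ ≤ δ) :
    lipBarrier δ B z (z, y) ≤ 15 * (n + 1) / δ * ‖z - y‖ := by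
  have htilt := tilt_mem_Icc hB hBδ
    (abs_lastc_add_lastc_le (x := z) (z := z) (by simpa using hδ.le) hzy)
  have hradial : radialBarrier δ B z z y ≤ ‖z - y‖ * (5 / 4) :=
    mul_le_mul (by simpa using (by positivity : 0 ≤ ‖z - y‖ ^ 2 / (4 * δ))) htilt.2
      (by linarith [htilt.1]) (norm_nonneg _)
  calc lipBarrier δ B z (z, y) = 12 * (n + 1) / δ * radialBarrier δ B z z y := by
        simp [lipBarrier, centralBarrier]
    _ ≤ 12 * (n + 1) / δ * (‖z - y‖ * (5 / 4)) := by gcongr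
    _ = 15 * (n + 1) / δ * ‖z - y‖ := by ring

lemma hasDerivAt_tilt (a B d : ℝ) : HasDerivAt (fun t : ℝ => 1 - B * (a + t * d)) (-(B * d)) 0 := by
  have := (((hasDerivAt_id (0 : ℝ)).mul_const d).const_add a).const_mul B |>.const_sub 1
  simpa using this

lemma hasDerivAt_radialBarrier (hδ : 0 < δ) (B : ℝ) (z : Euc (n + 1)) (hne : x ≠ y)
    (ν : Euc (n + 1)) :
    HasDerivAt (fun t : ℝ => radialBarrier δ B z (x + t • -ν) y)
      (-⟪x - y, ν⟫ / ‖x - y‖ * (1 - ‖x - y‖ / (2 * δ)) *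
          (1 - B * (lastc (x - z) + lastc (y - z))) +
        (‖x - y‖ - ‖x - y‖ ^ 2 / (4 * δ)) * (B * lastc ν)) 0 := by
  have hr : 0 < ‖x - y‖ := norm_pos_iff.2 (sub_ne_zero.2 hne)
  have hnorm := hasDerivAt_norm_sub_smul (sub_ne_zero.2 hne) ν
  refine (((hnorm.sub ((hnorm.pow 2).div_const (4 * δ))).mul (hasDerivAt_tilt
    (lastc (x - z) + lastc (y - z)) B (-lastc ν))).congr_of_eventuallyEq
      (Eventually.of_forall fun t => ?_)).congr_deriv ?_
  · have hline : x + t • -ν - y = x - y - t • ν := by rw [smul_neg]; abel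
    simp only [radialBarrier, hline, lastc_sub, lastc_add, lastc_smul, lastc_neg, Pi.mul_apply,
      Pi.sub_apply, Pi.pow_apply]
    ring
  · simp only [zero_smul, sub_zero, zero_mul, add_zero, Pi.sub_apply, Pi.pow_apply]
    field_simp
    ring

lemma exists_hasDerivAt_radialBarrier_neg (hδ : 0 < δ) (hBδ : 12 * (4 * M + 1) * δ ≤ 1)
    (hxyz : |lastc (x - z) + lastc (y - z)| ≤ 3 * δ) (hxy : ‖x - y‖ ≤ δ) (hne : x ≠ y)
    (hν : ⟪y - x, ν⟫ ≤ M * ‖y - x‖ ^ 2) (hlast : lastc ν ≤ -(99 / 100)) :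
    ∃ d < 0, HasDerivAt (fun t : ℝ => radialBarrier δ (4 * M + 1) z (x + t • -ν) y) d 0 := by
  refine ⟨_, ?_, hasDerivAt_radialBarrier hδ (4 * M + 1) z hne ν⟩
  have hB : (0 : ℝ) ≤ 4 * M + 1 := by positivity
  set B : ℝ := 4 * M + 1 with hBdef
  set r := ‖x - y‖ with hr
  set W := 1 - B * (lastc (x - z) + lastc (y - z))
  have hr0 : 0 < r := norm_pos_iff.2 (sub_ne_zero.2 hne)
  have htilt : W ∈ Icc (3 / 4) (5 / 4) := tilt_mem_Icc hB hBδ hxyz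
  have hrδ : r / (2 * δ) ≤ 1 / 2 := by
    rw [div_le_div_iff₀ (by positivity) (by norm_num)]; linarith
  have hrδ0 : 0 ≤ r / (2 * δ) := by positivity
  have hslope : -⟪x - y, ν⟫ / r ≤ M * r := by
    rw [div_le_iff₀ hr0, ← inner_neg_left, neg_sub]
    simpa [hr, norm_sub_rev x y, sq, mul_assoc] using hν
  have hψ : 3 / 4 * r ≤ r - r ^ 2 / (4 * δ) := by
    have : r ^ 2 / (4 * δ) = r / (2 * δ) * r / 2 := by field_simp; norm_num
    nlinarith
  have hfirst : -⟪x - y, ν⟫ / r * (1 - r / (2 * δ)) * W ≤ M * r * (5 / 4) := by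
    have hle : (1 - r / (2 * δ)) * W ≤ 1 * (5 / 4) :=
      mul_le_mul (by linarith) htilt.2 (by linarith [htilt.1]) (by norm_num)
    have hpos : 0 ≤ (1 - r / (2 * δ)) * W := mul_nonneg (by linarith) (by linarith [htilt.1])
    calc _ = -⟪x - y, ν⟫ / r * ((1 - r / (2 * δ)) * W) := by ring
      _ ≤ M * r * ((1 - r / (2 * δ)) * W) := by gcongr
      _ ≤ M * r * (5 / 4) := by gcongr; linarith
  have hsecond : (r - r ^ 2 / (4 * δ)) * (B * lastc ν) ≤ 3 / 4 * r * (B * -(99 / 100)) := by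
    calc _ ≤ (r - r ^ 2 / (4 * δ)) * (B * -(99 / 100)) := by
          gcongr
          linarith [mul_pos (by norm_num : (0 : ℝ) < 3 / 4) hr0]
      _ ≤ _ := mul_le_mul_of_nonpos_right hψ (by linarith)
  rw [hBdef] at hsecond
  nlinarith [(by positivity : 0 ≤ M * r)]

lemma exists_hasDerivAt_centralBarrier_nonpos (hBδ : 12 * (4 * M + 1) * δ ≤ 1)
    (hxz : ‖x - z‖ ≤ δ) (hν : ⟪z - x, ν⟫ ≤ M * ‖z - x‖ ^ 2) (hlast : lastc ν ≤ -(99 / 100)) :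
    ∃ d ≤ 0, HasDerivAt (fun t : ℝ => centralBarrier (4 * M + 1) z (x + t • -ν)) d 0 := by
  have hB : (0 : ℝ) ≤ 4 * M + 1 := by positivity
  set B : ℝ := 4 * M + 1 with hBdef
  set W := 1 - B * lastc (x - z)
  have htilt : W ∈ Icc (3 / 4) (5 / 4) := tilt_mem_Icc hB hBδ
    ((abs_lastc_le (x - z)).trans (hxz.trans (by linarith [norm_nonneg (x - z)])))
  refine ⟨-2 * ⟪x - z, ν⟫ * W + ‖x - z‖ ^ 2 * (B * lastc ν), ?_, ?_⟩
  · have hM : 0 ≤ M * ‖x - z‖ ^ 2 := by positivity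
    replace hν : -⟪x - z, ν⟫ ≤ M * ‖x - z‖ ^ 2 := by
      rwa [← inner_neg_left, neg_sub, norm_sub_rev]
    have hfirst : 2 * -⟪x - z, ν⟫ * W ≤ 2 * (M * ‖x - z‖ ^ 2) * (5 / 4) := by
      have hW0 : 0 ≤ W := by linarith [htilt.1]
      calc _ ≤ 2 * (M * ‖x - z‖ ^ 2) * W := by gcongr
        _ ≤ _ := by gcongr; exact htilt.2
    have hsecond : ‖x - z‖ ^ 2 * (B * lastc ν) ≤ ‖x - z‖ ^ 2 * (B * -(99 / 100)) := by gcongr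
    rw [hBdef] at hsecond
    nlinarith [sq_nonneg ‖x - z‖]
  · have hline : HasDerivAt (fun t : ℝ => x - z - t • ν) (-ν) 0 := by
      simpa using ((hasDerivAt_id (0 : ℝ)).smul_const ν).const_sub (x - z)
    refine ((hline.norm_sq.mul (hasDerivAt_tilt (lastc (x - z)) B
      (-lastc ν))).congr_of_eventuallyEq (Eventually.of_forall fun t => ?_)).congr_deriv ?_
    · have : x + t • -ν - z = x - z - t • ν := by rw [smul_neg]; abel
      simp only [centralBarrier, this, lastc_sub, lastc_smul, Pi.mul_apply]
      ring
    · simp [W]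

lemma secondDiff_radialBarrier_parallel (δ B : ℝ) (x y z v : Euc (n + 1)) (s : ℝ) :
    secondDiff (fun p : Euc (n + 1) × Euc (n + 1) => radialBarrier δ B z p.1 p.2) (x, y) (v, v) s
      = 0 := by
  simp only [secondDiff, radialBarrier, Prod.smul_mk, Prod.mk_add_mk, Prod.mk_sub_mk,
    add_sub_add_right_eq_sub, sub_sub_sub_cancel_right, lastc_sub, lastc_add, lastc_smul]
  ring

lemma secondDiff_radialBarrier_antiparallel_le (hδ : 0 < δ) (hB : 0 ≤ B) (hBδ : 12 * B * δ ≤ 1)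
    (hxz : ‖x - z‖ ≤ δ) (hxy : ‖x - y‖ ≤ δ) (hv : ‖v‖ = 1) (hparallel : x - y = ‖x - y‖ • v)
    {s : ℝ} (hs0 : 0 < s) (hs : 2 * s < ‖x - y‖) :
    secondDiff (fun p : Euc (n + 1) × Euc (n + 1) => radialBarrier δ B z p.1 p.2) (x, y) (v, -v) s
      ≤ -(3 / 2) / δ * s ^ 2 := by
  have htilt := (tilt_mem_Icc hB hBδ (abs_lastc_add_lastc_le hxz hxy)).1
  have hnorm (a : ℝ) (ha : 0 ≤ ‖x - y‖ + 2 * a) :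
      ‖x + a • v - (y - a • v)‖ = ‖x - y‖ + 2 * a := by
    have : x + a • v - (y - a • v) = (‖x - y‖ + 2 * a) • v := by
      rw [add_smul, ← hparallel, two_mul, add_smul]
      abel
    rw [this, norm_smul, hv, mul_one, Real.norm_of_nonneg ha]
  have hplus := hnorm s (by linarith)
  have hminus := hnorm (-s) (by linarith)
  rw [neg_smul, ← sub_eq_add_neg, sub_neg_eq_add] at hminus
  have hid : secondDiff (fun p : Euc (n + 1) × Euc (n + 1) => radialBarrier δ B z p.1 p.2) (x, y)
      (v, -v) s = -(2 / δ * s ^ 2) * (1 - B * (lastc (x - z) + lastc (y - z))) := by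
    simp only [secondDiff, radialBarrier, Prod.smul_mk, Prod.mk_add_mk, Prod.mk_sub_mk, smul_neg,
      ← sub_eq_add_neg, sub_neg_eq_add, hplus, hminus, lastc_sub, lastc_add, lastc_smul]
    field_simp
    ring
  have : 0 ≤ 2 / δ * s ^ 2 := by positivity
  rw [hid]
  calc _ ≤ -(2 / δ * s ^ 2) * (3 / 4) := mul_le_mul_of_nonpos_left htilt (by linarith)
    _ = _ := by ring

lemma secondDiff_centralBarrier_le (hB : 0 ≤ B) (hBδ : 12 * B * δ ≤ 1) (hxz : ‖x - z‖ ≤ δ)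
    (hv : ‖v‖ = 1) (s : ℝ) : secondDiff (centralBarrier B z) x v s ≤ 3 * s ^ 2 := by
  have htilt := (tilt_mem_Icc hB hBδ
    ((abs_lastc_le (x - z)).trans (hxz.trans (by linarith [norm_nonneg (x - z)])))).2
  have hid : secondDiff (centralBarrier B z) x v s =
      (2 * (1 - B * lastc (x - z)) - 4 * (B * (⟪x - z, v⟫ * lastc v))) * s ^ 2 := by
    have hminus : x - s • v - z = x - z - s • v := by abel
    simp only [secondDiff, centralBarrier, add_sub_right_comm x, hminus]
    rw [norm_add_sq_real, norm_sub_sq_real (x - z), inner_smul_right, norm_smul, hv, mul_one,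
      Real.norm_eq_abs, sq_abs]
    simp only [lastc_sub, lastc_add, lastc_smul]
    ring
  have hcross : |⟪x - z, v⟫ * lastc v| ≤ δ := by
    rw [abs_mul]
    calc _ ≤ ‖x - z‖ * ‖v‖ * ‖v‖ := by gcongr; exacts [abs_real_inner_le_norm _ _, abs_lastc_le v]
      _ ≤ δ := by simpa [hv] using hxz
  rw [hid]
  gcongr
  nlinarith [(abs_le.1 hcross).1]

lemma isCoupledSuperharmonicAt_lipBarrier (hδ : 0 < δ) (hB : 0 ≤ B) (hBδ : 12 * B * δ ≤ 1)
    (hxz : ‖x - z‖ ≤ δ) (hxy : ‖x - y‖ ≤ δ) (hne : x ≠ y) :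
    IsCoupledSuperharmonicAt (lipBarrier δ B z) (x, y) := by
  have hr : 0 < ‖x - y‖ := norm_pos_iff.2 (sub_ne_zero.2 hne)
  obtain ⟨b, hb⟩ := exists_orthonormalBasis_apply_zero_eq (e := ‖x - y‖⁻¹ • (x - y))
    (by rw [norm_smul, norm_inv, norm_norm, inv_mul_cancel₀ hr.ne'])
  have hparallel : x - y = ‖x - y‖ • b 0 := by rw [hb, smul_inv_smul₀ hr.ne']
  refine ⟨b, fun i => if i = 0 then -1 else 1,
    fun i => 12 / δ ^ 2 - if i = 0 then 18 * (n + 1) / δ ^ 2 else 0, ?_, fun i => ?_⟩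
  · have : 12 * (n + 1) / δ ^ 2 < 18 * (n + 1) / δ ^ 2 := by gcongr; norm_num
    have hsum : ((n : ℝ) + 1) * (12 / δ ^ 2) = 12 * (n + 1) / δ ^ 2 := by ring
    simp [Finset.sum_sub_distrib, hsum, this]
  · have hsplit (w : Euc (n + 1)) (s : ℝ) : secondDiff (lipBarrier δ B z) (x, y) (b i, w) s =
        12 * (n + 1) / δ * secondDiff (fun p : Euc (n + 1) × Euc (n + 1) =>
          radialBarrier δ B z p.1 p.2) (x, y) (b i, w) s +
        4 / δ ^ 2 * secondDiff (centralBarrier B z) x (b i) s := by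
      simp only [secondDiff, lipBarrier, Prod.smul_mk, Prod.mk_add_mk, Prod.mk_sub_mk]
      ring
    have hcentral (s : ℝ) : 4 / δ ^ 2 * secondDiff (centralBarrier B z) x (b i) s ≤
        4 / δ ^ 2 * (3 * s ^ 2) := by
      gcongr
      exact secondDiff_centralBarrier_le hB hBδ hxz (b.orthonormal.1 i) s
    by_cases hi : i = 0
    · subst hi
      filter_upwards [self_mem_nhdsWithin, nhdsWithin_le_nhds (Iio_mem_nhds (half_pos hr))]
        with s hs0 hs
      have hradial : 12 * (n + 1) / δ * secondDiff (fun p : Euc (n + 1) × Euc (n + 1) =>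
          radialBarrier δ B z p.1 p.2) (x, y) (b 0, -b 0) s ≤
          12 * (n + 1) / δ * (-(3 / 2) / δ * s ^ 2) := by
        gcongr
        exact secondDiff_radialBarrier_antiparallel_le hδ hB hBδ hxz hxy (b.orthonormal.1 0)
          hparallel hs0 (by linarith [mem_Iio.1 hs])
      rw [if_pos rfl, if_pos rfl, Units.neg_smul, one_smul, hsplit]
      refine (add_le_add hradial (hcentral s)).trans_eq ?_
      field_simp
      ring
    · filter_upwards with s
      rw [if_neg hi, if_neg hi, one_smul, hsplit, secondDiff_radialBarrier_parallel]
      refine (add_le_add_right (hcentral s) _).trans_eq ?_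
      ring

end LipschitzBarrier

section LipschitzEstimate

variable {n : ℕ} {Ω : Set (Euc (n + 1))} {ν : Euc (n + 1) → Euc (n + 1)} {τ : ℝ}
  {f : Euc n → ℝ} {h : Euc (n + 1) → ℝ} {ρ : ℝ} {M : ℝ≥0} {x y z : Euc (n + 1)} {δ : ℝ}

/-- The pairs on which `lipBarrier δ B z` is compared with `h x - h y`. -/
def lipRegion (δ : ℝ) (z : Euc (n + 1)) : Set (Euc (n + 1) × Euc (n + 1)) :=
  {p | ‖p.1 - z‖ ≤ δ ∧ ‖p.1 - p.2‖ ≤ δ}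

lemma isCompact_lipRegion (δ : ℝ) (z : Euc (n + 1)) : IsCompact (lipRegion δ z) := by
  have hclosed : IsClosed (lipRegion δ z) := by
    rw [lipRegion, ofPred_and]
    exact (isClosed_le (by fun_prop) (by fun_prop)).inter (isClosed_le (by fun_prop) (by fun_prop))
  refine ((isCompact_closedBall z δ).prod (isCompact_closedBall z (δ + δ))).of_isClosed_subset
    hclosed fun p hp => ⟨mem_closedBall_iff_norm.2 hp.1, mem_closedBall_iff_norm.2 ?_⟩
  calc ‖p.2 - z‖ = ‖(p.1 - z) - (p.1 - p.2)‖ := by congr 1; abel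
    _ ≤ δ + δ := (norm_sub_le _ _).trans (add_le_add hp.1 hp.2)

lemma lipRegion_mem_nhds (hxz : ‖x - z‖ < δ) (hxy : ‖x - y‖ < δ) :
    lipRegion δ z ∈ 𝓝 (x, y) := by
  refine mem_of_superset (((isOpen_lt (f := fun p : Euc (n + 1) × Euc (n + 1) => ‖p.1 - z‖)
    (by fun_prop) continuous_const).inter
    (isOpen_lt (f := fun p : Euc (n + 1) × Euc (n + 1) => ‖p.1 - p.2‖)
    (by fun_prop) continuous_const)).mem_nhds ⟨hxz, hxy⟩) fun p hp => ⟨hp.1.le, hp.2.le⟩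

lemma norm_lt_three_of_mem_lipRegion (hδ : δ ≤ 1 / 10) (hz : ‖z‖ ≤ 5 / 2)
    (h : (x, y) ∈ lipRegion δ z) : ‖x‖ < 3 ∧ ‖y‖ < 3 := by
  have hx := norm_sub_norm_le x z
  have hy := norm_sub_norm_le y x
  rw [norm_sub_rev] at hy
  constructor <;> linarith [h.1, h.2]

lemma decreasesAlong_lipBarrier_fst (hδ : 0 < δ) (hBδ : 12 * (4 * M + 1) * δ ≤ 1)
    (hmem : (x, y) ∈ lipRegion δ z) (hne : x ≠ y) {ν : Euc (n + 1)}
    (hνy : ⟪y - x, ν⟫ ≤ M * ‖y - x‖ ^ 2) (hνz : ⟪z - x, ν⟫ ≤ M * ‖z - x‖ ^ 2)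
    (hlast : lastc ν ≤ -(99 / 100)) :
    DecreasesAlong (lipBarrier δ (4 * M + 1) z) (x, y) (-ν, 0) := by
  obtain ⟨d₁, hd₁, hradial⟩ := exists_hasDerivAt_radialBarrier_neg hδ hBδ
    (abs_lastc_add_lastc_le hmem.1 hmem.2) hmem.2 hne hνy hlast
  obtain ⟨d₂, hd₂, hcentral⟩ := exists_hasDerivAt_centralBarrier_nonpos hBδ hmem.1 hνz hlast
  refine decreasesAlong_of_hasDerivAt (d := 12 * (n + 1) / δ * d₁ + 4 / δ ^ 2 * d₂) ?_ ?_
  · simpa [lipBarrier] using (hradial.const_mul (12 * (n + 1) / δ)).fun_add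
      (hcentral.const_mul (4 / δ ^ 2))
  · exact add_neg_of_neg_of_nonpos (mul_neg_of_pos_of_neg (by positivity) hd₁)
      (mul_nonpos_of_nonneg_of_nonpos (by positivity) hd₂)

lemma decreasesAlong_lipBarrier_snd (hδ : 0 < δ) (hBδ : 12 * (4 * M + 1) * δ ≤ 1)
    (hmem : (x, y) ∈ lipRegion δ z) (hne : x ≠ y) {ν : Euc (n + 1)}
    (hνx : ⟪x - y, ν⟫ ≤ M * ‖x - y‖ ^ 2) (hlast : lastc ν ≤ -(99 / 100)) :
    DecreasesAlong (lipBarrier δ (4 * M + 1) z) (x, y) (0, -ν) := by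
  obtain ⟨d, hd, hradial⟩ := exists_hasDerivAt_radialBarrier_neg hδ hBδ
    (add_comm (lastc (x - z)) _ ▸ abs_lastc_add_lastc_le hmem.1 hmem.2)
    (norm_sub_rev x y ▸ hmem.2) hne.symm hνx hlast
  refine decreasesAlong_of_hasDerivAt (d := 12 * (n + 1) / δ * d) ?_
    (mul_neg_of_pos_of_neg (by positivity) hd)
  simpa [lipBarrier, radialBarrier_comm _ _ _ x] using
    (hradial.const_mul (12 * (n + 1) / δ)).add_const
    (4 / δ ^ 2 * centralBarrier (4 * M + 1) z x)

namespace LocalNeumannSolution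

variable (H : LocalNeumannSolution Ω ν τ f h ρ M)

include H

lemma sub_le_of_norm_sub_le (hδ0 : 0 < δ) (hδ : δ ≤ 1 / 10) (hδρ : δ < ρ)
    (hBδ : 12 * (4 * M + 1) * δ ≤ 1) (hz : z ∈ closure Ω) (hz' : ‖z‖ ≤ 5 / 2)
    (hy : y ∈ closure Ω) (hzy : ‖z - y‖ ≤ δ) : h z - h y ≤ 15 * (n + 1) / δ * ‖z - y‖ := by
  have hB : (0 : ℝ) ≤ 4 * M + 1 := by positivity
  refine le_trans ?_ (lipBarrier_self_le (B := 4 * M + 1) hδ0 hB hBδ hzy)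
  have hball {x y : Euc (n + 1)} (hxy : (x, y) ∈ lipRegion δ z) :
      x ∈ ball 0 10 ∧ y ∈ ball 0 10 := by
    have := norm_lt_three_of_mem_lipRegion hδ hz' hxy
    simp only [mem_ball_zero_iff]
    constructor <;> linarith [this.1, this.2]
  have hne {x y : Euc (n + 1)} (hxy : (x, y) ∈ lipRegion δ z)
      (hexc : lipBarrier δ (4 * M + 1) z (x, y) < h x - h y) : x ≠ y := by
    rintro rfl
    exact hexc.not_ge (by simpa using lipBarrier_nonneg hδ0 hB hBδ hxy.1 hxy.2)
  refine sub_le_of_doubling H.isOpen H.continuousOn H.harmonicOn (isCompact_lipRegion δ z)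
    continuous_lipBarrier ?_ ?_ ?_ ?_ hz hy ⟨by simpa using hδ0.le, hzy⟩
  · intro x hx y hy hxy hexc
    have hlt : lipBarrier δ (4 * M + 1) z (x, y) < 2 := hexc.trans_le <|
      H.sub_le_two hx (norm_lt_three_of_mem_lipRegion hδ hz' hxy).1 hy
        (norm_lt_three_of_mem_lipRegion hδ hz' hxy).2
    have hbdry := mt (two_le_lipBarrier hδ0 hB hBδ hxy.1 hxy.2) hlt.not_ge
    push Not at hbdry
    exact lipRegion_mem_nhds (hxy.1.lt_of_ne hbdry.1) (hxy.2.lt_of_ne hbdry.2)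
  · intro x hx y hy hxy hexc
    have hxR : x ∈ frontier Ω ∩ ball 0 10 := ⟨hx, (hball hxy).1⟩
    refine ⟨-ν x, H.inwardCritical x hxR, decreasesAlong_lipBarrier_fst hδ0 hBδ hxy
      (hne hxy hexc) (H.inner_normal_le hxR hy ?_) (H.inner_normal_le hxR hz ?_)
      (H.lastc_normal_le hxR)⟩
    · rw [norm_sub_rev]
      exact hxy.2.trans_lt hδρ
    · rw [norm_sub_rev]
      exact hxy.1.trans_lt hδρ
  · intro x hx y hy hxy hexc
    have hyR : y ∈ frontier Ω ∩ ball 0 10 := ⟨hy, (hball hxy).2⟩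
    exact ⟨-ν y, H.inwardCritical y hyR, decreasesAlong_lipBarrier_snd hδ0 hBδ hxy
      (hne hxy hexc) (H.inner_normal_le hyR hx (hxy.2.trans_lt hδρ)) (H.lastc_normal_le hyR)⟩
  · intro x _ y _ hxy hexc
    exact isCoupledSuperharmonicAt_lipBarrier hδ0 hB hBδ hxy.1 hxy.2 (hne hxy hexc)

end LocalNeumannSolution

/-- A radius at which the doubling argument for the Lipschitz estimate applies. -/
def lipRad (ρ : ℝ) (M : ℝ≥0) : ℝ := min (1 / 10) (min (ρ / 2) (1 / (12 * (4 * M + 1))))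

/-- The Lipschitz constant of `h` on the closure of `Ω ∩ ball 0 (5 / 2)`. -/
def lipConst (n : ℕ) (ρ : ℝ) (M : ℝ≥0) : ℝ := 15 * (n + 1) / lipRad ρ M

lemma lipRad_pos (hρ : 0 < ρ) (M : ℝ≥0) : 0 < lipRad ρ M :=
  lt_min (by norm_num) (lt_min (half_pos hρ) (by positivity))

lemma eight_le_lipConst (n : ℕ) (hρ : 0 < ρ) (M : ℝ≥0) : 8 ≤ lipConst n ρ M := by
  have hle : lipRad ρ M ≤ 1 / 10 := min_le_left _ _
  rw [lipConst, le_div_iff₀ (lipRad_pos hρ M)]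
  linarith [(Nat.cast_nonneg n : (0 : ℝ) ≤ n)]

namespace LocalNeumannSolution

variable (H : LocalNeumannSolution Ω ν τ f h ρ M)

include H

lemma sub_le_lipConst_mul (hx : x ∈ closure Ω) (hx' : ‖x‖ ≤ 5 / 2) (hy : y ∈ closure Ω)
    (hy' : ‖y‖ ≤ 5 / 2) : h x - h y ≤ lipConst n ρ M * ‖x - y‖ := by
  have hδ0 := lipRad_pos H.c11.1 M
  obtain hnear | hfar := le_or_gt ‖x - y‖ (lipRad ρ M)
  · have hρ2 : lipRad ρ M ≤ ρ / 2 := (min_le_right _ _).trans (min_le_left _ _)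
    have hM : lipRad ρ M ≤ 1 / (12 * (4 * M + 1)) := (min_le_right _ _).trans (min_le_right _ _)
    rw [le_div_iff₀ (by positivity)] at hM
    exact H.sub_le_of_norm_sub_le hδ0 (min_le_left _ _) (by linarith [H.c11.1]) (by linarith)
      hx hx' hy hnear
  · calc h x - h y ≤ 2 := H.sub_le_two hx (by linarith) hy (by linarith)
      _ ≤ 15 * (n + 1) := by linarith [(Nat.cast_nonneg n : (0 : ℝ) ≤ n)]
      _ = lipConst n ρ M * lipRad ρ M := by rw [lipConst, div_mul_cancel₀ _ hδ0.ne']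
      _ ≤ lipConst n ρ M * ‖x - y‖ := by
        gcongr
        linarith [eight_le_lipConst n H.c11.1 M]

lemma abs_sub_le_lipConst_mul (hx : x ∈ closure Ω) (hx' : ‖x‖ ≤ 5 / 2) (hy : y ∈ closure Ω)
    (hy' : ‖y‖ ≤ 5 / 2) : |h x - h y| ≤ lipConst n ρ M * ‖x - y‖ :=
  abs_sub_le_iff.2 ⟨H.sub_le_lipConst_mul hx hx' hy hy',
    norm_sub_rev x y ▸ H.sub_le_lipConst_mul hy hy' hx hx'⟩

end LocalNeumannSolution

end LipschitzEstimate

/-! ### Vertical estimate near the boundary -/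

section VerticalBarrier

variable {n : ℕ} {L τ : ℝ} {z' : Euc n} {x y ν : Euc (n + 1)}

/-- The slope of `vertBarrier`: it is of order `τ` near the graph above `z'`, at least `L` far away
from there, and strictly superharmonic. -/
def vertWeight (L τ : ℝ) (z' : Euc n) (x : Euc (n + 1)) : ℝ :=
  L * (4 * ‖front x - z'‖ ^ 2 + (8 * n + 16) * (lastc x + 3 * τ)
    - (4 * n + 4) * (lastc x + 3 * τ) ^ 2)

/-- The barrier for the doubling argument that bounds the vertical increments of `h`; the first
point of the pair lies above the second one. -/
def vertBarrier (L τ : ℝ) (z' : Euc n) (p : Euc (n + 1) × Euc (n + 1)) : ℝ :=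
  L * ‖front p.2 - front p.1‖ +
    (lastc p.1 - lastc p.2) * (4 * L * τ + vertWeight L τ z' p.1)

/-- The pairs on which `vertBarrier L τ z'` is compared with `h x - h y`. -/
def vertRegion (z' : Euc n) : Set (Euc (n + 1) × Euc (n + 1)) :=
  {p | ‖front p.1 - z'‖ ≤ 1 / 2 ∧ ‖front p.2 - front p.1‖ ≤ 1 / 4 ∧ -1 ≤ lastc p.2 ∧
    lastc p.2 ≤ lastc p.1 ∧ lastc p.1 ≤ 1}

lemma continuous_vertBarrier : Continuous (vertBarrier L τ z') := by
  unfold vertBarrier vertWeight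
  fun_prop

lemma norm_le_of_mem_vertRegion (hz' : ‖z'‖ ≤ 13 / 10) (hp : (x, y) ∈ vertRegion z') :
    ‖x‖ ≤ 5 / 2 ∧ ‖y‖ ≤ 5 / 2 := by
  obtain ⟨hxz, hyx, hy, hlast, hx⟩ := hp
  have hfx := norm_le_norm_add_norm_sub' (front x) z'
  have hfy := norm_le_norm_add_norm_sub' (front y) (front x)
  have hbound {w : Euc (n + 1)} (hw : ‖front w‖ ≤ 41 / 20) (hl : |lastc w| ≤ 1) :
      ‖w‖ ≤ 5 / 2 := by
    refine le_of_sq_le_sq ?_ (by norm_num)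
    rw [norm_sq_eq_front_add_lastc]
    nlinarith [norm_nonneg (front w), sq_abs (lastc w), abs_nonneg (lastc w)]
  constructor <;> refine hbound (by linarith) (abs_le.2 ⟨?_, ?_⟩) <;> linarith

lemma isCompact_vertRegion (hz' : ‖z'‖ ≤ 13 / 10) : IsCompact (vertRegion z') := by
  have hclosed : IsClosed (vertRegion z') := by
    simp only [vertRegion, ofPred_and]
    refine .inter ?_ (.inter ?_ (.inter ?_ (.inter ?_ ?_))) <;>
      exact isClosed_le (by fun_prop) (by fun_prop)
  refine ((isCompact_closedBall 0 (5 / 2)).prod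
    (isCompact_closedBall 0 (5 / 2))).of_isClosed_subset hclosed fun p hp => ?_
  simpa [mem_prod] using norm_le_of_mem_vertRegion hz' hp

lemma vertRegion_mem_nhds (hxz : ‖front x - z'‖ < 1 / 2) (hyx : ‖front y - front x‖ < 1 / 4)
    (hy : -1 < lastc y) (hlast : lastc y < lastc x) (hx : lastc x < 1) :
    vertRegion z' ∈ 𝓝 (x, y) := by
  have hnear {u v : Euc (n + 1) × Euc (n + 1) → ℝ} (hu : Continuous u) (hv : Continuous v)
      (huv : u (x, y) < v (x, y)) : ∀ᶠ p in 𝓝 (x, y), u p ≤ v p :=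
    (hu.continuousAt.eventually_lt hv.continuousAt huv).mono fun _ => le_of_lt
  simp only [vertRegion, ofPred_and]
  exact inter_mem (hnear (by fun_prop) (by fun_prop) hxz) <|
    inter_mem (hnear (by fun_prop) (by fun_prop) hyx) <|
    inter_mem (hnear (by fun_prop) (by fun_prop) hy) <|
    inter_mem (hnear (by fun_prop) (by fun_prop) hlast) (hnear (by fun_prop) (by fun_prop) hx)

lemma le_vertWeight (hL : 0 ≤ L) (h0 : 0 ≤ lastc x + 3 * τ) (h2 : lastc x + 3 * τ ≤ 2) :
    L * (4 * ‖front x - z'‖ ^ 2 + 8 * (lastc x + 3 * τ)) ≤ vertWeight L τ z' x := by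
  rw [vertWeight]
  have : 0 ≤ (4 * n + 4) * ((lastc x + 3 * τ) * (2 - (lastc x + 3 * τ))) :=
    mul_nonneg (by positivity) (mul_nonneg h0 (by linarith))
  gcongr
  linarith

lemma secondDiff_vertWeight (L τ : ℝ) (z' : Euc n) (x v : Euc (n + 1)) (s : ℝ) :
    secondDiff (vertWeight L τ z') x v s =
      L * (8 * ‖front v‖ ^ 2 - (8 * n + 8) * lastc v ^ 2) * s ^ 2 := by
  simp only [secondDiff, vertWeight, front_add, front_sub, front_smul, lastc_add, lastc_sub,
    lastc_smul, add_sub_right_comm, sub_right_comm _ (s • front v)]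
  rw [norm_add_sq_real, norm_sub_sq_real (front x - z') (s • front v), norm_smul,
    Real.norm_eq_abs, mul_pow, sq_abs]
  ring

lemma isCoupledSuperharmonicAt_vertBarrier (hL : 0 < L) (hlast : lastc y < lastc x) :
    IsCoupledSuperharmonicAt (vertBarrier L τ z') (x, y) := by
  set b := EuclideanSpace.basisFun (Fin (n + 1)) ℝ
  refine ⟨b, 1, fun i => (lastc x - lastc y) *
    (L * (8 * ‖front (b i)‖ ^ 2 - (8 * n + 8) * lastc (b i) ^ 2)), ?_, fun i => ?_⟩
  · simp only [← Finset.mul_sum, Finset.sum_sub_distrib, sum_sq_lastc_orthonormalBasis,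
      sum_sq_norm_front_orthonormalBasis]
    linarith [mul_pos (sub_pos.2 hlast) hL]
  · refine .of_forall fun s => le_of_eq ?_
    have hsplit : secondDiff (vertBarrier L τ z') (x, y) (b i, b i) s =
        (lastc x - lastc y) * secondDiff (vertWeight L τ z') x (b i) s := by
      simp only [secondDiff, vertBarrier, Prod.smul_mk, Prod.mk_add_mk, Prod.mk_sub_mk, front_add,
        front_sub, lastc_add, lastc_sub, add_sub_add_right_eq_sub, sub_sub_sub_cancel_right]
      ring
    rw [Pi.one_apply, one_smul, hsplit, secondDiff_vertWeight]
    ring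

lemma decreasesAlong_vertBarrier_snd (hL : 0 < L) (hτ : 0 < τ) (hw : 0 ≤ vertWeight L τ z' x)
    (hν : ‖front ν‖ ≤ τ * -lastc ν) (hlast : lastc ν < 0) :
    DecreasesAlong (vertBarrier L τ z') (x, y) (0, -ν) := by
  refine ⟨3 * L * τ * -lastc ν, mul_pos (by positivity) (neg_pos.2 hlast), ?_⟩
  filter_upwards [self_mem_nhdsWithin] with t (ht : 0 < t)
  have hfront : ‖front y - t • front ν - front x‖ ≤ ‖front y - front x‖ + t * (τ * -lastc ν) :=
    calc ‖front y - t • front ν - front x‖ ≤ ‖front y - front x‖ + ‖t • front ν‖ := by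
          rw [sub_right_comm]
          exact norm_sub_le _ _
      _ ≤ ‖front y - front x‖ + t * (τ * -lastc ν) := by
          rw [norm_smul, Real.norm_of_nonneg ht.le]
          gcongr
  have hmul := mul_le_mul_of_nonneg_left hfront hL.le
  have hweight : 0 ≤ t * -lastc ν * vertWeight L τ z' x :=
    mul_nonneg (mul_nonneg ht.le (by linarith)) hw
  simp only [vertBarrier, Prod.smul_mk, Prod.mk_add_mk, smul_zero, add_zero, smul_neg,
    ← sub_eq_add_neg, front_sub, front_smul, lastc_sub, lastc_smul]
  linarith

lemma steep_of_vertBarrier_lt (hτ : 0 ≤ τ) (hL : 0 ≤ L) (hlast : lastc y ≤ lastc x)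
    (hw : 0 ≤ vertWeight L τ z' x) (h : vertBarrier L τ z' (x, y) < L * ‖x - y‖) :
    8 * τ * ‖front y - front x‖ < lastc x - lastc y := by
  by_contra! hflat
  have hq : 0 ≤ lastc x - lastc y := sub_nonneg.2 hlast
  have hnorm : ‖x - y‖ ≤ ‖front y - front x‖ + 4 * τ * (lastc x - lastc y) := by
    refine le_of_sq_le_sq ?_ (by positivity)
    rw [norm_sq_eq_front_add_lastc, front_sub, lastc_sub, norm_sub_rev (front x)]
    nlinarith [mul_le_mul_of_nonneg_left hflat hq, sq_nonneg (4 * τ * (lastc x - lastc y))]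
  have hweight := mul_nonneg hq hw
  rw [vertBarrier] at h
  linarith [mul_le_mul_of_nonneg_left hnorm hL]

lemma vertWeight_lt_of_vertBarrier_lt (hτ : 0 ≤ τ) (hL : 0 ≤ L) (hlast : lastc y ≤ lastc x)
    (h : vertBarrier L τ z' (x, y) < L * ‖x - y‖) : vertWeight L τ z' x < L := by
  by_contra! hw
  have hq : 0 ≤ lastc x - lastc y := sub_nonneg.2 hlast
  have hnorm := norm_le_front_add_lastc (x - y)
  rw [front_sub, lastc_sub, abs_of_nonneg hq, norm_sub_rev (front x)] at hnorm
  have hslope : 0 ≤ (lastc x - lastc y) * (4 * L * τ) := by positivity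
  rw [vertBarrier] at h
  linarith [mul_le_mul_of_nonneg_left hnorm hL, mul_le_mul_of_nonneg_left hw hq]

lemma vertRegion_mem_nhds_of_vertBarrier_lt (hτ : 0 ≤ τ) (hL : 8 ≤ L)
    (hmem : (x, y) ∈ vertRegion z') (hy : -1 < lastc y) (hx : 0 ≤ lastc x + 3 * τ)
    (hx2 : lastc x + 3 * τ ≤ 2) (hlt : vertBarrier L τ z' (x, y) < L * ‖x - y‖)
    (hlt2 : vertBarrier L τ z' (x, y) < 2) : vertRegion z' ∈ 𝓝 (x, y) := by
  obtain ⟨hxz, hyx, -, hlast, hx1⟩ := hmem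
  have hL0 : 0 ≤ L := by linarith
  have hlow := le_vertWeight (z' := z') hL0 hx hx2
  have hw : 0 ≤ vertWeight L τ z' x := le_trans (by positivity) hlow
  have hwL : L * (4 * ‖front x - z'‖ ^ 2 + 8 * (lastc x + 3 * τ)) < L * 1 :=
    (mul_one L).symm ▸ hlow.trans_lt (vertWeight_lt_of_vertBarrier_lt hτ hL0 hlast hlt)
  have hsmall := lt_of_mul_lt_mul_left hwL hL0
  refine vertRegion_mem_nhds ?_ (hyx.lt_of_ne fun hyx => ?_) hy ?_ ?_
  · nlinarith [norm_nonneg (front x - z')]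
  · have : 0 ≤ (lastc x - lastc y) * (4 * L * τ + vertWeight L τ z' x) :=
      mul_nonneg (sub_nonneg.2 hlast) (add_nonneg (by positivity) hw)
    rw [vertBarrier, hyx] at hlt2
    linarith
  · have := steep_of_vertBarrier_lt hτ hL0 hlast hw hlt
    exact sub_pos.1 (lt_of_le_of_lt (by positivity) this)
  · nlinarith [sq_nonneg ‖front x - z'‖]

end VerticalBarrier

section VerticalEstimate

variable {n : ℕ} {Ω : Set (Euc (n + 1))} {ν : Euc (n + 1) → Euc (n + 1)} {τ : ℝ}
  {f : Euc n → ℝ} {h : Euc (n + 1) → ℝ} {ρ : ℝ} {M : ℝ≥0} {x y : Euc (n + 1)} {z' : Euc n}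
  {a b : ℝ}

namespace LocalNeumannSolution

variable (H : LocalNeumannSolution Ω ν τ f h ρ M)

include H

lemma abs_map_sub_le (a b : Euc n) : |f a - f b| ≤ τ * ‖a - b‖ := by
  simpa [Real.coe_toNNReal τ H.pos.le, Real.dist_eq, dist_eq_norm] using H.lipschitz.dist_le_mul a b

lemma abs_map_le (a : Euc n) : |f a| ≤ τ * ‖a‖ := by
  simpa [H.map_zero] using H.abs_map_sub_le a 0

lemma neg_le_lastc (hx : x ∈ closure Ω) (hx' : ‖x‖ ≤ 5 / 2) : -(5 / 2 * τ) ≤ lastc x := by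
  have hgraph : f (front x) ≤ lastc x := H.epigraph.le_of_mem_closure H.lipschitz.continuous
    (mem_ball_zero_iff.2 (by linarith)) hx
  have hfront : τ * ‖front x‖ ≤ τ * (5 / 2) :=
    mul_le_mul_of_nonneg_left ((norm_front_le x).trans hx') H.pos.le
  linarith [(abs_le.1 (H.abs_map_le (front x))).1]

lemma lastc_sub_le_of_mem_frontier (hx : x ∈ frontier Ω ∩ ball 0 10) (hy : y ∈ closure Ω)
    (hy' : y ∈ ball 0 10) : lastc x - lastc y ≤ τ * ‖front y - front x‖ := by
  have hgraph : f (front y) ≤ lastc y :=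
    H.epigraph.le_of_mem_closure H.lipschitz.continuous hy' hy
  have hx0 := (H.epigraph.mem_frontier_iff H.lipschitz.continuous hx.2).1 hx.1
  linarith [(abs_le.1 (H.abs_map_sub_le (front y) (front x))).1]

lemma sub_le_vertBarrier (hz' : ‖z'‖ ≤ 13 / 10) (hx : x ∈ closure Ω) (hy : y ∈ closure Ω)
    (hxy : (x, y) ∈ vertRegion z') : h x - h y ≤ vertBarrier (lipConst n ρ M) τ z' (x, y) := by
  have hL := eight_le_lipConst n H.c11.1 M
  have hL0 : 0 < lipConst n ρ M := by linarith
  have hτ := H.pos.le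
  have hheight {x y : Euc (n + 1)} (hx : x ∈ closure Ω) (hxy : (x, y) ∈ vertRegion z') :
      0 ≤ lastc x + 3 * τ ∧ lastc x + 3 * τ ≤ 2 := by
    have := H.neg_le_lastc hx (norm_le_of_mem_vertRegion hz' hxy).1
    have := hxy.2.2.2.2
    constructor <;> linarith [H.lt]
  have hweight {x y : Euc (n + 1)} (hx : x ∈ closure Ω) (hxy : (x, y) ∈ vertRegion z') :
      0 ≤ vertWeight (lipConst n ρ M) τ z' x :=
    have := (hheight hx hxy).1
    le_trans (by positivity) (le_vertWeight hL0.le this (hheight hx hxy).2)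
  have hexcess {x y : Euc (n + 1)} (hx : x ∈ closure Ω) (hy : y ∈ closure Ω)
      (hxy : (x, y) ∈ vertRegion z') (hexc : vertBarrier (lipConst n ρ M) τ z' (x, y) < h x - h y) :
      vertBarrier (lipConst n ρ M) τ z' (x, y) < lipConst n ρ M * ‖x - y‖ :=
    hexc.trans_le (H.sub_le_lipConst_mul hx (norm_le_of_mem_vertRegion hz' hxy).1 hy
      (norm_le_of_mem_vertRegion hz' hxy).2)
  have hsteep {x y : Euc (n + 1)} (hx : x ∈ closure Ω) (hy : y ∈ closure Ω)
      (hxy : (x, y) ∈ vertRegion z') (hexc : vertBarrier (lipConst n ρ M) τ z' (x, y) < h x - h y) :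
      8 * τ * ‖front y - front x‖ < lastc x - lastc y :=
    steep_of_vertBarrier_lt hτ hL0.le hxy.2.2.2.1 (hweight hx hxy) (hexcess hx hy hxy hexc)
  refine sub_le_of_doubling H.isOpen H.continuousOn H.harmonicOn (isCompact_vertRegion hz')
    continuous_vertBarrier ?_ ?_ ?_ ?_ hx hy hxy <;> intro x hx y hy hxy hexc
  · obtain ⟨hx', hy'⟩ := norm_le_of_mem_vertRegion hz' hxy
    exact vertRegion_mem_nhds_of_vertBarrier_lt hτ hL hxy
      (by linarith [H.neg_le_lastc hy hy', H.lt]) (hheight hx hxy).1 (hheight hx hxy).2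
      (hexcess hx hy hxy hexc)
      (hexc.trans_le (H.sub_le_two hx (by linarith) hy (by linarith)))
  · obtain ⟨hx', hy'⟩ := norm_le_of_mem_vertRegion hz' hxy
    have hflat := H.lastc_sub_le_of_mem_frontier ⟨hx, mem_ball_zero_iff.2 (by linarith)⟩ hy
      (mem_ball_zero_iff.2 (by linarith))
    have hnn : 0 ≤ τ * ‖front y - front x‖ := by positivity
    linarith [hsteep (frontier_subset_closure hx) hy hxy hexc]
  · have hyR : y ∈ frontier Ω ∩ ball 0 10 :=
      ⟨hy, mem_ball_zero_iff.2 (by linarith [(norm_le_of_mem_vertRegion hz' hxy).2])⟩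
    exact ⟨-ν y, H.inwardCritical y hyR, decreasesAlong_vertBarrier_snd hL0 H.pos
      (hweight hx hxy) (H.norm_front_normal_le hyR) (by linarith [H.lastc_normal_le hyR])⟩
  · have := hsteep (subset_closure hx) (subset_closure hy) hxy hexc
    exact isCoupledSuperharmonicAt_vertBarrier hL0
      (sub_pos.1 (lt_of_le_of_lt (by positivity) this))

lemma sub_snocVec_le (hz' : ‖z'‖ ≤ 13 / 10) (ha1 : -1 ≤ a) (hab : a ≤ b) (hb1 : b ≤ 1)
    (ha : snocVec z' a ∈ closure Ω) (hb : snocVec z' b ∈ closure Ω) :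
    h (snocVec z' b) - h (snocVec z' a) ≤
      (b - a) * (lipConst n ρ M * (4 * τ + (8 * n + 16) * (b + 3 * τ))) := by
  refine (H.sub_le_vertBarrier hz' hb ha (by simp [vertRegion, ha1, hab, hb1])).trans ?_
  have hL := eight_le_lipConst n H.c11.1 M
  have hdrop : 0 ≤ (b - a) * (lipConst n ρ M * ((4 * n + 4) * (b + 3 * τ) ^ 2)) :=
    mul_nonneg (sub_nonneg.2 hab) (by positivity)
  simp only [vertBarrier, vertWeight, front_snocVec, lastc_snocVec, sub_self, norm_zero]
  linarith

lemma abs_sub_snocVec_le (hz' : ‖z'‖ ≤ 13 / 10) (ha1 : -1 ≤ a) (hab : a ≤ b) (hb1 : b ≤ 1)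
    (ha : snocVec z' a ∈ closure Ω) (hb : snocVec z' b ∈ closure Ω) :
    |h (snocVec z' b) - h (snocVec z' a)| ≤
      (b - a) * (lipConst n ρ M * (4 * τ + (8 * n + 16) * (b + 3 * τ))) := by
  refine abs_le'.2 ⟨H.sub_snocVec_le hz' ha1 hab hb1 ha hb, ?_⟩
  simpa [neg_add_eq_sub] using H.neg.sub_snocVec_le hz' ha1 hab hb1 ha hb

end LocalNeumannSolution

end VerticalEstimate

/-! ### Integrals depending on a parameter -/

section ParametricIntegral

variable {X Y E : Type*} [TopologicalSpace Y] [MeasurableSpace Y] [OpensMeasurableSpace Y]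
  [SecondCountableTopology Y] [NormedAddCommGroup E] {μ : Measure Y} {B : Y → ℝ}

lemma aestronglyMeasurable_section [TopologicalSpace X] {G : X → Y → E}
    (hG : Continuous fun p : X × Y => G p.1 p.2) (x : X) : AEStronglyMeasurable (G x) μ :=
  (hG.comp (Continuous.prodMk_right x)).aestronglyMeasurable

variable [NormedSpace ℝ E]

lemma continuousOn_integral_of_norm_le [TopologicalSpace X] [FirstCountableTopology X] {s : Set X}
    {G : X → Y → E} (hB : Integrable B μ) (hG : Continuous fun p : X × Y => G p.1 p.2)
    (hb : ∀ x ∈ s, ∀ y, ‖G x y‖ ≤ B y) : ContinuousOn (fun x => ∫ y, G x y ∂μ) s :=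
  continuousOn_of_dominated (fun x _ => aestronglyMeasurable_section hG x)
    (fun x hx => Eventually.of_forall (hb x hx)) hB
    (Eventually.of_forall fun y => (hG.comp (Continuous.prodMk_left y)).continuousOn)

variable [NormedAddCommGroup X] [NormedSpace ℝ X] {s : Set X} {G : X → Y → E}
  {G' : X → Y → X →L[ℝ] E} {G'' : X → Y → X →L[ℝ] X →L[ℝ] E}

lemma hasFDerivAt_integral_of_norm_le (hs : IsOpen s) (hB : Integrable B μ)
    (hG : Continuous fun p : X × Y => G p.1 p.2) (hb : ∀ x ∈ s, ∀ y, ‖G x y‖ ≤ B y)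
    (hG' : Continuous fun p : X × Y => G' p.1 p.2) (hb' : ∀ x ∈ s, ∀ y, ‖G' x y‖ ≤ B y)
    (hd : ∀ x y, HasFDerivAt (fun x => G x y) (G' x y) x) {x : X} (hx : x ∈ s) :
    HasFDerivAt (fun x => ∫ y, G x y ∂μ) (∫ y, G' x y ∂μ) x :=
  hasFDerivAt_integral_of_dominated_of_fderiv_le (hs.mem_nhds hx)
    (Eventually.of_forall (aestronglyMeasurable_section hG))
    (hB.mono' (aestronglyMeasurable_section hG x) (Eventually.of_forall (hb x hx)))
    (aestronglyMeasurable_section hG' x) (Eventually.of_forall fun y x hx => hb' x hx y) hB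
    (Eventually.of_forall fun y x _ => hd x y)

lemma contDiffOn_two_of_hasFDerivAt {g : X → E} {g' : X → X →L[ℝ] E} {g'' : X → X →L[ℝ] X →L[ℝ] E}
    (hs : IsOpen s) (hg : ∀ x ∈ s, HasFDerivAt g (g' x) x)
    (hg' : ∀ x ∈ s, HasFDerivAt g' (g'' x) x) (hcont : ContinuousOn g'' s) :
    ContDiffOn ℝ 2 g s := by
  have h : ContDiffOn ℝ 1 g' s := by
    rw [← zero_add (1 : WithTop ℕ∞), contDiffOn_succ_iff_hasFDerivWithinAt_of_uniqueDiffOn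
      hs.uniqueDiffOn]
    exact ⟨by simp, g'', contDiffOn_zero.2 hcont, fun x hx => (hg' x hx).hasFDerivWithinAt⟩
  rw [← one_add_one_eq_two, contDiffOn_succ_iff_hasFDerivWithinAt_of_uniqueDiffOn hs.uniqueDiffOn]
  exact ⟨by simp, g', h, fun x hx => (hg x hx).hasFDerivWithinAt⟩

set_option maxSynthPendingDepth 3 in
lemma harmonicOn_integral_of_norm_le {n : ℕ} {s : Set (Euc n)} {G : Euc n → Y → ℝ}
    {G' : Euc n → Y → Euc n →L[ℝ] ℝ} {G'' : Euc n → Y → Euc n →L[ℝ] Euc n →L[ℝ] ℝ}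
    (hs : IsOpen s) (hB : Integrable B μ)
    (hG : Continuous fun p : Euc n × Y => G p.1 p.2) (hb : ∀ x ∈ s, ∀ y, ‖G x y‖ ≤ B y)
    (hG' : Continuous fun p : Euc n × Y => G' p.1 p.2) (hb' : ∀ x ∈ s, ∀ y, ‖G' x y‖ ≤ B y)
    (hG'' : Continuous fun p : Euc n × Y => G'' p.1 p.2) (hb'' : ∀ x ∈ s, ∀ y, ‖G'' x y‖ ≤ B y)
    (hd : ∀ x y, HasFDerivAt (fun x => G x y) (G' x y) x)
    (hd' : ∀ x y, HasFDerivAt (fun x => G' x y) (G'' x y) x)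
    (htrace : ∀ x y, ∑ i, G'' x y (EuclideanSpace.basisFun (Fin n) ℝ i)
      (EuclideanSpace.basisFun (Fin n) ℝ i) = 0) :
    HarmonicOn (fun x => ∫ y, G x y ∂μ) s := by
  have hderiv : ∀ x ∈ s, HasFDerivAt (fun x => ∫ y, G x y ∂μ) (∫ y, G' x y ∂μ) x := fun x hx =>
    hasFDerivAt_integral_of_norm_le hs hB hG hb hG' hb' hd hx
  have hderiv' : ∀ x ∈ s, HasFDerivAt (fun x => ∫ y, G' x y ∂μ) (∫ y, G'' x y ∂μ) x :=
    fun x hx => hasFDerivAt_integral_of_norm_le hs hB hG' hb' hG'' hb'' hd' hx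
  have hC2 := contDiffOn_two_of_hasFDerivAt hs hderiv hderiv'
    (continuousOn_integral_of_norm_le hB hG'' hb'')
  refine ⟨hC2, fun x hx => ?_⟩
  have hhess : fderiv ℝ (fderiv ℝ fun x => ∫ y, G x y ∂μ) x = ∫ y, G'' x y ∂μ :=
    ((hderiv' x hx).congr_of_eventuallyEq
      (eventually_of_mem (hs.mem_nhds hx) fun y hy => (hderiv y hy).fderiv)).fderiv
  have hint : Integrable (G'' x) μ :=
    hB.mono' (aestronglyMeasurable_section hG'' x) (Eventually.of_forall (hb'' x hx))
  have happly (v : Euc n) : (∫ y, G'' x y ∂μ) v v = ∫ y, G'' x y v v ∂μ := by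
    rw [ContinuousLinearMap.integral_apply hint,
      ContinuousLinearMap.integral_apply (hint.apply_continuousLinearMap v)]
  rw [laplacian_eq_sum_orthonormalBasis ((hC2 x hx).contDiffAt (hs.mem_nhds hx))
    (EuclideanSpace.basisFun (Fin n) ℝ), hhess]
  simp_rw [happly]
  rw [← integral_finsetSum _ fun i _ =>
    (hint.apply_continuousLinearMap _).apply_continuousLinearMap _]
  simp_rw [htrace, integral_zero]

end ParametricIntegral

/-! ### The Neumann problem in a slab -/

section SlabProfile

/-- The vertical derivative `cosh ((t - 1) s) / cosh s` of the profile of the Fourier mode of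
frequency `s` in the slab. -/
def slabFlux (s t : ℝ) : ℝ := Real.cosh ((t - 1) * s) / Real.cosh s

/-- The profile `sinh ((t - 1) s) / (s cosh s)` of the Fourier mode of frequency `s` in the slab,
written as a primitive so that it is smooth also at `s = 0`. -/
def slabProfile (s t : ℝ) : ℝ := ∫ r in (1 : ℝ)..t, slabFlux s r

lemma continuous_slabFlux : Continuous fun p : ℝ × ℝ => slabFlux p.1 p.2 :=
  Continuous.div (by fun_prop) (by fun_prop) fun p => (Real.cosh_pos p.1).ne'

lemma continuous_slabFlux_right (s : ℝ) : Continuous (slabFlux s) :=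
  continuous_slabFlux.comp (Continuous.prodMk_right s)

lemma continuous_slabProfile : Continuous fun p : ℝ × ℝ => slabProfile p.1 p.2 :=
  intervalIntegral.continuous_parametric_intervalIntegral_of_continuous
    (f := fun p : ℝ × ℝ => slabFlux p.1)
    (continuous_slabFlux.comp (by fun_prop : Continuous fun q : (ℝ × ℝ) × ℝ => (q.1.1, q.2)))
    continuous_snd

lemma hasDerivAt_slabProfile (s t : ℝ) : HasDerivAt (slabProfile s) (slabFlux s t) t :=
  (continuous_slabFlux_right s).integral_hasStrictDerivAt 1 t |>.hasDerivAt

lemma hasDerivAt_sub_one_mul (s t : ℝ) : HasDerivAt (fun r : ℝ => (r - 1) * s) s t := by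
  simpa using ((hasDerivAt_id t).sub_const 1).mul_const s

lemma mul_slabProfile (s t : ℝ) :
    s * slabProfile s t = Real.sinh ((t - 1) * s) / Real.cosh s := by
  have hderiv (r : ℝ) : HasDerivAt (fun r => Real.sinh ((r - 1) * s) / Real.cosh s)
      (s * slabFlux s r) r :=
    ((hasDerivAt_sub_one_mul s r).sinh.div_const _).congr_deriv (by unfold slabFlux; ring)
  have h := intervalIntegral.integral_eq_sub_of_hasDerivAt (a := 1) (b := t) (fun r _ => hderiv r)
    ((continuous_const.mul (continuous_slabFlux_right s)).intervalIntegrable _ _)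
  rw [intervalIntegral.integral_const_mul] at h
  simpa [slabProfile] using h

lemma hasDerivAt_slabFlux (s t : ℝ) : HasDerivAt (slabFlux s) (s ^ 2 * slabProfile s t) t := by
  refine ((hasDerivAt_sub_one_mul s t).cosh.div_const (Real.cosh s)).congr_deriv ?_
  rw [sq, mul_assoc, mul_slabProfile]
  ring

lemma abs_slabFlux_le_one (s : ℝ) {t : ℝ} (ht : t ∈ Icc (0 : ℝ) 2) : |slabFlux s t| ≤ 1 := by
  have hle : |t - 1| ≤ 1 := abs_le.2 ⟨by linarith [ht.1], by linarith [ht.2]⟩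
  rw [slabFlux, abs_of_nonneg (by positivity), div_le_one (Real.cosh_pos s), Real.cosh_le_cosh,
    abs_mul]
  exact mul_le_of_le_one_left (abs_nonneg s) hle

lemma abs_slabProfile_le_one (s : ℝ) {t : ℝ} (ht : t ∈ Icc (0 : ℝ) 2) : |slabProfile s t| ≤ 1 := by
  have hone : (1 : ℝ) ∈ Icc (0 : ℝ) 2 := by norm_num
  calc |slabProfile s t| ≤ 1 * |t - 1| :=
        intervalIntegral.norm_integral_le_of_norm_le_const (f := slabFlux s) (C := 1) fun r hr =>
          abs_slabFlux_le_one s (uIcc_subset_Icc hone ht (uIoc_subset_uIcc hr))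
    _ ≤ 1 := by
        rw [one_mul, abs_le]
        exact ⟨by linarith [ht.1], by linarith [ht.2]⟩

@[simp] lemma slabFlux_zero_right (s : ℝ) : slabFlux s 0 = 1 := by
  rw [slabFlux, zero_sub, neg_one_mul, Real.cosh_neg, div_self (Real.cosh_pos s).ne']

@[simp] lemma slabProfile_one_right (s : ℝ) : slabProfile s 1 = 0 :=
  intervalIntegral.integral_same

end SlabProfile

section Slab

/-- The open slab `0 < x'' < 2`. -/
def slab (n : ℕ) : Set (Euc (n + 1)) := lastc ⁻¹' Ioo 0 2

/-- The closed slab `0 ≤ x'' ≤ 2`. -/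
def closedSlab (n : ℕ) : Set (Euc (n + 1)) := lastc ⁻¹' Icc 0 2

variable {n : ℕ}

lemma isOpen_slab : IsOpen (slab n) := isOpen_Ioo.preimage continuous_lastc

lemma slab_subset_closedSlab : slab n ⊆ closedSlab n := preimage_mono Ioo_subset_Icc_self

lemma convex_slab : Convex ℝ (slab n) :=
  (convex_Ioo (0 : ℝ) 2).is_linear_preimage (lastCLM n).toLinearMap.isLinear

lemma closure_slab : closure (slab n) = closedSlab n := by
  have hopen : IsOpenMap (lastCLM n) :=
    (lastCLM n).isOpenMap fun a => ⟨snocVec 0 a, lastc_snocVec 0 a⟩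
  have h := hopen.preimage_closure_eq_closure_preimage (lastCLM n).continuous (Ioo 0 2)
  rw [closure_Ioo two_ne_zero.symm] at h
  exact h.symm

end Slab

section SlabMode

/-- The real plane wave `Re (c e^{i⟪k, x⟫})`. -/
def planeWave {m : ℕ} (c : ℂ) (k x : Euc m) : ℝ := (c * Complex.exp (⟪k, x⟫ * Complex.I)).re

lemma abs_planeWave_le {m : ℕ} (c : ℂ) (k x : Euc m) : |planeWave c k x| ≤ ‖c‖ :=
  (Complex.abs_re_le_norm _).trans_eq (by rw [norm_mul, Complex.norm_exp_ofReal_mul_I, mul_one])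

lemma planeWave_mul_I_mul_I {m : ℕ} (c : ℂ) (k x : Euc m) :
    planeWave (c * Complex.I * Complex.I) k x = -planeWave c k x := by
  rw [planeWave, mul_assoc c, Complex.I_mul_I, mul_neg_one, neg_mul, Complex.neg_re, planeWave]

lemma hasFDerivAt_planeWave {m : ℕ} (c : ℂ) (k x : Euc m) :
    HasFDerivAt (planeWave c k) (planeWave (c * Complex.I) k x • innerSL ℝ k) x := by
  have h (θ : ℝ) : HasDerivAt (fun θ : ℝ => (c * Complex.exp (θ * Complex.I)).re)
      (c * Complex.I * Complex.exp (θ * Complex.I)).re θ := by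
    refine HasDerivAt.real_of_complex (e := fun z => c * Complex.exp (z * Complex.I))
      ((((hasDerivAt_id (θ : ℂ)).mul_const Complex.I).cexp.const_mul c).congr_deriv ?_)
    simp only [id_eq]
    ring
  exact (h ⟪k, x⟫).comp_hasFDerivAt x (innerSL ℝ k).hasFDerivAt

variable {n : ℕ}

/-- The mode of wave vector `k` and amplitude `c` in the slab. For horizontal `k` it is harmonic,
and its derivative along `e_n` on the lower face is `planeWave c k`. -/
def slabMode (c : ℂ) (k x : Euc (n + 1)) : ℝ := planeWave c k x * slabProfile ‖k‖ (lastc x)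

/-- The derivative of `slabMode`. -/
def slabModeFDeriv (c : ℂ) (k x : Euc (n + 1)) : Euc (n + 1) →L[ℝ] ℝ :=
  (planeWave (c * Complex.I) k x * slabProfile ‖k‖ (lastc x)) • innerSL ℝ k +
    (planeWave c k x * slabFlux ‖k‖ (lastc x)) • innerSL ℝ (eLast n)

/-- The second derivative of `slabMode`. -/
def slabModeHessian (c : ℂ) (k x : Euc (n + 1)) : Euc (n + 1) →L[ℝ] Euc (n + 1) →L[ℝ] ℝ :=
  (-(planeWave c k x * slabProfile ‖k‖ (lastc x)) • innerSL ℝ k +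
      (planeWave (c * Complex.I) k x * slabFlux ‖k‖ (lastc x)) • innerSL ℝ (eLast n)).smulRight
        (innerSL ℝ k) +
    ((planeWave (c * Complex.I) k x * slabFlux ‖k‖ (lastc x)) • innerSL ℝ k +
      (planeWave c k x * (‖k‖ ^ 2 * slabProfile ‖k‖ (lastc x))) • innerSL ℝ (eLast n)).smulRight
        (innerSL ℝ (eLast n))

lemma hasFDerivAt_lastc (x : Euc (n + 1)) : HasFDerivAt lastc (innerSL ℝ (eLast n)) x :=
  (innerSL ℝ (eLast n)).hasFDerivAt.congr_of_eventuallyEq (.of_forall fun y => by simp)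

lemma hasFDerivAt_slabMode (c : ℂ) (k x : Euc (n + 1)) :
    HasFDerivAt (slabMode c k) (slabModeFDeriv c k x) x := by
  refine ((hasFDerivAt_planeWave c k x).mul ((hasDerivAt_slabProfile ‖k‖ (lastc x)).comp_hasFDerivAt
    x (hasFDerivAt_lastc x))).congr_fderiv ?_
  ext v
  simp [slabModeFDeriv]
  ring

lemma hasFDerivAt_slabModeFDeriv (c : ℂ) (k x : Euc (n + 1)) :
    HasFDerivAt (slabModeFDeriv c k) (slabModeHessian c k x) x := by
  have hprofile := (hasFDerivAt_planeWave (c * Complex.I) k x).mul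
    ((hasDerivAt_slabProfile ‖k‖ (lastc x)).comp_hasFDerivAt x (hasFDerivAt_lastc x))
  have hflux := (hasFDerivAt_planeWave c k x).mul
    ((hasDerivAt_slabFlux ‖k‖ (lastc x)).comp_hasFDerivAt x (hasFDerivAt_lastc x))
  refine ((hprofile.smul_const (innerSL ℝ k)).add
    (hflux.smul_const (innerSL ℝ (eLast n)))).congr_fderiv ?_
  ext v w
  simp [slabModeHessian, planeWave_mul_I_mul_I]
  ring

lemma sum_slabModeHessian_eq_zero {ι : Type*} [Fintype ι] (b : OrthonormalBasis ι ℝ (Euc (n + 1)))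
    (c : ℂ) {k : Euc (n + 1)} (hk : lastc k = 0) (x : Euc (n + 1)) :
    ∑ i, slabModeHessian c k x (b i) (b i) = 0 := by
  have happly (v : Euc (n + 1)) : slabModeHessian c k x v v =
      planeWave c k x * slabProfile ‖k‖ (lastc x) * (‖k‖ ^ 2 * lastc v ^ 2 - ⟪k, v⟫ ^ 2) +
        2 * (planeWave (c * Complex.I) k x * slabFlux ‖k‖ (lastc x)) * (⟪k, v⟫ * lastc v) := by
    simp [slabModeHessian]
    ring
  have hcross : ∑ i, ⟪k, b i⟫ * lastc (b i) = 0 := by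
    have h := b.sum_inner_mul_inner k (eLast n)
    rw [real_inner_comm, inner_eLast, hk] at h
    simpa only [real_inner_comm (eLast n), inner_eLast] using h
  simp only [happly, Finset.sum_add_distrib, ← Finset.mul_sum, Finset.sum_sub_distrib, hcross,
    sum_sq_lastc_orthonormalBasis, b.sum_sq_inner_left k]
  ring

end SlabMode

section SlabModeBounds

variable {n : ℕ} {x : Euc (n + 1)}

lemma abs_planeWave_mul_le (c : ℂ) (k : Euc (n + 1)) {a : ℝ} (ha : |a| ≤ 1) :
    |planeWave c k x * a| ≤ ‖c‖ := by
  rw [abs_mul]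
  exact mul_le_of_le_one_right (abs_nonneg _) ha |>.trans (abs_planeWave_le c k x)

lemma norm_smul_innerSL_add_le {a b A B : ℝ} (ha : |a| ≤ A) (hb : |b| ≤ B) (k : Euc (n + 1)) :
    ‖a • innerSL ℝ k + b • innerSL ℝ (eLast n)‖ ≤ A * ‖k‖ + B := by
  refine (norm_add_le _ _).trans ?_
  rw [norm_smul, norm_smul, innerSL_apply_norm, innerSL_apply_norm, norm_eLast, mul_one]
  exact add_le_add (mul_le_mul_of_nonneg_right ha (norm_nonneg k)) hb

lemma norm_slabMode_le (hx : x ∈ closedSlab n) (c : ℂ) (k : Euc (n + 1)) :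
    ‖slabMode c k x‖ ≤ 2 * (‖c‖ * (1 + ‖k‖) ^ 2) := by
  refine (abs_planeWave_mul_le c k (abs_slabProfile_le_one ‖k‖ hx)).trans ?_
  nlinarith [norm_nonneg c, norm_nonneg k, mul_nonneg (norm_nonneg c) (norm_nonneg k),
    mul_nonneg (norm_nonneg c) (sq_nonneg ‖k‖)]

lemma norm_slabModeFDeriv_le (hx : x ∈ closedSlab n) (c : ℂ) (k : Euc (n + 1)) :
    ‖slabModeFDeriv c k x‖ ≤ 2 * (‖c‖ * (1 + ‖k‖) ^ 2) := by
  have h := norm_smul_innerSL_add_le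
    (abs_planeWave_mul_le (x := x) (c * Complex.I) k (abs_slabProfile_le_one ‖k‖ hx))
    (abs_planeWave_mul_le (x := x) c k (abs_slabFlux_le_one ‖k‖ hx)) k
  rw [norm_mul, Complex.norm_I, mul_one] at h
  refine h.trans ?_
  nlinarith [norm_nonneg c, mul_nonneg (norm_nonneg c) (norm_nonneg k),
    mul_nonneg (norm_nonneg c) (sq_nonneg ‖k‖)]

lemma norm_slabModeHessian_le (hx : x ∈ closedSlab n) (c : ℂ) (k : Euc (n + 1)) :
    ‖slabModeHessian c k x‖ ≤ 2 * (‖c‖ * (1 + ‖k‖) ^ 2) := by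
  have hprofile := abs_planeWave_mul_le (x := x) c k (abs_slabProfile_le_one ‖k‖ hx)
  have hflux := abs_planeWave_mul_le (x := x) (c * Complex.I) k (abs_slabFlux_le_one ‖k‖ hx)
  rw [norm_mul, Complex.norm_I, mul_one] at hflux
  have hsq : |planeWave c k x * (‖k‖ ^ 2 * slabProfile ‖k‖ (lastc x))| ≤ ‖c‖ * ‖k‖ ^ 2 := by
    rw [mul_left_comm, abs_mul, abs_of_nonneg (sq_nonneg ‖k‖), mul_comm]
    exact mul_le_mul_of_nonneg_right hprofile (sq_nonneg _)
  have h₁ := norm_smul_innerSL_add_le ((abs_neg _).trans_le hprofile) hflux k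
  have h₂ := norm_smul_innerSL_add_le hflux hsq k
  refine (norm_add_le (E := Euc (n + 1) →L[ℝ] Euc (n + 1) →L[ℝ] ℝ) _ _).trans ?_
  rw [ContinuousLinearMap.norm_smulRight_apply, ContinuousLinearMap.norm_smulRight_apply,
    innerSL_apply_norm, innerSL_apply_norm, norm_eLast, mul_one]
  nlinarith [mul_le_mul_of_nonneg_right h₁ (norm_nonneg k), norm_nonneg c,
    mul_nonneg (norm_nonneg c) (norm_nonneg k)]

end SlabModeBounds

section SlabModeContinuity

variable {n : ℕ} {Y : Type*} [TopologicalSpace Y] {c : Y → ℂ} {k : Y → Euc (n + 1)}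

lemma continuous_planeWave {m : ℕ} {k : Y → Euc m} (hc : Continuous c) (hk : Continuous k) :
    Continuous fun p : Euc m × Y => planeWave (c p.2) (k p.2) p.1 := by
  unfold planeWave
  fun_prop

lemma continuous_slabFlux_comp (hk : Continuous k) :
    Continuous fun p : Euc (n + 1) × Y => slabFlux ‖k p.2‖ (lastc p.1) :=
  continuous_slabFlux.comp (by fun_prop :
    Continuous fun p : Euc (n + 1) × Y => (‖k p.2‖, lastc p.1))

lemma continuous_slabProfile_comp (hk : Continuous k) :
    Continuous fun p : Euc (n + 1) × Y => slabProfile ‖k p.2‖ (lastc p.1) :=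
  continuous_slabProfile.comp (by fun_prop :
    Continuous fun p : Euc (n + 1) × Y => (‖k p.2‖, lastc p.1))

lemma continuous_slabMode (hc : Continuous c) (hk : Continuous k) :
    Continuous fun p : Euc (n + 1) × Y => slabMode (c p.2) (k p.2) p.1 :=
  (continuous_planeWave hc hk).mul (continuous_slabProfile_comp hk)

lemma continuous_slabModeFDeriv (hc : Continuous c) (hk : Continuous k) :
    Continuous fun p : Euc (n + 1) × Y => slabModeFDeriv (c p.2) (k p.2) p.1 := by
  have hwave := continuous_planeWave hc hk
  have hwave' := continuous_planeWave (hc.mul continuous_const : Continuous fun y =>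
    c y * Complex.I) hk
  have hflux := continuous_slabFlux_comp hk
  have hprofile := continuous_slabProfile_comp hk
  unfold slabModeFDeriv
  fun_prop

set_option maxSynthPendingDepth 3 in
lemma continuous_slabModeHessian (hc : Continuous c) (hk : Continuous k) :
    Continuous fun p : Euc (n + 1) × Y => slabModeHessian (c p.2) (k p.2) p.1 := by
  have hwave := continuous_planeWave hc hk
  have hwave' := continuous_planeWave (hc.mul continuous_const : Continuous fun y =>
    c y * Complex.I) hk
  have hflux := continuous_slabFlux_comp hk
  have hprofile := continuous_slabProfile_comp hk
  have hsmulRight {u : Euc (n + 1) × Y → Euc (n + 1) →L[ℝ] ℝ}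
      {v : Euc (n + 1) × Y → Euc (n + 1) →L[ℝ] ℝ} (hu : Continuous u) (hv : Continuous v) :
      Continuous fun p => (u p).smulRight (v p) :=
    ((ContinuousLinearMap.smulRightL ℝ (Euc (n + 1)) (Euc (n + 1) →L[ℝ] ℝ)).continuous.comp
      hu).clm_apply hv
  unfold slabModeHessian
  exact (hsmulRight (by fun_prop) (by fun_prop)).add (hsmulRight (by fun_prop) (by fun_prop))

end SlabModeContinuity

section SlabSolution

variable {n : ℕ} {Y : Type*} [MeasurableSpace Y] {μ : Measure Y} {c : Y → ℂ}
  {k : Y → Euc (n + 1)}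

/-- The superposition of the slab modes with amplitudes `c y` and wave vectors `k y`. -/
def slabSolution (μ : Measure Y) (c : Y → ℂ) (k : Y → Euc (n + 1)) (x : Euc (n + 1)) : ℝ :=
  ∫ y, slabMode (c y) (k y) x ∂μ

lemma abs_slabSolution_le (hint : Integrable (fun y => ‖c y‖ * (1 + ‖k y‖) ^ 2) μ)
    {x : Euc (n + 1)} (hx : x ∈ closedSlab n) :
    |slabSolution μ c k x| ≤ ∫ y, 2 * (‖c y‖ * (1 + ‖k y‖) ^ 2) ∂μ :=
  norm_integral_le_of_norm_le (hint.const_mul 2)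
    (.of_forall fun y => norm_slabMode_le hx (c y) (k y))

lemma slabSolution_eq_zero {x : Euc (n + 1)} (hx : lastc x = 1) : slabSolution μ c k x = 0 := by
  simp [slabSolution, slabMode, hx]

variable [TopologicalSpace Y] [OpensMeasurableSpace Y] [SecondCountableTopology Y]

lemma continuousOn_slabSolution (hc : Continuous c) (hk : Continuous k)
    (hint : Integrable (fun y => ‖c y‖ * (1 + ‖k y‖) ^ 2) μ) :
    ContinuousOn (slabSolution μ c k) (closedSlab n) :=
  continuousOn_integral_of_norm_le (hint.const_mul 2) (continuous_slabMode hc hk)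
    fun _ hx y => norm_slabMode_le hx (c y) (k y)

lemma harmonicOn_slabSolution (hc : Continuous c) (hk : Continuous k) (hk₀ : ∀ y, lastc (k y) = 0)
    (hint : Integrable (fun y => ‖c y‖ * (1 + ‖k y‖) ^ 2) μ) :
    HarmonicOn (slabSolution μ c k) (slab n) :=
  harmonicOn_integral_of_norm_le isOpen_slab (hint.const_mul 2) (continuous_slabMode hc hk)
    (fun _ hx y => norm_slabMode_le (slab_subset_closedSlab hx) (c y) (k y))
    (continuous_slabModeFDeriv hc hk)
    (fun _ hx y => norm_slabModeFDeriv_le (slab_subset_closedSlab hx) (c y) (k y))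
    (continuous_slabModeHessian hc hk)
    (fun _ hx y => norm_slabModeHessian_le (slab_subset_closedSlab hx) (c y) (k y))
    (fun x y => hasFDerivAt_slabMode (c y) (k y) x)
    (fun x y => hasFDerivAt_slabModeFDeriv (c y) (k y) x)
    fun x y => sum_slabModeHessian_eq_zero _ (c y) (hk₀ y) x

lemma hasFDerivWithinAt_slabSolution (hc : Continuous c) (hk : Continuous k)
    (hint : Integrable (fun y => ‖c y‖ * (1 + ‖k y‖) ^ 2) μ) {x : Euc (n + 1)}
    (hx : x ∈ closedSlab n) :
    HasFDerivWithinAt (slabSolution μ c k) (∫ y, slabModeFDeriv (c y) (k y) x ∂μ)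
      (closedSlab n) x := by
  have hderiv : ∀ z ∈ slab n, HasFDerivAt (slabSolution μ c k)
      (∫ y, slabModeFDeriv (c y) (k y) z ∂μ) z := fun z hz =>
    hasFDerivAt_integral_of_norm_le isOpen_slab (hint.const_mul 2) (continuous_slabMode hc hk)
      (fun _ hx y => norm_slabMode_le (slab_subset_closedSlab hx) (c y) (k y))
      (continuous_slabModeFDeriv hc hk)
      (fun _ hx y => norm_slabModeFDeriv_le (slab_subset_closedSlab hx) (c y) (k y))
      (fun x y => hasFDerivAt_slabMode (c y) (k y) x) hz
  have hcont : ContinuousOn (fun z => ∫ y, slabModeFDeriv (c y) (k y) z ∂μ) (closedSlab n) :=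
    continuousOn_integral_of_norm_le (hint.const_mul 2) (continuous_slabModeFDeriv hc hk)
      fun _ hx y => norm_slabModeFDeriv_le hx (c y) (k y)
  rw [← closure_slab]
  refine hasFDerivWithinAt_closure_of_tendsto_fderiv
    (fun z hz => (hderiv z hz).differentiableAt.differentiableWithinAt) convex_slab isOpen_slab
    (fun z hz => ?_) (((hcont x hx).mono slab_subset_closedSlab).tendsto.congr'
      (eventually_of_mem self_mem_nhdsWithin fun z hz => (hderiv z hz).fderiv.symm))
  rw [closure_slab] at hz
  exact (continuousOn_slabSolution hc hk hint z hz).mono slab_subset_closedSlab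

lemma integral_slabModeFDeriv_eLast (hc : Continuous c) (hk : Continuous k)
    (hk₀ : ∀ y, lastc (k y) = 0) (hint : Integrable (fun y => ‖c y‖ * (1 + ‖k y‖) ^ 2) μ)
    {x : Euc (n + 1)} (hx : lastc x = 0) :
    (∫ y, slabModeFDeriv (c y) (k y) x ∂μ) (eLast n) = ∫ y, planeWave (c y) (k y) x ∂μ := by
  have hmem : x ∈ closedSlab n := by simp [closedSlab, hx]
  have hint' : Integrable (fun y => slabModeFDeriv (c y) (k y) x) μ := (hint.const_mul 2).mono'
    (aestronglyMeasurable_section (G := fun x y => slabModeFDeriv (c y) (k y) x)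
      (continuous_slabModeFDeriv hc hk) x)
    (.of_forall fun y => norm_slabModeFDeriv_le hmem (c y) (k y))
  rw [ContinuousLinearMap.integral_apply hint']
  have hinner (y : Y) : ⟪k y, eLast n⟫ = 0 := by rw [real_inner_comm, inner_eLast, hk₀]
  simp [slabModeFDeriv, hinner, hx]

end SlabSolution

section Fourier

variable {n : ℕ}

open scoped FourierTransform ContDiff

/-- The horizontal wave vector `(2πξ, 0)`. -/
def waveVec (ξ : Euc n) : Euc (n + 1) := snocVec ((2 * Real.pi) • ξ) 0

lemma continuous_waveVec : Continuous (waveVec : Euc n → Euc (n + 1)) :=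
  (contDiff_snocVec 0).continuous.comp (by fun_prop)

lemma norm_waveVec (ξ : Euc n) : ‖waveVec ξ‖ = 2 * Real.pi * ‖ξ‖ := by
  rw [← sq_eq_sq₀ (norm_nonneg _) (by positivity), norm_sq_eq_front_add_lastc]
  simp [waveVec, norm_smul, abs_of_pos Real.pi_pos]

lemma integral_planeWave_fourier (F : SchwartzMap (Euc n) ℂ) (x : Euc (n + 1)) :
    ∫ ξ, planeWave (𝓕 F ξ) (waveVec ξ) x = (F (front x)).re := by
  have hint : Integrable fun ξ : Euc n =>
      Complex.exp (↑(2 * Real.pi * inner ℝ ξ (front x)) * Complex.I) • 𝓕 F ξ := by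
    refine ((𝓕 F).integrable (μ := volume)).norm.mono' ?_ (.of_forall fun ξ => ?_)
    · have := (𝓕 F).continuous
      exact Continuous.aestronglyMeasurable (by fun_prop)
    · rw [norm_smul, Complex.norm_exp_ofReal_mul_I, one_mul]
  have hinv : F (front x) = ∫ ξ : Euc n,
      Complex.exp (↑(2 * Real.pi * inner ℝ ξ (front x)) * Complex.I) • 𝓕 F ξ := by
    rw [← Real.fourierInv_eq', ← SchwartzMap.fourierInv_coe,
      FourierTransform.fourierInv_fourier_eq]
  rw [hinv, ← Complex.reCLM_apply, ← Complex.reCLM.integral_comp_comm hint]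
  refine integral_congr_ae (.of_forall fun ξ => ?_)
  simp only [planeWave, waveVec, inner_eq_front_add_lastc, front_snocVec, lastc_snocVec,
    inner_smul_left, smul_eq_mul, Complex.reCLM_apply, mul_comm (Complex.exp _)]
  simp

lemma integrable_fourier_mul_sq (F : SchwartzMap (Euc n) ℂ) :
    Integrable fun ξ => ‖𝓕 F ξ‖ * (1 + ‖waveVec ξ‖) ^ 2 := by
  have hint (j : ℕ) : Integrable fun ξ => ‖ξ‖ ^ j * ‖𝓕 F ξ‖ :=
    (𝓕 F).integrable_pow_mul volume j
  refine (((hint 0).add ((hint 1).const_mul (4 * Real.pi))).add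
    ((hint 2).const_mul (4 * Real.pi ^ 2))).congr (.of_forall fun ξ => ?_)
  simp only [norm_waveVec, Pi.add_apply]
  ring

end Fourier

/-! ### The maximum principle in a slab -/

section SlabMaximum

variable {n : ℕ} {w : Euc (n + 1) → ℝ} {φ : Euc n → ℝ} {S ε : ℝ} {x p : Euc (n + 1)}

/-- `w` is a bounded harmonic function in the slab with `∂w/∂e_n = φ` on the lower face. It is
required to vanish on the middle hyperplane (as a solution odd about it does), which lets the
maximum principle work in the lower half of the slab. -/
structure IsSlabNeumannSolution (φ : Euc n → ℝ) (w : Euc (n + 1) → ℝ) : Prop where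
  harmonicOn : HarmonicOn w (slab n)
  continuousOn : ContinuousOn w (closedSlab n)
  bounded : ∃ W, ∀ x ∈ closedSlab n, |w x| ≤ W
  eq_zero : ∀ x, lastc x = 1 → w x = 0
  hasFDerivWithinAt : ∀ x, lastc x = 0 →
    ∃ D : Euc (n + 1) →L[ℝ] ℝ, HasFDerivWithinAt w D (closedSlab n) x ∧ D (eLast n) = φ (front x)

lemma IsSlabNeumannSolution.neg (hw : IsSlabNeumannSolution φ w) :
    IsSlabNeumannSolution (-φ) (-w) where
  harmonicOn := hw.harmonicOn.neg isOpen_slab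
  continuousOn := hw.continuousOn.neg
  bounded := by simpa only [Pi.neg_apply, abs_neg] using hw.bounded
  eq_zero x hx := by simp [hw.eq_zero x hx]
  hasFDerivWithinAt x hx := by
    obtain ⟨D, hD, hDe⟩ := hw.hasFDerivWithinAt x hx
    exact ⟨-D, hD.neg, by simp [hDe]⟩

/-- A strictly superharmonic function which grows at infinity in the slab, exceeds `S (1 - x'')`
there and has slope less than `-S` on the lower face: the barrier for the maximum principle. -/
def slabBarrier (S ε : ℝ) (x : Euc (n + 1)) : ℝ :=
  (S + ε) * (1 - lastc x) + ε * (‖front x‖ ^ 2 + (n + 2) - (n + 1) * lastc x ^ 2)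

lemma continuous_slabBarrier (S ε : ℝ) : Continuous (slabBarrier S ε : Euc (n + 1) → ℝ) := by
  unfold slabBarrier
  fun_prop

lemma secondDiff_slabBarrier (S ε : ℝ) (x v : Euc (n + 1)) (s : ℝ) :
    secondDiff (slabBarrier S ε) x v s
      = 2 * ε * (‖front v‖ ^ 2 - (n + 1) * lastc v ^ 2) * s ^ 2 := by
  have hpar := parallelogram_law_with_norm ℝ (front x) (s • front v)
  have hsmul : ‖s • front v‖ ^ 2 = s ^ 2 * ‖front v‖ ^ 2 := by
    rw [norm_smul, mul_pow, Real.norm_eq_abs, sq_abs]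
  simp only [secondDiff, slabBarrier, front_add, front_sub, front_smul, lastc_add, lastc_sub,
    lastc_smul]
  linear_combination ε * hpar + 2 * ε * hsmul

lemma mul_norm_sq_add_one_le_slabBarrier (hS : 0 ≤ S) (hε : 0 ≤ ε) (h₀ : 0 ≤ lastc x)
    (h₁ : lastc x ≤ 1) : ε * (‖front x‖ ^ 2 + 1) ≤ slabBarrier S ε x := by
  have hn : (n + 1) * lastc x ^ 2 ≤ (n + 1) * 1 := by gcongr; nlinarith
  have hquad := mul_le_mul_of_nonneg_left hn hε
  have hlin : 0 ≤ (S + ε) * (1 - lastc x) := mul_nonneg (by linarith) (by linarith)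
  unfold slabBarrier
  linarith

lemma HarmonicOn.not_isLocalMax_sub_slabBarrier (hw : HarmonicOn w (slab n)) (hp : p ∈ slab n)
    (hε : 0 < ε) : ¬ IsLocalMax (fun q => w q - slabBarrier S ε q) p := by
  set b := EuclideanSpace.basisFun (Fin (n + 1)) ℝ
  refine not_isLocalMax_sub_of_secondDiff_le (hw.isLittleO_sum_secondDiff isOpen_slab hp b)
    (fun i => Eventually.of_forall fun s => (secondDiff_slabBarrier S ε p (b i) s).le) ?_
  rw [← Finset.mul_sum, Finset.sum_sub_distrib, ← Finset.mul_sum,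
    sum_sq_norm_front_orthonormalBasis, sum_sq_lastc_orthonormalBasis]
  linarith

lemma not_isMaxOn_sub_slabBarrier {K : Set (Euc (n + 1))} {D : Euc (n + 1) →L[ℝ] ℝ}
    (hD : HasFDerivWithinAt w D (closedSlab n) p) (hDS : -S ≤ D (eLast n)) (hp : lastc p = 0)
    (hε : 0 < ε) (hK : ∀ᶠ t : ℝ in 𝓝[>] 0, p + t • eLast n ∈ K) :
    ¬ IsMaxOn (fun q => w q - slabBarrier S ε q) K p := by
  have hU : (fun t : ℝ => (w (p + t • eLast n) - D (eLast n) * lastc (p + t • eLast n))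
      - (w p - D (eLast n) * lastc p)) =o[𝓝[>] 0] fun t : ℝ => t := by
    have hline : Tendsto (fun t : ℝ => p + t • eLast n) (𝓝[>] 0) (𝓝[closedSlab n] p) := by
      refine tendsto_nhdsWithin_iff.2 ⟨?_, ?_⟩
      · have : Continuous fun t : ℝ => p + t • eLast n := by fun_prop
        simpa using (this.tendsto 0).mono_left nhdsWithin_le_nhds
      · filter_upwards [Ioo_mem_nhdsGT one_pos] with t ht
        simp only [closedSlab, mem_preimage, lastc_add, lastc_smul, lastc_eLast, hp, mem_Icc]
        constructor <;> linarith [ht.1, ht.2]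
    refine ((hD.isLittleO.comp_tendsto hline).congr_left fun t => ?_).trans_isBigO ?_
    · simp only [Function.comp_apply, add_sub_cancel_left, map_smul, smul_eq_mul, lastc_add,
        lastc_smul, lastc_eLast]
      ring
    · exact isBigO_of_le _ fun t => by simp [norm_smul]
  have hΦ : DecreasesAlong (fun q => slabBarrier S ε q - D (eLast n) * lastc q) p (eLast n) := by
    refine ⟨ε, hε, ?_⟩
    filter_upwards [self_mem_nhdsWithin] with t (ht : 0 < t)
    simp only [slabBarrier, front_add, front_smul, front_eLast, smul_zero, add_zero, lastc_add,
      lastc_smul, lastc_eLast, hp]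
    have hslope := mul_le_mul_of_nonneg_right hDS ht.le
    have hsq : 0 ≤ ε * ((n + 1) * t ^ 2) := by positivity
    linarith
  simpa only [sub_sub_sub_cancel_right] using not_isMaxOn_sub_of_decreasesAlong
    (U := fun q => w q - D (eLast n) * lastc q) hK hU hΦ

lemma isCompact_boxInSlab (R : ℝ) :
    IsCompact {y : Euc (n + 1) | ‖front y‖ ≤ R ∧ 0 ≤ lastc y ∧ lastc y ≤ 1} := by
  refine isCompact_of_isClosed_isBounded ?_ (isBounded_iff_forall_norm_le.2 ⟨R + 1, fun y hy => ?_⟩)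
  · exact (isClosed_le continuous_front.norm continuous_const).inter
      ((isClosed_le continuous_const continuous_lastc).inter
        (isClosed_le continuous_lastc continuous_const))
  · have := norm_le_front_add_lastc y
    rw [abs_of_nonneg hy.2.1] at this
    linarith [hy.1, hy.2.2]

lemma IsSlabNeumannSolution.le_slabBarrier (hw : IsSlabNeumannSolution φ w)
    (hS : ∀ x, |φ x| ≤ S) (hε : 0 < ε) (h₀ : 0 ≤ lastc x) (h₁ : lastc x ≤ 1) :
    w x ≤ slabBarrier S ε x := by
  have hS₀ : 0 ≤ S := (abs_nonneg _).trans (hS 0)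
  obtain ⟨W, hW⟩ := hw.bounded
  have hW₀ : 0 ≤ W / ε := div_nonneg ((abs_nonneg _).trans (hW x ⟨h₀, by linarith⟩)) hε.le
  set R : ℝ := max ‖front x‖ (W / ε + 1)
  have hR : W / ε + 1 ≤ R := le_max_right _ _
  have hWR : W ≤ ε * R ^ 2 := by
    rw [← div_le_iff₀' hε]
    nlinarith
  set K : Set (Euc (n + 1)) := {y | ‖front y‖ ≤ R ∧ 0 ≤ lastc y ∧ lastc y ≤ 1}
  have hKslab : K ⊆ closedSlab n := fun y hy => ⟨hy.2.1, by linarith [hy.2.2]⟩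
  refine sub_nonpos.1 (nonpos_of_forall_pos_not_isMaxOn (K := K)
    (F := fun q => w q - slabBarrier S ε q) (isCompact_boxInSlab R)
    ((hw.continuousOn.mono hKslab).sub (continuous_slabBarrier S ε).continuousOn) ?_
    ⟨le_max_left _ _, h₀, h₁⟩)
  intro p hpK hpos
  have ⟨_, hp₀, hp₁⟩ := hpK
  have hbarrier := mul_norm_sq_add_one_le_slabBarrier hS₀ hε.le hp₀ hp₁
  have hpR : ‖front p‖ < R := by
    by_contra! hle
    have : ε * R ^ 2 ≤ ε * ‖front p‖ ^ 2 := by gcongr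
    linarith [(abs_le.1 (hW p (hKslab hpK))).2]
  replace hp₁ : lastc p < 1 := by
    refine hp₁.lt_of_ne fun h => ?_
    rw [hw.eq_zero p h] at hpos
    nlinarith [sq_nonneg ‖front p‖]
  obtain hp | hp := hp₀.eq_or_lt
  · obtain ⟨D, hD, hDe⟩ := hw.hasFDerivWithinAt p hp.symm
    refine not_isMaxOn_sub_slabBarrier hD (hDe ▸ (abs_le.1 (hS _)).1) hp.symm hε ?_
    filter_upwards [Ioo_mem_nhdsGT one_pos] with t ht
    exact ⟨by simpa using hpR.le, by simpa [← hp] using ht.1.le, by simpa [← hp] using ht.2.le⟩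
  · refine fun hmax => hw.harmonicOn.not_isLocalMax_sub_slabBarrier ⟨hp, by linarith⟩ hε
      (hmax.isLocalMax ?_)
    filter_upwards [continuous_front.norm.continuousAt.eventually_lt_const hpR,
      continuous_lastc.continuousAt.eventually_const_lt hp,
      continuous_lastc.continuousAt.eventually_lt_const hp₁] with y hyR hy₀ hy₁
    exact ⟨hyR.le, hy₀.le, hy₁.le⟩

lemma IsSlabNeumannSolution.le_of_abs_le (hw : IsSlabNeumannSolution φ w) (hS : ∀ x, |φ x| ≤ S)
    (h₀ : 0 ≤ lastc x) (h₁ : lastc x ≤ 1) : w x ≤ S := by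
  have hS₀ : 0 ≤ S := (abs_nonneg _).trans (hS 0)
  have hlim : Tendsto (fun ε => slabBarrier S ε x) (𝓝[>] 0) (𝓝 (slabBarrier S 0 x)) := by
    have : Continuous fun ε => slabBarrier S ε x := by unfold slabBarrier; fun_prop
    exact (this.tendsto 0).mono_left nhdsWithin_le_nhds
  have hle : w x ≤ slabBarrier S 0 x := by
    refine ge_of_tendsto hlim ?_
    filter_upwards [self_mem_nhdsWithin] with ε hε
    exact hw.le_slabBarrier hS hε h₀ h₁
  unfold slabBarrier at hle
  nlinarith

lemma IsSlabNeumannSolution.abs_le (hw : IsSlabNeumannSolution φ w) (hS : ∀ x, |φ x| ≤ S)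
    (h₀ : 0 ≤ lastc x) (h₁ : lastc x ≤ 1) : |w x| ≤ S :=
  abs_le'.2 ⟨hw.le_of_abs_le hS h₀ h₁,
    hw.neg.le_of_abs_le (fun x => by simpa using hS x) h₀ h₁⟩

open scoped ContDiff FourierTransform in
lemma exists_isSlabNeumannSolution (hφ : ContDiff ℝ ∞ φ) (hφ_supp : HasCompactSupport φ) :
    ∃ w, IsSlabNeumannSolution φ w := by
  obtain ⟨F, hF⟩ : ∃ F : SchwartzMap (Euc n) ℂ, ∀ x, F x = φ x :=
    ⟨(hφ_supp.comp_left (g := fun r : ℝ => (r : ℂ)) Complex.ofReal_zero).toSchwartzMap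
      (Complex.ofRealCLM.contDiff.comp hφ), fun _ => rfl⟩
  have hc : Continuous fun ξ => 𝓕 F ξ := (𝓕 F).continuous
  have hk (ξ : Euc n) : lastc (waveVec ξ) = 0 := by simp [waveVec]
  have hint := integrable_fourier_mul_sq F
  refine ⟨slabSolution volume (fun ξ => 𝓕 F ξ) waveVec, ?_⟩
  exact {
    harmonicOn := harmonicOn_slabSolution hc continuous_waveVec hk hint
    continuousOn := continuousOn_slabSolution hc continuous_waveVec hint
    bounded := ⟨_, fun x => abs_slabSolution_le hint⟩
    eq_zero := fun x => slabSolution_eq_zero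
    hasFDerivWithinAt := fun x hx => by
      have hmem : x ∈ closedSlab n := ⟨hx.ge, by linarith⟩
      refine ⟨_, hasFDerivWithinAt_slabSolution hc continuous_waveVec hint hmem, ?_⟩
      rw [integral_slabModeFDeriv_eLast hc continuous_waveVec hk hint hx,
        integral_planeWave_fourier, hF, Complex.ofReal_re] }

end SlabMaximum

/-! ### Mollification of harmonic functions -/

section Mollification

open ContinuousLinearMap (lsmul)

open scoped Convolution ContDiff Manifold

variable {n : ℕ} {K U : Set (Euc n)} {h k : Euc n → ℝ} {η : Euc n → ℝ}

lemma exists_contDiff_cutoff (hK : IsCompact K) (hU : IsOpen U) (hKU : K ⊆ U) :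
    ∃ ψ : Euc n → ℝ, ContDiff ℝ ∞ ψ ∧ HasCompactSupport ψ ∧ tsupport ψ ⊆ U ∧
      (∀ x ∈ K, ψ =ᶠ[𝓝 x] 1) ∧ ∀ x, |ψ x| ≤ 1 := by
  obtain ⟨K', hK', hKK', hK'U⟩ := exists_compact_between hK hU hKU
  obtain ⟨ψ, h_one, h_zero, h_mem⟩ :=
    exists_contMDiffMap_one_nhds_of_subset_interior (n := ⊤) 𝓘(ℝ, Euc n) hK.isClosed hKK'
  have h_tsupport : tsupport ψ ⊆ K' := closure_minimal
    (fun x hx => by_contra fun hxK' => hx (h_zero x hxK')) hK'.isClosed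
  exact ⟨ψ, ψ.contMDiff.contDiff, hK'.of_isClosed_subset (isClosed_tsupport _) h_tsupport,
    h_tsupport.trans hK'U, eventually_nhdsSet_iff_forall.1 h_one,
    fun x => abs_le.2 ⟨by linarith [(h_mem x).1], (h_mem x).2⟩⟩

lemma exists_contDiff_hasCompactSupport_eventuallyEq (hK : IsCompact K) (hU : IsOpen U)
    (hKU : K ⊆ U) (hh : ContDiffOn ℝ 2 h U) :
    ∃ k : Euc n → ℝ, ContDiff ℝ 2 k ∧ HasCompactSupport k ∧ ∀ x ∈ K, k =ᶠ[𝓝 x] h := by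
  obtain ⟨ψ, hψ, hψ_supp, hψU, hψ_one, -⟩ := exists_contDiff_cutoff hK hU hKU
  refine ⟨fun x => ψ x * h x, contDiff_iff_contDiffAt.2 fun x => ?_, hψ_supp.mul_right,
    fun x hx => ?_⟩
  · by_cases hx : x ∈ tsupport ψ
    · have hxU : x ∈ U := hψU hx
      exact (contDiff_infty.1 hψ 2).contDiffAt.mul
        ((hh x hxU).contDiffAt (hU.mem_nhds hxU))
    · refine contDiffAt_const (c := (0 : ℝ)) |>.congr_of_eventuallyEq ?_
      filter_upwards [notMem_tsupport_iff_eventuallyEq.1 hx] with y hy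
      rw [hy, Pi.zero_apply, zero_mul]
  · filter_upwards [hψ_one x hx] with y hy
    rw [hy, Pi.one_apply, one_mul]

lemma laplacian_congr_of_eventuallyEq {x : Euc n} (hkh : k =ᶠ[𝓝 x] h) :
    laplacian k x = laplacian h x := by
  refine Finset.sum_congr rfl fun i _ => ?_
  have h_fderiv : (fun y => fderiv ℝ k y (EuclideanSpace.single i 1)) =ᶠ[𝓝 x]
      fun y => fderiv ℝ h y (EuclideanSpace.single i 1) := by
    filter_upwards [hkh.fderiv (𝕜 := ℝ)] with y hy
    rw [hy]
  rw [h_fderiv.fderiv_eq]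

lemma fderiv_convolution_apply (hη : LocallyIntegrable η) (hk : ContDiff ℝ 1 k)
    (hk_supp : HasCompactSupport k) (x v : Euc n) :
    fderiv ℝ (η ⋆[lsmul ℝ ℝ] k) x v = (η ⋆[lsmul ℝ ℝ] fun y => fderiv ℝ k y v) x := by
  rw [(hk_supp.hasFDerivAt_convolution_right _ hη hk x).fderiv]
  exact convolution_precompR_apply _ hη (hk_supp.fderiv ℝ) (hk.continuous_fderiv one_ne_zero) x v

lemma laplacian_convolution (hη : LocallyIntegrable η) (hk : ContDiff ℝ 2 k)
    (hk_supp : HasCompactSupport k) (x : Euc n) :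
    laplacian (η ⋆[lsmul ℝ ℝ] k) x = (η ⋆[lsmul ℝ ℝ] laplacian k) x := by
  have hdk (v : Euc n) : ContDiff ℝ 1 fun y => fderiv ℝ k y v :=
    (hk.fderiv_right (m := 1) (by norm_num)).clm_apply contDiff_const
  have hdk_supp (v : Euc n) : HasCompactSupport fun y => fderiv ℝ k y v :=
    hk_supp.fderiv_apply ℝ v
  have hk1 : ContDiff ℝ 1 k := hk.of_le (by norm_num)
  have h_fderiv (v : Euc n) : (fun y => fderiv ℝ (η ⋆[lsmul ℝ ℝ] k) y v) =
      η ⋆[lsmul ℝ ℝ] fun y => fderiv ℝ k y v :=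
    funext fun y => fderiv_convolution_apply hη hk1 hk_supp y v
  simp only [laplacian, h_fderiv, fderiv_convolution_apply hη (hdk _) (hdk_supp _)]
  simp only [convolution_def, laplacian, map_sum]
  refine (integral_finsetSum _ fun i _ => ?_).symm
  exact ((hdk_supp _).fderiv_apply ℝ _).convolutionExists_right (lsmul ℝ ℝ) hη
    (((hdk _).continuous_fderiv one_ne_zero).clm_apply continuous_const) x

/-- The last two clauses transfer pointwise bounds on `h` and on its directional derivatives from
`ball x r` to `g x`. -/
lemma HarmonicOn.exists_contDiff_approx {r : ℝ} (hh : HarmonicOn h U) (hU : IsOpen U)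
    (hK : IsCompact K) (hKU : K ⊆ U) (hr : 0 < r) :
    ∃ g : Euc n → ℝ, ContDiff ℝ ∞ g ∧ ∀ x, ball x r ⊆ K → laplacian g x = 0 ∧
      (∀ a δ, 0 ≤ δ → (∀ y ∈ ball x r, |h y - a| ≤ δ) → |g x - a| ≤ δ) ∧
      ∀ v δ, 0 ≤ δ → (∀ y ∈ ball x r, |fderiv ℝ h y v| ≤ δ) → |fderiv ℝ g x v| ≤ δ := by
  obtain ⟨k, hk, hk_supp, hkh⟩ :=
    exists_contDiff_hasCompactSupport_eventuallyEq hK hU hKU hh.1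
  let b : ContDiffBump (0 : Euc n) := ⟨r / 2, r, half_pos hr, half_lt_self hr⟩
  have hb_int : LocallyIntegrable (b.normed volume) := b.integrable_normed.locallyIntegrable
  have hk1 : ContDiff ℝ 1 k := hk.of_le (by norm_num)
  have average_le {u : Euc n → ℝ} (hu : Continuous u) {x : Euc n} {a δ : ℝ} (hδ : 0 ≤ δ)
      (hua : ∀ y ∈ ball x r, |u y - a| ≤ δ) :
      |(b.normed volume ⋆[lsmul ℝ ℝ] u) x - a| ≤ δ :=
    dist_convolution_le hδ b.support_normed_eq.subset b.nonneg_normed b.integral_normed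
      hu.aestronglyMeasurable hua
  refine ⟨b.normed volume ⋆[lsmul ℝ ℝ] k, b.hasCompactSupport_normed.contDiff_convolution_left
    (n := ⊤) _ b.contDiff_normed hk.continuous.locallyIntegrable, fun x hx => ⟨?_, ?_, ?_⟩⟩
  · rw [laplacian_convolution hb_int hk hk_supp]
    have hk_zero : ∀ y ∈ ball x r, laplacian k y = 0 := fun y hy => by
      rw [laplacian_congr_of_eventuallyEq (hkh y (hx hy)), hh.2 y (hKU (hx hy))]
    have hkx : laplacian k x = 0 := hk_zero x (mem_ball_self hr)
    rw [convolution_eq_right' _ b.support_normed_eq.subset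
      fun y hy => (hk_zero y hy).trans hkx.symm, hkx]
    simp only [map_zero, integral_zero]
  · intro a δ hδ hha
    exact average_le hk.continuous hδ fun y hy => by
      rw [(hkh y (hx hy)).self_of_nhds]; exact hha y hy
  · intro v δ hδ hhv
    rw [fderiv_convolution_apply hb_int hk1 hk_supp, ← sub_zero (convolution _ _ _ _ _)]
    exact average_le ((hk1.continuous_fderiv one_ne_zero).clm_apply continuous_const) hδ
      fun y hy => by rw [(hkh y (hx hy)).fderiv_eq, sub_zero]; exact hhv y hy

end Mollification

/-! ### A smooth harmonic approximation with small vertical derivative -/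

section VerticalDerivative

variable {n : ℕ} {Ω : Set (Euc (n + 1))} {ν : Euc (n + 1) → Euc (n + 1)} {τ : ℝ}
  {f : Euc n → ℝ} {h : Euc (n + 1) → ℝ} {ρ : ℝ} {M : ℝ≥0} {x y : Euc (n + 1)} {z' : Euc n}
  {a b : ℝ}

lemma hasDerivAt_snocVec (z' : Euc n) (a : ℝ) : HasDerivAt (snocVec z') (eLast n) a := by
  have h_eq : snocVec z' = fun s => snocVec z' 0 + s • eLast n :=
    funext fun s => ext_front_lastc (by simp) (by simp)
  rw [h_eq]
  simpa using ((hasDerivAt_id a).smul_const (eLast n)).const_add (snocVec z' 0)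

lemma norm_front_le_of_mem_ball_add_smul_eLast {z : Euc (n + 1)} {s r : ℝ}
    (hz : z ∈ ball (x + s • eLast n) r) : ‖front z‖ ≤ ‖front x‖ + r := by
  have h : ‖front z - front x‖ ≤ r := by
    simpa using (norm_front_le _).trans (mem_ball_iff_norm.1 hz).le
  linarith [norm_sub_norm_le (front z) (front x)]

lemma abs_lastc_sub_le_of_mem_ball_add_smul_eLast {z : Euc (n + 1)} {s r : ℝ}
    (hz : z ∈ ball (x + s • eLast n) r) : |lastc z - (lastc x + s)| ≤ r := by
  simpa using (abs_lastc_le _).trans (mem_ball_iff_norm.1 hz).le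

lemma norm_sub_le_of_mem_ball_add_smul_eLast {z : Euc (n + 1)} (y : Euc (n + 1)) {s r : ℝ}
    (hs : 0 ≤ s) (hz : z ∈ ball (x + s • eLast n) r) : ‖z - y‖ ≤ r + s + ‖x - y‖ := by
  have hzy : z - y = z - (x + s • eLast n) + s • eLast n + (x - y) := by abel
  have h_shift : ‖s • eLast n‖ = s := by
    rw [norm_smul, norm_eLast, mul_one, Real.norm_of_nonneg hs]
  rw [hzy]
  linarith [norm_add₃_le (a := z - (x + s • eLast n)) (b := s • eLast n) (c := x - y),
    mem_ball_iff_norm.1 hz]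

/-- The constant in the bound `|∂h/∂e_n| ≤ vertConst * τ` at heights comparable to `τ`. -/
def vertConst (n : ℕ) (ρ : ℝ) (M : ℝ≥0) : ℝ := lipConst n ρ M * (4 + 12 * (8 * n + 16))

namespace LocalNeumannSolution

variable (H : LocalNeumannSolution Ω ν τ f h ρ M)

include H

lemma vertConst_nonneg : 0 ≤ vertConst n ρ M :=
  mul_nonneg (by linarith [eight_le_lipConst n H.c11.1 M]) (by positivity)

lemma mem_of_mul_lt_lastc (hfront : ‖front x‖ ≤ 13 / 10) (hlow : 13 / 10 * τ < lastc x)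
    (hhigh : lastc x ≤ 12 / 10) : x ∈ Ω := by
  have hτ := H.pos
  have hnorm := norm_le_front_add_lastc x
  rw [abs_of_nonneg (by linarith)] at hnorm
  refine (H.epigraph x (mem_ball_zero_iff.2 (by linarith))).2 ?_
  linarith [(abs_le.1 (H.abs_map_le (front x))).2, mul_le_mul_of_nonneg_left hfront hτ.le]

lemma abs_sub_snocVec_le_vertConst_mul (hz' : ‖z'‖ ≤ 13 / 10) (ha : a ∈ Icc (5 * τ) (9 * τ))
    (hb : b ∈ Icc (5 * τ) (9 * τ)) :
    |h (snocVec z' b) - h (snocVec z' a)| ≤ vertConst n ρ M * τ * |b - a| := by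
  wlog hab : a ≤ b generalizing a b
  · rw [abs_sub_comm, abs_sub_comm b]
    exact this hb ha (le_of_not_ge hab)
  have hτ := H.pos
  have hτ' := H.lt
  have hL := eight_le_lipConst n H.c11.1 M
  have h_mem (c : ℝ) (hc : c ∈ Icc (5 * τ) (9 * τ)) : snocVec z' c ∈ closure Ω :=
    subset_closure (H.mem_of_mul_lt_lastc (by simpa using hz')
      (by rw [lastc_snocVec]; linarith [hc.1]) (by rw [lastc_snocVec]; linarith [hc.2]))
  calc |h (snocVec z' b) - h (snocVec z' a)|
      ≤ (b - a) * (lipConst n ρ M * (4 * τ + (8 * n + 16) * (b + 3 * τ))) :=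
        H.abs_sub_snocVec_le hz' (by linarith [ha.1]) hab (by linarith [hb.2]) (h_mem a ha)
          (h_mem b hb)
    _ ≤ (b - a) * (lipConst n ρ M * (4 * τ + (8 * n + 16) * (9 * τ + 3 * τ))) := by
        have := hb.2
        gcongr
    _ = vertConst n ρ M * τ * |b - a| := by
        rw [abs_of_nonneg (sub_nonneg.2 hab), vertConst]
        ring

lemma abs_fderiv_eLast_le (hfront : ‖front x‖ ≤ 13 / 10) (hlast : lastc x ∈ Icc (6 * τ) (8 * τ)) :
    |fderiv ℝ h x (eLast n)| ≤ vertConst n ρ M * τ := by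
  have hτ := H.pos
  have hτ' := H.lt
  have hx : x ∈ Ω := H.mem_of_mul_lt_lastc hfront (by linarith [hlast.1]) (by linarith [hlast.2])
  have hd : HasFDerivAt h (fderiv ℝ h x) (snocVec (front x) (lastc x)) := by
    rw [snocVec_front_lastc]
    exact ((H.harmonicOn.contDiffAt H.isOpen hx).differentiableAt two_ne_zero).hasFDerivAt
  refine (hd.comp_hasDerivAt _ (hasDerivAt_snocVec (front x) (lastc x))).le_of_lip'
    (mul_nonneg H.vertConst_nonneg hτ.le) ?_
  filter_upwards [Icc_mem_nhds (show 5 * τ < lastc x by linarith [hlast.1])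
    (show lastc x < 9 * τ by linarith [hlast.2])] with s hs
  exact H.abs_sub_snocVec_le_vertConst_mul hfront
    ⟨by linarith [hlast.1], by linarith [hlast.2]⟩ hs

open scoped ContDiff in
/-- The approximation is a mollification at scale `τ` of `h` shifted upwards by `10 * τ`, so that
only values of `h` at height at least `6 * τ` enter. -/
lemma exists_smooth_approx :
    ∃ g : Euc (n + 1) → ℝ, ContDiff ℝ ∞ g ∧ ∀ x, ‖front x‖ ≤ 6 / 5 → -(3 * τ) ≤ lastc x →
      lastc x ≤ 1 → laplacian g x = 0 ∧
        (∀ y ∈ closure Ω, ‖y‖ ≤ 5 / 2 → ‖x - y‖ ≤ 5 * τ →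
          |g x - h y| ≤ lipConst n ρ M * (16 * τ)) ∧
        (lastc x = -(3 * τ) → |fderiv ℝ g x (eLast n)| ≤ vertConst n ρ M * τ) := by
  have hτ := H.pos
  have hτ' := H.lt
  have hL := eight_le_lipConst n H.c11.1 M
  set a : Euc (n + 1) := (10 * τ) • eLast n
  let K : Set (Euc (n + 1)) := closedBall 0 (5 / 2) ∩
    {z | ‖front z‖ ≤ 13 / 10 ∧ 2 * τ ≤ lastc z ∧ lastc z ≤ 12 / 10}
  have hKΩ : K ⊆ Ω := fun z hz =>
    H.mem_of_mul_lt_lastc hz.2.1 (by linarith [hz.2.2.1]) hz.2.2.2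
  have hK : IsCompact K := (isCompact_closedBall 0 _).inter_right <|
    (isClosed_le continuous_front.norm continuous_const).inter
      ((isClosed_le continuous_const continuous_lastc).inter
        (isClosed_le continuous_lastc continuous_const))
  obtain ⟨G, hG, hGx⟩ := H.harmonicOn.exists_contDiff_approx H.isOpen hK hKΩ hτ
  refine ⟨fun x => G (x + a), hG.comp (contDiff_id.add contDiff_const),
    fun x hfront hlow hhigh => ?_⟩
  have h_ball_K : ball (x + a) τ ⊆ K := fun z hz => by
    have hz_front := norm_front_le_of_mem_ball_add_smul_eLast hz
    have hz_last := abs_le.1 (abs_lastc_sub_le_of_mem_ball_add_smul_eLast hz)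
    have hz_norm := norm_le_front_add_lastc z
    rw [abs_of_nonneg (by linarith)] at hz_norm
    exact ⟨mem_closedBall_zero_iff.2 (by linarith), by linarith, by linarith, by linarith⟩
  obtain ⟨hG_lap, hG_val, hG_fderiv⟩ := hGx (x + a) h_ball_K
  refine ⟨by rw [laplacian_comp_add_right, hG_lap], fun y hy hy_norm hxy => ?_, fun hlast => ?_⟩
  · refine hG_val _ _ (by positivity) fun z hz => ?_
    obtain ⟨hz_norm, -⟩ := h_ball_K hz
    refine (H.abs_sub_le_lipConst_mul (subset_closure (hKΩ (h_ball_K hz)))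
      (mem_closedBall_zero_iff.1 hz_norm) hy hy_norm).trans ?_
    gcongr
    linarith [norm_sub_le_of_mem_ball_add_smul_eLast y (by positivity) hz]
  · rw [fderiv_comp_add_right]
    refine hG_fderiv _ _ (mul_nonneg H.vertConst_nonneg hτ.le) fun z hz => ?_
    have hz_last := abs_le.1 (abs_lastc_sub_le_of_mem_ball_add_smul_eLast hz)
    rw [hlast] at hz_last
    exact H.abs_fderiv_eLast_le (h_ball_K hz).2.1 ⟨by linarith, by linarith⟩

end LocalNeumannSolution

end VerticalDerivative

/-! ### The mixed problem in the cylinder -/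

section Cylinder

variable {n : ℕ} {x y : Euc (n + 1)} {r t : ℝ}

lemma cyl_eq_preimage_prod (x : Euc (n + 1)) (r t : ℝ) :
    cyl x r t = (frontCLM n).prod (lastCLM n) ⁻¹'
      (ball (front x) r ×ˢ Ioo (lastc x) (lastc x + t)) := by
  ext y
  simp [cyl, dist_eq_norm, sub_lt_iff_lt_add']

lemma isOpen_cyl : IsOpen (cyl x r t) := by
  rw [cyl_eq_preimage_prod]
  exact (isOpen_ball.prod isOpen_Ioo).preimage (ContinuousLinearMap.continuous _)

lemma convex_cyl : Convex ℝ (cyl x r t) := by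
  rw [cyl_eq_preimage_prod]
  exact ((convex_ball _ _).prod (convex_Ioo _ _)).linear_preimage
    ((frontCLM n).prod (lastCLM n)).toLinearMap

lemma surjective_frontCLM_prod_lastCLM (n : ℕ) :
    Function.Surjective ((frontCLM n).prod (lastCLM n)) :=
  fun p => ⟨snocVec p.1 p.2, by simp⟩

lemma mem_closure_cyl_iff (hr : r ≠ 0) (ht : 0 < t) :
    y ∈ closure (cyl x r t) ↔
      ‖front y - front x‖ ≤ r ∧ lastc x ≤ lastc y ∧ lastc y ≤ lastc x + t := by
  rw [cyl_eq_preimage_prod, ← IsOpenMap.preimage_closure_eq_closure_preimage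
    (((frontCLM n).prod (lastCLM n)).isOpenMap (surjective_frontCLM_prod_lastCLM n))
    (ContinuousLinearMap.continuous _), closure_prod_eq, closure_ball _ hr,
    closure_Ioo (by linarith)]
  simp [dist_eq_norm]

lemma lowerFace_subset_closure_cyl (hr : r ≠ 0) (ht : 0 < t) :
    lowerFace x r ⊆ closure (cyl x r t) := fun _ hy =>
  (mem_closure_cyl_iff hr ht).2 ⟨hy.1, hy.2.ge, by linarith [hy.2]⟩

lemma nonempty_cyl (hr : 0 < r) (ht : 0 < t) : (cyl x r t).Nonempty :=
  ⟨x + (t / 2) • eLast n, by simp [cyl, hr, ht]⟩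

end Cylinder

section CylNeumann

variable {n : ℕ} {x y : Euc (n + 1)} {r t : ℝ} {φ ψ : Euc n → ℝ} {g w : Euc (n + 1) → ℝ}

/-- `g` is harmonic in the cylinder `cyl x r t`, continuous up to its boundary, and
`∂g/∂e_n = φ` on its lower face. No condition is imposed on the remaining part of the boundary. -/
structure IsCylNeumannSolution (x : Euc (n + 1)) (r t : ℝ) (φ : Euc n → ℝ)
    (g : Euc (n + 1) → ℝ) : Prop where
  continuousOn : ContinuousOn g (closure (cyl x r t))
  harmonicOn : HarmonicOn g (cyl x r t)
  hasFDerivWithinAt : ∀ y ∈ lowerFace x r, ∃ D : Euc (n + 1) →L[ℝ] ℝ,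
    HasFDerivWithinAt g D (closure (cyl x r t)) y ∧ D (eLast n) = φ (front y)

open scoped ContDiff in
lemma isCylNeumannSolution_of_contDiff (hg : ContDiff ℝ ∞ g)
    (hlap : ∀ y ∈ cyl x r t, laplacian g y = 0) :
    IsCylNeumannSolution x r t (fun v => fderiv ℝ g (snocVec v (lastc x)) (eLast n)) g where
  continuousOn := hg.continuous.continuousOn
  harmonicOn := ⟨(contDiff_infty.1 hg 2).contDiffOn, hlap⟩
  hasFDerivWithinAt y hy := ⟨fderiv ℝ g y,
    (hg.differentiable (by simp) y).hasFDerivAt.hasFDerivWithinAt,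
    by rw [← hy.2, snocVec_front_lastc]⟩

namespace IsCylNeumannSolution

lemma sub (hg : IsCylNeumannSolution x r t φ g) (hw : IsCylNeumannSolution x r t ψ w) :
    IsCylNeumannSolution x r t (φ - ψ) (g - w) where
  continuousOn := hg.continuousOn.sub hw.continuousOn
  harmonicOn := hg.harmonicOn.sub hw.harmonicOn isOpen_cyl
  hasFDerivWithinAt y hy := by
    obtain ⟨D, hD, hDe⟩ := hg.hasFDerivWithinAt y hy
    obtain ⟨D', hD', hDe'⟩ := hw.hasFDerivWithinAt y hy
    exact ⟨D - D', hD.sub hD', by simp [hDe, hDe']⟩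

lemma const_add_const_mul (hg : IsCylNeumannSolution x r t φ g) (a c : ℝ) :
    IsCylNeumannSolution x r t (c • φ) fun y => a + c * g y where
  continuousOn := continuousOn_const.add (continuousOn_const.mul hg.continuousOn)
  harmonicOn := (harmonicOn_const a _).add (hg.harmonicOn.const_smul isOpen_cyl c) isOpen_cyl
  hasFDerivWithinAt y hy := by
    obtain ⟨D, hD, hDe⟩ := hg.hasFDerivWithinAt y hy
    exact ⟨c • D, (hD.const_mul c).const_add a, by simp [hDe]⟩

lemma fderivWithin_eLast (hg : IsCylNeumannSolution x r t φ g) (hr : 0 < r) (ht : 0 < t)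
    (hy : y ∈ lowerFace x r) :
    DifferentiableWithinAt ℝ g (closure (cyl x r t)) y ∧
      fderivWithin ℝ g (closure (cyl x r t)) y (eLast n) = φ (front y) := by
  obtain ⟨D, hD, hDe⟩ := hg.hasFDerivWithinAt y hy
  have hunique : UniqueDiffWithinAt ℝ (closure (cyl x r t)) y :=
    uniqueDiffOn_convex convex_cyl.closure
      ((nonempty_cyl hr ht).mono (interior_maximal subset_closure isOpen_cyl)) y
      (lowerFace_subset_closure_cyl hr.ne' ht hy)
  exact ⟨hD.differentiableWithinAt, by rw [hD.fderivWithin hunique, hDe]⟩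

end IsCylNeumannSolution

lemma IsSlabNeumannSolution.isCylNeumannSolution (hw : IsSlabNeumannSolution φ w) (hr : r ≠ 0)
    (ht : 0 < t) (ht₁ : t ≤ 1) (h_eq : ∀ v, ‖v - front x‖ ≤ r → φ v = ψ v) :
    IsCylNeumannSolution x r t ψ fun y => w (y + (-lastc x) • eLast n) := by
  have h_maps : MapsTo (· + (-lastc x) • eLast n) (closure (cyl x r t)) (closedSlab n) :=
    fun y hy => by
      obtain ⟨-, hlow, hhigh⟩ := (mem_closure_cyl_iff hr ht).1 hy
      change lastc (y + (-lastc x) • eLast n) ∈ Icc 0 2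
      simp only [lastc_add, lastc_smul, lastc_eLast, mul_one]
      exact ⟨by linarith, by linarith⟩
  refine ⟨hw.continuousOn.comp (by fun_prop) h_maps, hw.harmonicOn.comp_add_right fun y hy => ?_,
    fun y hy => ?_⟩
  · change lastc (y + (-lastc x) • eLast n) ∈ Ioo 0 2
    simp only [lastc_add, lastc_smul, lastc_eLast, mul_one]
    exact ⟨by linarith [hy.2.1], by linarith [hy.2.2]⟩
  · obtain ⟨D, hD, hDe⟩ := hw.hasFDerivWithinAt (y + (-lastc x) • eLast n) (by simp [hy.2])
    refine ⟨D, hD.comp y ((hasFDerivAt_id y).add_const _).hasFDerivWithinAt h_maps, ?_⟩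
    simpa using hDe.trans (h_eq _ (by simpa using hy.1))

open scoped ContDiff in
lemma exists_isCylNeumannSolution {R δ : ℝ} (hφ : ContDiff ℝ ∞ φ) (hr : 0 < r) (hrR : r < R)
    (ht : 0 < t) (ht₁ : t ≤ 1) (hδ : ∀ v, ‖v - front x‖ ≤ R → |φ v| ≤ δ) :
    ∃ w, IsCylNeumannSolution x r t φ w ∧ ∀ y ∈ cyl x r t, |w y| ≤ δ := by
  obtain ⟨χ, hχ, hχ_supp, hχ_tsupport, hχ_one, hχ_le⟩ := exists_contDiff_cutoff
    (isCompact_closedBall (front x) r) isOpen_ball (closedBall_subset_ball hrR)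
  have hχφ (v : Euc n) : |(χ * φ) v| ≤ δ := by
    by_cases hv : v ∈ tsupport χ
    · rw [Pi.mul_apply, abs_mul]
      exact (mul_le_of_le_one_left (abs_nonneg _) (hχ_le v)).trans
        (hδ v (mem_ball_iff_norm.1 (hχ_tsupport hv)).le)
    · have hδ₀ : 0 ≤ δ := (abs_nonneg _).trans (hδ (front x) (by simpa using (hr.trans hrR).le))
      simpa [image_eq_zero_of_notMem_tsupport hv] using hδ₀
  obtain ⟨W, hW⟩ := exists_isSlabNeumannSolution (hχ.mul hφ) hχ_supp.mul_right
  refine ⟨_, hW.isCylNeumannSolution hr.ne' ht ht₁ fun v hv => ?_, fun y hy => hW.abs_le hχφ ?_ ?_⟩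
  · simp [(hχ_one v (mem_closedBall_iff_norm.2 hv)).self_of_nhds]
  · simpa using hy.2.1.le
  · simpa [neg_add_eq_sub, ← sub_eq_add_neg] using hy.2.2.le.trans ht₁

end CylNeumann

/-! ### Rescaling -/

section SupOn

variable {α : Type*} {u : α → ℝ} {s : Set α} {c : ℝ}

lemma le_supOn (hu : BddAbove (u '' s)) {x : α} (hx : x ∈ s) : u x ≤ supOn u s :=
  le_csSup hu (mem_image_of_mem u hx)

lemma supOn_le (hs : s.Nonempty) (hu : ∀ x ∈ s, u x ≤ c) : supOn u s ≤ c :=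
  csSup_le (hs.image u) (forall_mem_image.2 hu)

lemma supOn_const_mul (hc : 0 ≤ c) : supOn (fun x => c * u x) s = c * supOn u s := by
  rw [supOn, supOn, ← smul_eq_mul, ← Real.sSup_smul_of_nonneg hc, ← image_smul, image_image]
  simp only [smul_eq_mul]

lemma bddAbove_image_of_supOn_ne_zero (hu : supOn u s ≠ 0) : BddAbove (u '' s) :=
  not_imp_comm.1 Real.sSup_of_not_bddAbove hu

/-- Multiplying by `supOn |h| t / supOn |g| s` moves `g` by at most `E` on `t`, because the two
suprema differ by at most `E`. If `g = 0` on `s`, then `supOn |h| t ≤ E` and a constant will do. -/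
lemma exists_supOn_const_add_const_mul_eq {g h : α → ℝ} {t : Set α} {E : ℝ} (hts : t ⊆ s)
    (ht : t.Nonempty) (hh : BddAbove ((fun x => |h x|) '' t)) (hgh : ∀ x ∈ t, |g x - h x| ≤ E)
    (hg : ∀ x ∈ s, |g x| ≤ supOn (fun x => |h x|) t + E) :
    ∃ a c : ℝ, (∀ x ∈ t, |a + c * g x - h x| ≤ 2 * E) ∧
      supOn (fun x => |a + c * g x|) s = supOn (fun x => |h x|) t := by
  set m := supOn (fun x => |h x|) t
  set k := supOn (fun x => |g x|) s
  obtain ⟨p, hp⟩ := ht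
  have hh_le : ∀ x ∈ t, |h x| ≤ m := fun x hx => le_supOn hh hx
  have hg_le : ∀ x ∈ s, |g x| ≤ k := fun x hx => le_supOn ⟨_, forall_mem_image.2 hg⟩ hx
  have hm₀ : 0 ≤ m := (abs_nonneg _).trans (hh_le p hp)
  have hk₀ : 0 ≤ k := (abs_nonneg _).trans (hg_le p (hts hp))
  have hE : 0 ≤ E := (abs_nonneg _).trans (hgh p hp)
  have hkm : k ≤ m + E := supOn_le ⟨p, hts hp⟩ hg
  have hmk : m ≤ k + E := supOn_le ⟨p, hp⟩ fun x hx => by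
    have := abs_sub_abs_le_abs_sub (h x) (g x)
    rw [abs_sub_comm] at this
    linarith [hgh x hx, hg_le x (hts hx)]
  rcases hk₀.eq_or_lt with hk | hk
  · refine ⟨m, 0, fun x hx => ?_, ?_⟩
    swap
    · simp [supOn, Nonempty.image_const ⟨p, hts hp⟩, abs_of_nonneg hm₀]
    have := abs_le.1 (hh_le x hx)
    rw [zero_mul, add_zero, abs_le]
    exact ⟨by linarith, by linarith⟩
  · refine ⟨0, m / k, fun x hx => ?_, ?_⟩
    · calc |0 + m / k * g x - h x| = |(g x - h x) + (m - k) * (g x / k)| := by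
            congr 1
            field
        _ ≤ |g x - h x| + |m - k| * |g x / k| := (abs_add_le _ _).trans_eq (by rw [abs_mul])
        _ ≤ E + E * 1 := by
            gcongr
            · exact hgh x hx
            · exact abs_le.2 ⟨by linarith, by linarith⟩
            · rw [abs_div, abs_of_pos hk]
              exact div_le_one_of_le₀ (hg_le x (hts hx)) hk₀
        _ = 2 * E := by ring
    · simp only [zero_add, abs_mul, abs_of_nonneg (div_nonneg hm₀ hk₀)]
      rw [supOn_const_mul (div_nonneg hm₀ hk₀), div_mul_cancel₀ _ hk.ne']

end SupOn

/-! ### The approximation in the standard cylinder -/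

section StandardApproximation

variable {n : ℕ} {Ω : Set (Euc (n + 1))} {ν : Euc (n + 1) → Euc (n + 1)} {τ : ℝ}
  {f : Euc n → ℝ} {h : Euc (n + 1) → ℝ} {ρ : ℝ} {M : ℝ≥0} {x y : Euc (n + 1)}

@[simp] lemma front_xOne : front (xOne n τ) = 0 :=
  (front_smul _ (eLast n)).trans (by simp)

@[simp] lemma lastc_xOne : lastc (xOne n τ) = -(3 * τ) :=
  (lastc_smul _ (eLast n)).trans (by simp)

lemma mem_cyl_xOne_iff :
    x ∈ cyl (xOne n τ) 1 1 ↔ ‖front x‖ < 1 ∧ -(3 * τ) < lastc x ∧ lastc x < 1 - 3 * τ := by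
  simp only [cyl, Set.mem_ofPred_eq, front_xOne, sub_zero, lastc_xOne, sub_neg_eq_add]
  constructor <;> rintro ⟨h₁, h₂, h₃⟩ <;> exact ⟨h₁, by linarith, by linarith⟩

/-- The constant in the bound `cmpConst * τ` for the distance between `h` and its approximation
before rescaling. -/
def cmpConst (n : ℕ) (ρ : ℝ) (M : ℝ≥0) : ℝ := 16 * lipConst n ρ M + vertConst n ρ M

namespace LocalNeumannSolution

variable (H : LocalNeumannSolution Ω ν τ f h ρ M)

include H

lemma norm_le_two_of_mem_cyl_xOne (hx : x ∈ cyl (xOne n τ) 1 1) : ‖x‖ ≤ 2 := by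
  have hτ := H.pos
  have hτ' := H.lt
  obtain ⟨hfront, hlow, hhigh⟩ := mem_cyl_xOne_iff.1 hx
  have hlast : |lastc x| ≤ 1 := abs_le.2 ⟨by linarith, by linarith⟩
  linarith [norm_le_front_add_lastc x]

lemma snocVec_mem_inter_cyl_xOne {v : Euc n} {a : ℝ} (hv : ‖v‖ < 1) (ha : 2 * τ ≤ a)
    (ha' : a < 1 - 3 * τ) : snocVec v a ∈ Ω ∩ cyl (xOne n τ) 1 1 := by
  have hτ := H.pos
  refine ⟨H.mem_of_mul_lt_lastc (by simpa using by linarith) (by simpa using by linarith)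
    (by simpa using by linarith), mem_cyl_xOne_iff.2 ?_⟩
  simpa using ⟨hv, by linarith, ha'⟩

lemma exists_near_mem_inter_cyl_xOne (hx : x ∈ cyl (xOne n τ) 1 1) :
    ∃ y ∈ Ω ∩ cyl (xOne n τ) 1 1, ‖x - y‖ ≤ 5 * τ := by
  have hτ := H.pos
  have hτ' := H.lt
  obtain ⟨hfront, hlow, hhigh⟩ := mem_cyl_xOne_iff.1 hx
  refine ⟨snocVec (front x) (max (lastc x) (2 * τ)), H.snocVec_mem_inter_cyl_xOne hfront
    (le_max_right _ _) (max_lt hhigh (by linarith)), (norm_le_front_add_lastc _).trans ?_⟩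
  have hmax : max (lastc x) (2 * τ) ≤ lastc x + 5 * τ := max_le (by linarith) (by linarith)
  simp only [front_sub, front_snocVec, sub_self, norm_zero, zero_add, lastc_sub, lastc_snocVec]
  rw [abs_le]
  exact ⟨by linarith, by linarith [le_max_left (lastc x) (2 * τ)]⟩

open scoped ContDiff in
lemma exists_isCylNeumannSolution_near :
    ∃ g, IsCylNeumannSolution (xOne n τ) 1 1 0 g ∧
      ∀ x ∈ cyl (xOne n τ) 1 1, ∀ y ∈ closure Ω, ‖y‖ ≤ 5 / 2 → ‖x - y‖ ≤ 5 * τ →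
        |g x - h y| ≤ cmpConst n ρ M * τ := by
  have hτ := H.pos
  obtain ⟨g, hg, hgx⟩ := H.exists_smooth_approx
  have hg_cyl {x : Euc (n + 1)} (hx : x ∈ cyl (xOne n τ) 1 1) :=
    have hx' := mem_cyl_xOne_iff.1 hx
    hgx x (by linarith) hx'.2.1.le (by linarith)
  have hφ : ContDiff ℝ ∞ fun v => fderiv ℝ g (snocVec v (lastc (xOne n τ))) (eLast n) :=
    ((hg.fderiv_right (m := ∞) (by simp)).comp (contDiff_snocVec _)).clm_apply contDiff_const
  obtain ⟨w, hw, hw_le⟩ := exists_isCylNeumannSolution (x := xOne n τ) hφ one_pos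
    (show (1 : ℝ) < 6 / 5 by norm_num) one_pos le_rfl fun v hv =>
      (hgx _ (by simpa using hv) (by simp) (by simp; linarith)).2.2 (by simp)
  refine ⟨g - w, ?_, fun x hx y hy hy_norm hxy => ?_⟩
  · simpa using (isCylNeumannSolution_of_contDiff hg fun y hy => (hg_cyl hy).1).sub hw
  · calc |(g - w) x - h y| = |(g x - h y) - w x| := by rw [Pi.sub_apply, sub_right_comm]
      _ ≤ |g x - h y| + |w x| := abs_sub _ _
      _ ≤ lipConst n ρ M * (16 * τ) + vertConst n ρ M * τ :=
          add_le_add ((hg_cyl hx).2.1 y hy hy_norm hxy) (hw_le x hx)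
      _ = cmpConst n ρ M * τ := by rw [cmpConst]; ring

lemma exists_isCylNeumannSolution_supOn_eq :
    ∃ g, IsCylNeumannSolution (xOne n τ) 1 1 0 g ∧
      supOn (fun y => |g y - h y|) (Ω ∩ cyl (xOne n τ) 1 1) ≤ 2 * (cmpConst n ρ M * τ) ∧
      supOn (fun y => |g y|) (cyl (xOne n τ) 1 1) =
        supOn (fun y => |h y|) (Ω ∩ cyl (xOne n τ) 1 1) := by
  have hτ := H.pos
  have hτ' := H.lt
  have hnorm {x : Euc (n + 1)} (hx : x ∈ Ω ∩ cyl (xOne n τ) 1 1) : ‖x‖ ≤ 2 :=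
    H.norm_le_two_of_mem_cyl_xOne hx.2
  have hnonempty : (Ω ∩ cyl (xOne n τ) 1 1).Nonempty :=
    ⟨snocVec 0 (1 / 2), H.snocVec_mem_inter_cyl_xOne (by simp) (by linarith) (by linarith)⟩
  have hbdd : BddAbove ((fun y => |h y|) '' (Ω ∩ cyl (xOne n τ) 1 1)) :=
    ⟨1, forall_mem_image.2 fun y hy =>
      H.abs_le_one y (subset_closure hy.1) (by linarith [hnorm hy])⟩
  obtain ⟨g, hg, hgh⟩ := H.exists_isCylNeumannSolution_near
  have hg_le : ∀ x ∈ cyl (xOne n τ) 1 1,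
      |g x| ≤ supOn (fun y => |h y|) (Ω ∩ cyl (xOne n τ) 1 1) + cmpConst n ρ M * τ := by
    intro x hx
    obtain ⟨y, hy, hxy⟩ := H.exists_near_mem_inter_cyl_xOne hx
    have hsub := hgh x hx y (subset_closure hy.1) (by linarith [hnorm hy]) hxy
    linarith [abs_sub_abs_le_abs_sub (g x) (h y), le_supOn hbdd hy]
  obtain ⟨a, c, hac, hsup⟩ := exists_supOn_const_add_const_mul_eq inter_subset_right hnonempty hbdd
    (fun x hx => hgh x hx.2 x (subset_closure hx.1) (by linarith [hnorm hx])
      (by simpa using hτ.le)) hg_le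
  exact ⟨_, by simpa using hg.const_add_const_mul a c, supOn_le hnonempty hac, hsup⟩

end LocalNeumannSolution

lemma abs_le_one_of_supOn_eq_one {m : ℕ} {Ω : Set (Euc m)} {h : Euc m → ℝ} {R : ℝ}
    (hcont : ContinuousOn h (closure Ω)) (hsup : supOn (fun y => |h y|) (Ω ∩ ball 0 R) = 1)
    {x : Euc m} (hx : x ∈ closure Ω) (hxR : ‖x‖ < R) : |h x| ≤ 1 := by
  have hx_ball : x ∈ closure (Ω ∩ ball 0 R) := by
    rw [inter_comm]
    exact isOpen_ball.inter_closure ⟨mem_ball_zero_iff.2 hxR, hx⟩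
  refine ContinuousWithinAt.closure_le hx_ball
    ((hcont x hx).mono (inter_subset_left.trans subset_closure)).abs continuousWithinAt_const
    fun y hy => ?_
  rw [← hsup]
  exact le_supOn (bddAbove_image_of_supOn_ne_zero (hsup.trans_ne one_ne_zero)) hy

end StandardApproximation

theorem standard_approximation_general {n : ℕ} (ρ : ℝ) (M : ℝ≥0) :
    ∃ C : ℝ, 0 < C ∧
    ∀ (Ω : Set (Euc (n + 1))) (ν : Euc (n + 1) → Euc (n + 1)) (τ : ℝ)
      (f : Euc n → ℝ) (h : Euc (n + 1) → ℝ),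
      IsOpen Ω → HasC11CharacterOn Ω (ball 0 10) ρ M →
      0 < τ → τ < 1 / 100 →
      AlignedLipGraphOn Ω 0 10 τ f →
      OutwardNormalFieldOn Ω ν (ball 0 10) →
      ContinuousOn h (closure Ω) → HarmonicOn h Ω →
      NeumannBC Ω ν h (ball 0 10) →
      supOn (fun y => |h y|) (Ω ∩ ball 0 3) = 1 →
      ∃ g : Euc (n + 1) → ℝ,
        ContinuousOn g (closure (cyl (xOne n τ) 1 1)) ∧
        HarmonicOn g (cyl (xOne n τ) 1 1) ∧
        (∀ y ∈ lowerFace (xOne n τ) 1,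
          DifferentiableWithinAt ℝ g (closure (cyl (xOne n τ) 1 1)) y ∧
          fderivWithin ℝ g (closure (cyl (xOne n τ) 1 1)) y
            (EuclideanSpace.single (Fin.last n) 1) = 0) ∧
        supOn (fun y => |g y - h y|) (Ω ∩ cyl (xOne n τ) 1 1) < C * τ ∧
        supOn (fun y => |g y|) (cyl (xOne n τ) 1 1) =
          supOn (fun y => |h y|) (Ω ∩ cyl (xOne n τ) 1 1) := by
  refine ⟨2 * |cmpConst n ρ M| + 1, by positivity, fun Ω ν τ f h hΩ hc11 hτ hτ' hgraph hν hcont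
    hharm hneumann hsup => ?_⟩
  have H : LocalNeumannSolution Ω ν τ f h ρ M :=
    { isOpen := hΩ
      c11 := hc11
      pos := hτ
      lt := hτ'
      lipschitz := hgraph.1
      map_zero := hgraph.2.1
      epigraph := hgraph.isEpigraphOnBall
      normal := hν
      continuousOn := hcont
      harmonicOn := hharm
      inwardCritical := fun x hx => hneumann.isInwardCritical hx (hν x hx)
      abs_le_one := fun x hx hx3 => abs_le_one_of_supOn_eq_one hcont hsup hx hx3 }
  obtain ⟨g, hg, hg_near, hg_sup⟩ := H.exists_isCylNeumannSolution_supOn_eq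
  refine ⟨g, hg.continuousOn, hg.harmonicOn,
    fun y hy => hg.fderivWithin_eLast one_pos one_pos hy, hg_near.trans_lt ?_, hg_sup⟩
  linarith [mul_le_mul_of_nonneg_right (le_abs_self (cmpConst n ρ M)) hτ.le]

/-- Approximation of the Neumann problem by a mixed problem in
the cylinder of the standard approximation `(x₁, S, Ω ∩ S)`, `S = S(x₁,1,1)`,
`x₁ = x₀ - 3τ e_n`, in coordinates where `x₀ = 0` and `e_n = -ν(x₀)`: there is a
harmonic `g` on `S` with vanishing `e_n`-derivative on the lower face `Γ₋`,
`sup_{Ω∩S} |g - h| < Cτ` and `sup_S |g| = sup_{Ω∩S} |h|`. -/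
theorem standard_approximation {n : ℕ} (ρ : ℝ) (M : ℝ≥0) :
    ∃ C : ℝ, 0 < C ∧
    ∀ (Ω : Set (Euc (n + 1))) (ν : Euc (n + 1) → Euc (n + 1)) (τ : ℝ)
      (f : Euc n → ℝ) (h : Euc (n + 1) → ℝ),
      Bornology.IsBounded Ω → IsC11DomainWith Ω ρ M →
      0 < τ → τ < 1 / 100 →
      (0 : Euc (n + 1)) ∈ frontier Ω →
      AlignedLipGraphOn Ω 0 10 τ f →
      OutwardNormalFieldOn Ω ν (ball 0 10) →
      ContinuousOn h (closure Ω) → HarmonicOn h Ω →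
      NeumannBC Ω ν h (ball 0 10) →
      supOn (fun y => |h y|) (Ω ∩ ball 0 3) = 1 →
      ∃ g : Euc (n + 1) → ℝ,
        ContinuousOn g (closure (cyl (xOne n τ) 1 1)) ∧
        HarmonicOn g (cyl (xOne n τ) 1 1) ∧
        (∀ y ∈ lowerFace (xOne n τ) 1,
          DifferentiableWithinAt ℝ g (closure (cyl (xOne n τ) 1 1)) y ∧
          fderivWithin ℝ g (closure (cyl (xOne n τ) 1 1)) y
            (EuclideanSpace.single (Fin.last n) 1) = 0) ∧
        supOn (fun y => |g y - h y|) (Ω ∩ cyl (xOne n τ) 1 1) < C * τ ∧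
        supOn (fun y => |g y|) (cyl (xOne n τ) 1 1) =
          supOn (fun y => |h y|) (Ω ∩ cyl (xOne n τ) 1 1) := by
  obtain ⟨C, hC, hC'⟩ := standard_approximation_general (n := n) ρ M
  exact ⟨C, hC, fun Ω ν τ f h _ hΩ hτ hτ' _ =>
    hC' Ω ν τ f h hΩ.1 ⟨hΩ.2.2.1, fun x hx => hΩ.2.2.2 x hx.1⟩ hτ hτ'⟩

end NodalNeumann
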